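/- arXiv:2503.11211 — 3 statements merged into one kernel-verified Lean document; each statement's English description precedes it below -/
import Mathlib

section
/- Let (X; A, B) be an excisive triad, i.e. X is the union of the interiors of subspaces A and B, and set C = A ∩ B (assumed nonempty). Suppose the pair (A, C) is n-connected and the pair (B, C) is m-connected. Then the inclusion of pairs i : (A, C) → (X, B) induces isomorphisms on relative homotopy groups π_q(A, C) → π_q(X, B) for all q < m + n and a surjection for q = m + n; that is, i is an (m+n)-equivalence. -/
/-!
# Statement 0: Homotopy excision (Blakers–Massey)

Relative homotopy "groups" are formalized as the set of homotopy classes of maps of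
triples `(I^{q+1}, ∂I^{q+1}, J^q) → (X, A, a)`; an `(m+n)`-equivalence is expressed as
bijectivity of the induced map in degrees `q+1 < m+n` and surjectivity in degree
`q+1 = m+n`.
-/

open scoped Topology Topology.Homotopy unitInterval
open ContinuousMap Function

universe u v

namespace Paper

variable {X : Type u} {Y : Type v} [TopologicalSpace X] [TopologicalSpace Y]

/-- The subset `J^q ⊆ ∂I^{q+1}`: the closure of the boundary minus the top face
(the top face being `{y | y 0 = 1}`). -/
def JSet (q : ℕ) : Set (I^ Fin (q + 1)) :=
  {y | y 0 = 0 ∨ ∃ i, i ≠ 0 ∧ (y i = 0 ∨ y i = 1)}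

/-- Maps of triples `(I^{q+1}, ∂I^{q+1}, J^q) → (X, A, a)`, the representatives of
elements of the relative homotopy group `π_{q+1}(X, A, a)`. -/
def RelGenLoop (q : ℕ) (X : Type u) [TopologicalSpace X] (A : Set X) (a : X) :
    Set C(I^ Fin (q + 1), X) :=
  {f | (∀ y ∈ Cube.boundary (Fin (q + 1)), f y ∈ A) ∧ ∀ y ∈ JSet q, f y = a}

/-- Homotopy through maps of triples. -/
def RelHomotopic {q : ℕ} {A : Set X} {a : X} (f g : RelGenLoop q X A a) : Prop :=
  ∃ H : C(I × (I^ Fin (q + 1)), X),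
    (∀ y, H (0, y) = f.1 y) ∧ (∀ y, H (1, y) = g.1 y) ∧
    (∀ (t : I), ∀ y ∈ Cube.boundary (Fin (q + 1)), H (t, y) ∈ A) ∧
    (∀ (t : I), ∀ y ∈ JSet q, H (t, y) = a)

/-- The relative homotopy group (as a set) `π_{q+1}(X, A, a)`. -/
def RelPi (q : ℕ) (X : Type u) [TopologicalSpace X] (A : Set X) (a : X) : Type u :=
  Quot (@RelHomotopic X _ q A a)

/-- A map of pairs pushes relative generalized loops forward. -/
def RelGenLoop.push {q : ℕ} {A : Set X} {B : Set Y} {a : X} {b : Y}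
    (φ : C(X, Y)) (hAB : Set.MapsTo φ A B) (hab : φ a = b)
    (f : RelGenLoop q X A a) : RelGenLoop q Y B b :=
  ⟨φ.comp f.1, fun y hy => hAB (f.2.1 y hy), fun y hy => by
    simp only [ContinuousMap.comp_apply, f.2.2 y hy, hab]⟩

theorem RelGenLoop.push_homotopic {q : ℕ} {A : Set X} {B : Set Y} {a : X} {b : Y}
    (φ : C(X, Y)) (hAB : Set.MapsTo φ A B) (hab : φ a = b)
    {f g : RelGenLoop q X A a} (h : RelHomotopic f g) :
    RelHomotopic (RelGenLoop.push φ hAB hab f) (RelGenLoop.push φ hAB hab g) := by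
  obtain ⟨H, h0, h1, hbd, hJ⟩ := h
  exact ⟨φ.comp H, fun y => by simp [h0 y]; rfl, fun y => by simp [h1 y]; rfl,
    fun t y hy => hAB (hbd t y hy), fun t y hy => by simp [hJ t y hy, hab]⟩

/-- The map on relative homotopy groups induced by a map of pairs. -/
def relPiMap {q : ℕ} {A : Set X} {B : Set Y} {a : X} {b : Y}
    (φ : C(X, Y)) (hAB : Set.MapsTo φ A B) (hab : φ a = b) :
    RelPi q X A a → RelPi q Y B b :=
  Quot.map (RelGenLoop.push φ hAB hab) fun _ _ h => RelGenLoop.push_homotopic φ hAB hab h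

/-- A pair `(X, A)` is `n`-connected: `π₀(A) → π₀(X)` is surjective and the relative
homotopy groups `π_q(X, A, a)` vanish for all `1 ≤ q ≤ n` and all basepoints `a ∈ A`. -/
def PairConnected (X : Type u) [TopologicalSpace X] (A : Set X) (n : ℕ) : Prop :=
  (∀ x : X, ∃ a ∈ A, Joined x a) ∧
    ∀ (q : ℕ) (a : X), a ∈ A → q + 1 ≤ n → Subsingleton (RelPi q X A a)

/-!
Cut the cube into cells so small that each is mapped into `A` or into `B`, and use the
connectivity of `(A, A ∩ B)` and `(B, A ∩ B)` to deform the map cell by cell until a point mapped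
outside `B` has more than `n` coordinates in one prescribed range of positions inside its cell, and
a point mapped outside `A` has more than `m` coordinates in a disjoint range. Forget the first
coordinate: at least `n` and at least `m` of the remaining coordinates are still of the respective
kind, so below the critical dimension the points mapped outside `B` and those mapped outside `A`
have disjoint shadows, which a continuous function separates. Pushing every point along the first
coordinate towards the face `y 0 = 0`, by the amount this function prescribes, therefore moves the
map off the complement of `A`. For a representative this is surjectivity; for a homotopy, with time
as the last coordinate, it is injectivity.
-/

section Clamp

/-- The retraction of the real line onto the unit interval. -/
noncomputable def clamp : C(ℝ, I) :=
  ⟨Set.projIcc 0 1 zero_le_one, continuous_projIcc⟩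

theorem clamp_coe (t : I) : clamp t = t :=
  Set.projIcc_val zero_le_one t

theorem clamp_of_nonpos {x : ℝ} (hx : x ≤ 0) : clamp x = 0 :=
  Set.projIcc_of_le_left zero_le_one hx

theorem clamp_of_one_le {x : ℝ} (hx : 1 ≤ x) : clamp x = 1 :=
  Set.projIcc_of_right_le zero_le_one hx

theorem coe_clamp_of_mem {x : ℝ} (hx : x ∈ Set.Icc (0 : ℝ) 1) : (clamp x : ℝ) = x :=
  congrArg Subtype.val (clamp_coe ⟨x, hx⟩)

end Clamp

section RadialRetraction

variable {V : Type*} [NormedAddCommGroup V] [NormedSpace ℝ V]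

/-- The radial retraction of a real normed space onto its closed unit ball. -/
noncomputable def radialRetraction (z : V) : V := (max 1 ‖z‖)⁻¹ • z

@[fun_prop]
theorem continuous_radialRetraction : Continuous (radialRetraction : V → V) := by
  have hne (z : V) : max 1 ‖z‖ ≠ 0 := (lt_max_of_lt_left one_pos).ne'
  unfold radialRetraction
  fun_prop (disch := exact hne _)

theorem radialRetraction_of_norm_le {z : V} (hz : ‖z‖ ≤ 1) : radialRetraction z = z := by
  rw [radialRetraction, max_eq_left hz, inv_one, one_smul]

theorem norm_radialRetraction (z : V) : ‖radialRetraction z‖ = min 1 ‖z‖ := by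
  rw [radialRetraction, norm_smul, norm_inv, Real.norm_of_nonneg (by positivity)]
  rcases le_total ‖z‖ 1 with hz | hz
  · simp [hz]
  · rw [max_eq_right hz, min_eq_left hz, inv_mul_cancel₀ (by positivity)]

theorem radialRetraction_mem_closedBall (z : V) :
    radialRetraction z ∈ Metric.closedBall (0 : V) 1 := by
  simp [norm_radialRetraction]

theorem radialRetraction_mem_sphere {z : V} (hz : 1 ≤ ‖z‖) :
    radialRetraction z ∈ Metric.sphere (0 : V) 1 := by
  simp [norm_radialRetraction, hz]

theorem radialRetraction_smul {z : V} {r : ℝ} (hr : 0 < r) (hz : 1 ≤ r * ‖z‖) :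
    radialRetraction (r • z) = ‖z‖⁻¹ • z := by
  have hnorm : ‖r • z‖ = r * ‖z‖ := norm_smul_of_nonneg hr.le z
  rw [radialRetraction, hnorm, max_eq_right hz, mul_inv, mul_comm, mul_smul,
    inv_smul_smul₀ hr.ne']

theorem radialRetraction_smul_of_mem_sphere {z : V} (hz : z ∈ Metric.sphere (0 : V) 1) {r : ℝ}
    (hr : 1 ≤ r) : radialRetraction (r • z) = z := by
  rw [mem_sphere_zero_iff_norm] at hz
  rw [radialRetraction_smul (one_pos.trans_le hr) (by rwa [hz, mul_one]), hz, inv_one, one_smul]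

end RadialRetraction

section HomotopyExtension

variable {E E' : Type*} [TopologicalSpace E] [TopologicalSpace E'] {S : Set X}

/-- The data of a homotopy extension problem for the pair `(D, D')` in the subspace `S`:
a map `f` on `D` and a homotopy `h` of its restriction to `D'`. -/
structure HomotopyExtensionData (S : Set X) (D D' : Set E) (f : E → X) (h : I × E → X) :
    Prop where
  continuousOn_map : ContinuousOn f D
  mapsTo_map : Set.MapsTo f D S
  continuousOn_homotopy : ContinuousOn h (Set.univ ×ˢ D')
  mapsTo_homotopy : Set.MapsTo h (Set.univ ×ˢ D') S
  homotopy_zero : ∀ z ∈ D', h (0, z) = f z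

/-- A solution `H` of the homotopy extension problem given by `f` on `D` and `h` on `D'`. -/
structure IsHomotopyExtension (S : Set X) (D D' : Set E) (f : E → X) (h H : I × E → X) :
    Prop where
  continuousOn : ContinuousOn H (Set.univ ×ˢ D)
  mapsTo : Set.MapsTo H (Set.univ ×ˢ D) S
  apply_zero : ∀ z ∈ D, H (0, z) = f z
  eqOn : Set.EqOn H h (Set.univ ×ˢ D')

theorem HomotopyExtensionData.comp {D D' : Set E} {f : E → X} {h : I × E → X}
    (hfh : HomotopyExtensionData S D D' f h) {Δ Δ' : Set E'} {g : E' → E} (hg : Continuous g)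
    (hD : Set.MapsTo g Δ D) (hD' : Set.MapsTo g Δ' D') :
    HomotopyExtensionData S Δ Δ' (f ∘ g) (h ∘ Prod.map id g) where
  continuousOn_map := hfh.continuousOn_map.comp hg.continuousOn hD
  mapsTo_map := hfh.mapsTo_map.comp hD
  continuousOn_homotopy := hfh.continuousOn_homotopy.comp (by fun_prop)
    ((Set.mapsTo_univ _ _).prodMap hD')
  mapsTo_homotopy := hfh.mapsTo_homotopy.comp ((Set.mapsTo_univ _ _).prodMap hD')
  homotopy_zero z hz := hfh.homotopy_zero (g z) (hD' hz)

theorem IsHomotopyExtension.comp {D D' : Set E} {f : E → X} {h : I × E → X} {Δ Δ' : Set E'}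
    {g : E' → E} {H : I × E' → X}
    (hH : IsHomotopyExtension S Δ Δ' (f ∘ g) (h ∘ Prod.map id g) H) {k : E → E'}
    (hk : Continuous k) (hΔ : Set.MapsTo k D Δ) (hΔ' : Set.MapsTo k D' Δ')
    (hgk : ∀ z ∈ D, g (k z) = z) (hD' : D' ⊆ D) :
    IsHomotopyExtension S D D' f h (H ∘ Prod.map id k) where
  continuousOn := hH.continuousOn.comp (by fun_prop) ((Set.mapsTo_univ _ _).prodMap hΔ)
  mapsTo := hH.mapsTo.comp ((Set.mapsTo_univ _ _).prodMap hΔ)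
  apply_zero z hz := by
    simpa [hgk z hz] using hH.apply_zero (k z) (hΔ hz)
  eqOn := fun ⟨t, z⟩ hz => by
    simpa [hgk z (hD' hz.2)] using hH.eqOn (x := (t, k z)) ⟨trivial, hΔ' hz.2⟩

theorem exists_concatenation {D : Set E} {H G : I × E → X} (hH : ContinuousOn H (Set.univ ×ˢ D))
    (hHS : Set.MapsTo H (Set.univ ×ˢ D) S) (hG : ContinuousOn G (Set.univ ×ˢ D))
    (hGS : Set.MapsTo G (Set.univ ×ˢ D) S) (hHG : ∀ z ∈ D, G (0, z) = H (1, z)) :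
    ∃ K : ℝ × E → X, ContinuousOn K (Set.univ ×ˢ D) ∧ Set.MapsTo K (Set.univ ×ˢ D) S ∧
      (∀ s, ∀ z ∈ D, s ≤ 1 → K (s, z) = H (clamp s, z)) ∧
      ∀ s, ∀ z ∈ D, 1 ≤ s → K (s, z) = G (clamp (s - 1), z) := by
  classical
  have hglue {p : ℝ × E} (hp : p.1 = 1) (hz : p.2 ∈ D) :
      H (clamp p.1, p.2) = G (clamp (p.1 - 1), p.2) := by
    rw [hp, sub_self, clamp_of_nonpos le_rfl, clamp_of_one_le le_rfl, hHG _ hz]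
  refine ⟨fun p => if p.1 ≤ 1 then H (clamp p.1, p.2) else G (clamp (p.1 - 1), p.2),
    ContinuousOn.if (fun p hp => hglue ?_ hp.1.2) ?_ ?_, fun p hp => ?_,
    fun s z _ hs => if_pos hs, fun s z hz hs => ite_eq_right_iff.2 fun hs' =>
      hglue (p := (s, z)) (hs'.antisymm hs) hz⟩
  · exact frontier_le_subset_eq continuous_fst continuous_const hp.2
  · exact (hH.comp (by fun_prop) fun p hp => ⟨trivial, hp.2⟩).mono Set.inter_subset_left
  · exact (hG.comp (by fun_prop) fun p hp => ⟨trivial, hp.2⟩).mono Set.inter_subset_left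
  · dsimp only
    split_ifs
    exacts [hHS ⟨trivial, hp.2⟩, hGS ⟨trivial, hp.2⟩]

end HomotopyExtension

section Ball

variable {V : Type*} [NormedAddCommGroup V] [NormedSpace ℝ V] {S : Set X} {f : V → X}
  {h : I × V → X}

open Metric

theorem HomotopyExtensionData.exists_extension_ball
    (hfh : HomotopyExtensionData S (closedBall 0 1) (sphere 0 1) f h) :
    ∃ H, IsHomotopyExtension S (closedBall 0 1) (sphere 0 1) f h H := by
  classical
  let expand (p : I × V) : V := (1 + (p.1 : ℝ)) • p.2
  have hexpand (p : I × V) : ‖expand p‖ = (1 + p.1) * ‖p.2‖ := by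
    rw [norm_smul, Real.norm_of_nonneg (add_nonneg zero_le_one p.1.2.1)]
  have hcont : Continuous expand := by fun_prop
  have houter : Set.MapsTo (fun p => (clamp (‖expand p‖ - 1), radialRetraction (expand p)))
      {p | 1 ≤ ‖expand p‖} (Set.univ ×ˢ sphere 0 1) :=
    fun p hp => ⟨trivial, radialRetraction_mem_sphere hp⟩
  refine ⟨fun p => if ‖expand p‖ ≤ 1 then f (radialRetraction (expand p))
    else h (clamp (‖expand p‖ - 1), radialRetraction (expand p)), Continuous.continuousOn ?_,
    fun p _ => ?_, fun z hz => ?_, fun p hp => ?_⟩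
  · refine continuous_if_le hcont.norm continuous_const ?_ ?_ fun p hp => ?_
    · exact hfh.continuousOn_map.comp (by fun_prop)
        fun p _ => radialRetraction_mem_closedBall (expand p)
    · exact hfh.continuousOn_homotopy.comp (by fun_prop) houter
    · rw [hp, sub_self, clamp_of_nonpos le_rfl,
        hfh.homotopy_zero _ (radialRetraction_mem_sphere hp.ge)]
  · split_ifs with hp1
    · exact hfh.mapsTo_map (radialRetraction_mem_closedBall _)
    · exact hfh.mapsTo_homotopy (houter (not_le.1 hp1).le)
  · rw [mem_closedBall_zero_iff] at hz
    have : expand (0, z) = z := by simp [expand]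
    simp [this, hz, radialRetraction_of_norm_le]
  · obtain ⟨t, z⟩ := p
    have hz : z ∈ sphere 0 1 := hp.2
    have hnorm : ‖expand (t, z)‖ = 1 + t := by
      rw [hexpand, mem_sphere_zero_iff_norm.1 hz, mul_one]
    have hretr : radialRetraction (expand (t, z)) = z :=
      radialRetraction_smul_of_mem_sphere hz (le_add_of_nonneg_right t.2.1)
    rw [hnorm, hretr, add_sub_cancel_left, clamp_coe]
    split_ifs with ht
    · obtain rfl : t = 0 := Subtype.ext (le_antisymm (by simpa using ht) t.2.1)
      exact (hfh.homotopy_zero z hz).symm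
    · rfl

theorem HomotopyExtensionData.exists_dilated_extension_ball
    (hfh : HomotopyExtensionData S (closedBall 0 1) (sphere 0 1) f h) {r : ℝ} (hr0 : 0 < r)
    (hr1 : r ≤ 1) :
    ∃ H, IsHomotopyExtension S (closedBall 0 1) (sphere 0 1) f h H ∧
      ∀ z, r ≤ ‖z‖ → H (1, z) = h (1, ‖z‖⁻¹ • z) := by
  obtain ⟨H, hH⟩ := hfh.exists_extension_ball
  have hfactor (t : I) : 1 ≤ 1 + (r⁻¹ - 1) * (t : ℝ) :=
    le_add_of_nonneg_right (mul_nonneg (sub_nonneg.2 (one_le_inv₀ hr0 |>.2 hr1)) t.2.1)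
  let dilate (p : I × V) : I × V := (p.1, radialRetraction ((1 + (r⁻¹ - 1) * (p.1 : ℝ)) • p.2))
  have hdilate : Continuous dilate := by fun_prop
  have hball (p : I × V) : dilate p ∈ Set.univ ×ˢ closedBall (0 : V) 1 :=
    ⟨trivial, radialRetraction_mem_closedBall _⟩
  refine ⟨H ∘ dilate, ⟨(hH.continuousOn.comp_continuous hdilate hball).continuousOn,
    fun p _ => hH.mapsTo (hball p), fun z hz => ?_, fun ⟨t, z⟩ hz => ?_⟩, fun z hz => ?_⟩
  · have : dilate (0, z) = (0, z) := by
      simp [dilate, radialRetraction_of_norm_le (mem_closedBall_zero_iff.1 hz)]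
    rw [comp_apply, this, hH.apply_zero z hz]
  · have : dilate (t, z) = (t, z) :=
      congrArg (Prod.mk t) (radialRetraction_smul_of_mem_sphere hz.2 (hfactor t))
    rw [comp_apply, this, hH.eqOn hz]
  · have hone : 1 ≤ r⁻¹ * ‖z‖ := by rwa [← div_eq_inv_mul, one_le_div hr0]
    have : dilate (1, z) = (1, ‖z‖⁻¹ • z) := by
      simp [dilate, radialRetraction_smul (inv_pos.2 hr0) hone]
    have hsphere : ‖z‖⁻¹ • z ∈ sphere (0 : V) 1 := by
      simp [norm_smul, inv_mul_cancel₀ (hr0.trans_le hz).ne']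
    rw [comp_apply, this, hH.eqOn ⟨trivial, hsphere⟩]

theorem IsHomotopyExtension.exists_extension_append {H G : I × V → X}
    (hH : IsHomotopyExtension S (closedBall 0 1) (sphere 0 1) f h H)
    (hG : ContinuousOn G (Set.univ ×ˢ closedBall 0 1))
    (hGS : Set.MapsTo G (Set.univ ×ˢ closedBall 0 1) S)
    (hG0 : ∀ z ∈ closedBall 0 1, G (0, z) = H (1, z)) :
    ∃ K, IsHomotopyExtension S (closedBall 0 1) (sphere 0 1) f h K ∧
      ∀ z ∈ closedBall 0 1, ∃ s, ∃ w ∈ closedBall 0 1, (s = 1 ∨ w ∈ sphere 0 1) ∧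
        K (1, z) = G (s, w) := by
  obtain ⟨K, hK, hKS, hKH, hKG⟩ := exists_concatenation hH.continuousOn hH.mapsTo hG hGS hG0
  -- The ball of radius `1/2`, stretched to the unit ball, runs through `H` and then `G`; on the
  -- shell around it the time spent on `G` tapers off, so that the sphere only sees `H`.
  let time (p : I × V) : ℝ := p.1 * (1 + min 1 (2 * (1 - ‖p.2‖)))
  let point (p : I × V) : V := radialRetraction ((1 + (p.1 : ℝ)) • p.2)
  have hball (p) : (time p, point p) ∈ Set.univ ×ˢ closedBall (0 : V) 1 :=
    ⟨trivial, radialRetraction_mem_closedBall _⟩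
  refine ⟨fun p => K (time p, point p), ⟨hK.comp (by fun_prop) fun p _ => hball p,
    fun p _ => hKS (hball p), fun z hz => ?_, fun ⟨t, z⟩ hz => ?_⟩, fun z hz => ?_⟩
  · have hz0 : time (0, z) = 0 ∧ point (0, z) = z := by
      simp [time, point, radialRetraction_of_norm_le (mem_closedBall_zero_iff.1 hz)]
    rw [hz0.1, hz0.2, hKH 0 z hz zero_le_one, clamp_of_nonpos le_rfl, hH.apply_zero z hz]
  · have hz1 : time (t, z) = t ∧ point (t, z) = z := by
      refine ⟨?_, radialRetraction_smul_of_mem_sphere hz.2 (le_add_of_nonneg_right t.2.1)⟩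
      simp [time, mem_sphere_zero_iff_norm.1 hz.2]
    rw [hz1.1, hz1.2, hKH t z (sphere_subset_closedBall hz.2) t.2.2, clamp_coe, hH.eqOn hz]
  · have htime1 : time (1, z) = 1 + min 1 (2 * (1 - ‖z‖)) := one_mul _
    have hz1 : 0 ≤ 1 - ‖z‖ := sub_nonneg.2 (mem_closedBall_zero_iff.1 hz)
    refine ⟨clamp (time (1, z) - 1), point (1, z), radialRetraction_mem_closedBall _, ?_,
      hKG _ _ (radialRetraction_mem_closedBall _) (by rw [htime1]; simp [hz1])⟩
    rcases le_total ‖z‖ 2⁻¹ with hz2 | hz2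
    · exact Or.inl (clamp_of_one_le (by rw [htime1, min_eq_left] <;> linarith))
    · refine Or.inr (radialRetraction_mem_sphere ?_)
      rw [norm_smul, Real.norm_of_nonneg (by simp), Set.Icc.coe_one]
      linarith

end Ball

section Compressible

open Metric

variable {S C : Set X} {n : ℕ} {ι : Type} [Fintype ι] {f : (ι → ℝ) → X}
  {h : I × (ι → ℝ) → X}

/-- Maps of cubes of dimension at most `n` into `S` with boundary in `C` can be deformed into
`C` through such maps. The cubes are encoded as unit balls for the sup norm. This is the form
in which the `n`-connectedness of `(S, C)` is used. -/
def Compressible (S C : Set X) (n : ℕ) : Prop :=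
  ∀ (ι : Type) [Fintype ι], Fintype.card ι ≤ n → ∀ f : (ι → ℝ) → X,
    ContinuousOn f (closedBall 0 1) → Set.MapsTo f (closedBall 0 1) S →
    Set.MapsTo f (sphere 0 1) C →
    ∃ G : I × (ι → ℝ) → X, ContinuousOn G (Set.univ ×ˢ closedBall 0 1) ∧
      Set.MapsTo G (Set.univ ×ˢ closedBall 0 1) S ∧
      Set.MapsTo G (Set.univ ×ˢ sphere 0 1) C ∧
      (∀ z ∈ closedBall 0 1, G (0, z) = f z) ∧ ∀ z ∈ closedBall 0 1, G (1, z) ∈ C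

theorem Compressible.exists_extension_of_card_le (hSC : Compressible S C n)
    (hι : Fintype.card ι ≤ n)
    (hfh : HomotopyExtensionData S (closedBall 0 1) (sphere 0 1) f h)
    (hC : ∀ z ∈ sphere 0 1, h (1, z) ∈ C) :
    ∃ H, IsHomotopyExtension S (closedBall 0 1) (sphere 0 1) f h H ∧
      ∀ z ∈ closedBall 0 1, H (1, z) ∈ C := by
  obtain ⟨H, hH⟩ := hfh.exists_extension_ball
  obtain ⟨G, hGcont, hGS, hGC, hG0, hG1⟩ := hSC ι hι (fun z => H (1, z))
    (hH.continuousOn.comp (by fun_prop) fun z hz => ⟨trivial, hz⟩)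
    (fun z hz => hH.mapsTo ⟨trivial, hz⟩)
    (fun z hz => by simpa only [hH.eqOn (x := (1, z)) ⟨trivial, hz⟩] using hC z hz)
  obtain ⟨K, hK, hKG⟩ := hH.exists_extension_append hGcont hGS hG0
  refine ⟨K, hK, fun z hz => ?_⟩
  obtain ⟨s, w, hw, hs, hKw⟩ := hKG z hz
  rw [hKw]
  rcases hs with rfl | hs
  · exact hG1 w hw
  · exact hGC ⟨trivial, hs⟩

theorem Compressible.exists_extension_ball (hSC : Compressible S C n)
    (hfh : HomotopyExtensionData S (closedBall 0 1) (sphere 0 1) f h) {r : ℝ} (hr0 : 0 < r)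
    (hr1 : r ≤ 1) (hh : ∀ z ∈ sphere 0 1, h (1, z) ∉ C → n < {i | |z i| ≤ r}.ncard) :
    ∃ H, IsHomotopyExtension S (closedBall 0 1) (sphere 0 1) f h H ∧
      ∀ z ∈ closedBall 0 1, H (1, z) ∉ C → n < {i | |z i| ≤ r}.ncard := by
  have hcard (z : ι → ℝ) : {i | |z i| ≤ r}.ncard ≤ Fintype.card ι := by
    simpa only [Nat.card_eq_fintype_card] using Set.ncard_le_card {i | |z i| ≤ r}
  rcases le_or_gt (Fintype.card ι) n with hn | hn
  · obtain ⟨H, hH, hHC⟩ := hSC.exists_extension_of_card_le hn hfh fun z hz =>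
      by_contra fun hzC => absurd (hh z hz hzC) ((hcard z).trans hn).not_gt
    exact ⟨H, hH, fun z hz hzC => absurd (hHC z hz) hzC⟩
  · obtain ⟨H, hH, hHr⟩ := hfh.exists_dilated_extension_ball hr0 hr1
    refine ⟨H, hH, fun z hz hzC => ?_⟩
    rcases le_total ‖z‖ r with hzr | hzr
    · have huniv : {i | |z i| ≤ r} = Set.univ :=
        Set.eq_univ_of_forall fun i => (norm_le_pi_norm z i).trans hzr
      simpa [huniv, Set.ncard_univ] using hn
    · have hz0 : 0 < ‖z‖ := hr0.trans_le hzr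
      have hsphere : ‖z‖⁻¹ • z ∈ sphere (0 : ι → ℝ) 1 := by
        simp [norm_smul, inv_mul_cancel₀ hz0.ne']
      refine (hh _ hsphere (hHr z hzr ▸ hzC)).trans_le (Set.ncard_le_ncard fun i hi => ?_)
      have hinv : 1 ≤ ‖z‖⁻¹ := (one_le_inv₀ hz0).2 (mem_closedBall_zero_iff.1 hz)
      calc |z i| ≤ ‖z‖⁻¹ * |z i| := le_mul_of_one_le_left (abs_nonneg _) hinv
        _ = |(‖z‖⁻¹ • z) i| := by simp [abs_mul]
        _ ≤ r := hi

end Compressible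

section Recentre

variable (p : Set.Ioo (0 : ℝ) 1)

/-- The piecewise linear automorphism of the real line that maps `0`, `p`, `1` to `-1`, `0`, `1`
and is linear on both sides of `p`. -/
noncomputable def recentre : ℝ ≃o ℝ :=
  StrictMono.orderIsoOfRightInverse
    (fun u => if u ≤ p then (u - p) / p else (u - p) / (1 - p))
    (fun u v huv => by
      have hp0 : (0 : ℝ) < p := p.2.1
      have hp1 : (0 : ℝ) < 1 - p := sub_pos.2 p.2.2
      dsimp only
      split_ifs with hu hv hv
      · gcongr
      · exact (div_nonpos_of_nonpos_of_nonneg (by linarith) hp0.le).trans_lt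
          (div_pos (by linarith) hp1)
      · linarith
      · gcongr)
    (fun v => if v ≤ 0 then p + p * v else p + (1 - p) * v)
    (fun v => by
      have hp0 : (0 : ℝ) < p := p.2.1
      have hp1 : (0 : ℝ) < 1 - p := sub_pos.2 p.2.2
      dsimp only
      by_cases hv : v ≤ 0
      · rw [if_pos hv, if_pos (by nlinarith)]
        field_simp
        ring
      · rw [if_neg hv, if_neg (by nlinarith)]
        field_simp
        ring)

theorem recentre_apply (u : ℝ) :
    recentre p u = if u ≤ p then (u - p) / p else (u - p) / (1 - p) := rfl

theorem recentre_zero : recentre p 0 = -1 := by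
  rw [recentre_apply, if_pos p.2.1.le, zero_sub, neg_div, div_self p.2.1.ne']

theorem recentre_one : recentre p 1 = 1 := by
  rw [recentre_apply, if_neg p.2.2.not_ge, div_self (sub_pos.2 p.2.2).ne']

theorem abs_recentre_le_one_iff {u : ℝ} : |recentre p u| ≤ 1 ↔ u ∈ Set.Icc 0 1 := by
  have h0 : -1 ≤ recentre p u ↔ 0 ≤ u := by rw [← recentre_zero p, (recentre p).le_iff_le]
  have h1 : recentre p u ≤ 1 ↔ u ≤ 1 := by
    rw [← (recentre p).le_iff_le (x := u), recentre_one]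
  rw [abs_le, h0, h1, Set.mem_Icc]

theorem abs_recentre_lt_one_iff {u : ℝ} : |recentre p u| < 1 ↔ u ∈ Set.Ioo 0 1 := by
  have h0 : -1 < recentre p u ↔ 0 < u := by rw [← recentre_zero p, (recentre p).lt_iff_lt]
  have h1 : recentre p u < 1 ↔ u < 1 := by
    rw [← (recentre p).lt_iff_lt (x := u), recentre_one]
  rw [abs_lt, h0, h1, Set.mem_Ioo]

theorem abs_sub_le_abs_recentre (u : ℝ) : |u - p| ≤ |recentre p u| := by
  have hp0 : (0 : ℝ) < p := p.2.1
  have hp1 : (0 : ℝ) < 1 - p := sub_pos.2 p.2.2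
  rw [recentre_apply]
  split_ifs <;> rw [abs_div]
  · exact le_div_self (abs_nonneg _) (by positivity) (by rw [abs_of_pos hp0]; exact p.2.2.le)
  · exact le_div_self (abs_nonneg _) (by positivity) (by rw [abs_of_pos hp1]; linarith)

/-- A real number is `p`-central if its fractional part is close to `p`, in the coordinate
of the unit interval that is centred at `p`. -/
def IsCentral (u : ℝ) : Prop := |recentre p (Int.fract u)| ≤ 1 / 8

/-- The number of `p`-central coordinates of `x`. -/
noncomputable def centralCount {κ : Type*} (x : κ → ℝ) : ℕ := {i | IsCentral p (x i)}.ncard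

variable {p}

theorem IsCentral.norm_coe_sub_le {u : ℝ} (hu : IsCentral p u) :
    ‖((u - p : ℝ) : UnitAddCircle)‖ ≤ 1 / 8 := by
  have hfract : ((u - p : ℝ) : UnitAddCircle) = ((Int.fract u - p : ℝ) : UnitAddCircle) := by
    rw [AddCircle.coe_sub, AddCircle.coe_sub, AddCircle.coe_fract]
  rw [hfract]
  exact (QuotientAddGroup.norm_mk_le_norm).trans ((abs_sub_le_abs_recentre p _).trans hu)

theorem isCentral_iff_of_mem_Icc {u : ℝ} {k : ℤ} (hu : u - k ∈ Set.Icc (0 : ℝ) 1) :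
    IsCentral p u ↔ |recentre p (u - k)| ≤ 1 / 8 := by
  rcases hu.2.lt_or_eq with hu1 | hu1
  · have hfloor : ⌊u⌋ = k := Int.floor_eq_iff.2 ⟨by linarith [hu.1], by linarith⟩
    rw [IsCentral, Int.fract, hfloor]
  · obtain rfl : u = (k + 1 : ℤ) := by push_cast; linarith
    rw [IsCentral, Int.fract_intCast, hu1, recentre_zero, recentre_one, abs_neg]

theorem not_isCentral_intCast (k : ℤ) : ¬ IsCentral p k := by
  rw [IsCentral, Int.fract_intCast, recentre_zero]
  norm_num

end Recentre

section UnitCell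

variable {κ : Type}

/-- The cells of the decomposition of `κ → ℝ` into unit cubes with integral vertices and all
their faces, encoded as the integral boxes `[a, b]` with `b ≤ a + 1`; inclusion of boxes is the
face order. -/
abbrev UnitCell (κ : Type) : Type := {c : NonemptyInterval (κ → ℤ) // ∀ i, c.snd i ≤ c.fst i + 1}

/-- The smallest cell that contains `x`. -/
noncomputable def UnitCell.carrier (x : κ → ℝ) : UnitCell κ :=
  ⟨⟨(fun i => ⌊x i⌋, fun i => ⌈x i⌉), fun i => Int.floor_le_ceil (x i)⟩,
    fun i => Int.ceil_le_floor_add_one (x i)⟩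

namespace UnitCell

/-- The points of a cell. -/
def closedCell (c : UnitCell κ) : Set (κ → ℝ) := {x | carrier x ≤ c}

/-- The union of the proper faces of a cell. -/
def cellBoundary (c : UnitCell κ) : Set (κ → ℝ) := {x | carrier x < c}

theorem mem_cellBoundary_iff {c : UnitCell κ} {x : κ → ℝ} :
    x ∈ cellBoundary c ↔ x ∈ closedCell c ∧ carrier x ≠ c :=
  lt_iff_le_and_ne (a := carrier x)

theorem cellBoundary_subset_closedCell {c : UnitCell κ} : cellBoundary c ⊆ closedCell c :=
  fun _ hx => (mem_cellBoundary_iff.1 hx).1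

theorem mem_closedCell_iff {c : UnitCell κ} {x : κ → ℝ} :
    x ∈ closedCell c ↔ ∀ i, (c.1.fst i : ℝ) ≤ x i ∧ x i ≤ c.1.snd i := by
  rw [forall_and]
  exact and_congr (forall_congr' fun _ => Int.le_floor) (forall_congr' fun _ => Int.ceil_le)

theorem carrier_eq_iff {c : UnitCell κ} {x : κ → ℝ} :
    carrier x = c ↔ ∀ i, ⌊x i⌋ = c.1.fst i ∧ ⌈x i⌉ = c.1.snd i := by
  rw [← Subtype.coe_inj, ← NonemptyInterval.toProd_injective.eq_iff, Prod.ext_iff, funext_iff,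
    funext_iff, forall_and]
  rfl

theorem isClosed_closedCell (c : UnitCell κ) : IsClosed (closedCell c) := by
  have : closedCell c = Set.Icc (fun i => (c.1.fst i : ℝ)) (fun i => (c.1.snd i : ℝ)) := by
    ext x
    rw [mem_closedCell_iff, forall_and]
    rfl
  exact this ▸ isClosed_Icc

/-- The dimension of a cell. -/
def dim [Fintype κ] (c : UnitCell κ) : ℕ := ∑ i, (c.1.snd i - c.1.fst i).toNat

theorem dim_strictMono [Fintype κ] : StrictMono (dim (κ := κ)) := by
  intro c d hcd
  have hle (i : κ) : d.1.fst i ≤ c.1.fst i ∧ c.1.snd i ≤ d.1.snd i :=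
    ⟨hcd.le.1 i, hcd.le.2 i⟩
  obtain ⟨i, hi⟩ : ∃ i, ¬ (c.1.fst i ≤ d.1.fst i ∧ d.1.snd i ≤ c.1.snd i) := by
    by_contra! h
    exact hcd.not_ge ⟨fun i => (h i).1, fun i => (h i).2⟩
  refine Finset.sum_lt_sum (fun j _ => ?_) ⟨i, Finset.mem_univ i, ?_⟩
  · have := hle j
    lia
  · have := hle i
    have : c.1.fst i ≤ c.1.snd i := c.1.fst_le_snd i
    lia

instance [Finite κ] : WellFoundedLT (UnitCell κ) :=
  have := Fintype.ofFinite κ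
  dim_strictMono.wellFoundedLT

theorem locallyFinite_closedCell [Finite κ] : LocallyFinite (closedCell (κ := κ)) := by
  classical
  have := Fintype.ofFinite κ
  intro x
  refine ⟨Metric.ball x 1, Metric.ball_mem_nhds x one_pos, ?_⟩
  let box : Set (κ → ℤ) := Set.Icc (fun i => ⌊x i⌋ - 1) (fun i => ⌊x i⌋ + 2)
  have hbox : (box ×ˢ box).Finite := (Set.finite_Icc _ _).prod (Set.finite_Icc _ _)
  refine (hbox.preimage (f := fun c : UnitCell κ => c.1.toProd)
    (NonemptyInterval.toProd_injective.comp Subtype.val_injective).injOn).subset ?_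
  rintro c ⟨y, hyc, hyx⟩
  have hfst (i : κ) : c.1.fst i ≤ ⌊x i⌋ + 1 ∧ ⌊x i⌋ ≤ c.1.snd i := by
    have hdist : |y i - x i| < 1 := (dist_le_pi_dist y x i).trans_lt hyx
    obtain ⟨hy0, hy1⟩ := mem_closedCell_iff.1 hyc i
    constructor
    · rw [← Int.lt_add_one_iff, ← Int.cast_lt (R := ℝ)]
      push_cast
      linarith [(abs_lt.1 hdist).2, Int.lt_floor_add_one (x i)]
    · rw [← Int.sub_one_lt_iff, ← Int.cast_lt (R := ℝ)]
      push_cast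
      linarith [(abs_lt.1 hdist).1, Int.floor_le (x i)]
  have hbounds (i : κ) : (⌊x i⌋ - 1 ≤ c.1.fst i ∧ c.1.fst i ≤ ⌊x i⌋ + 2) ∧
      ⌊x i⌋ - 1 ≤ c.1.snd i ∧ c.1.snd i ≤ ⌊x i⌋ + 2 := by
    have := hfst i
    have := c.2 i
    lia
  exact ⟨⟨fun i => (hbounds i).1.1, fun i => (hbounds i).1.2⟩,
    fun i => (hbounds i).2.1, fun i => (hbounds i).2.2⟩

end UnitCell

section CellChart

open UnitCell

variable {c : UnitCell κ} {p : Set.Ioo (0 : ℝ) 1}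

/-- The directions along which a cell extends. -/
abbrev UnitCell.Direction (c : UnitCell κ) : Type := {i // c.1.fst i < c.1.snd i}

/-- The chart of a cell with values in the unit ball of its directions that sends the points with
`p`-central coordinates to the vicinity of the coordinate hyperplanes. -/
noncomputable def cellCoord (c : UnitCell κ) (p : Set.Ioo (0 : ℝ) 1) (x : κ → ℝ) :
    c.Direction → ℝ :=
  fun i => recentre p (x i - c.1.fst i)

/-- The inverse of the chart `cellCoord c p`. -/
noncomputable def cellParam (c : UnitCell κ) (p : Set.Ioo (0 : ℝ) 1) (z : c.Direction → ℝ) :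
    κ → ℝ :=
  fun i => c.1.fst i + if h : c.1.fst i < c.1.snd i then (recentre p).symm (z ⟨i, h⟩) else 0

@[fun_prop]
theorem continuous_cellCoord : Continuous (cellCoord c p) := by
  have := (recentre p).continuous
  unfold cellCoord
  fun_prop

@[fun_prop]
theorem continuous_cellParam : Continuous (cellParam c p) := by
  have := (recentre p).symm.continuous
  refine continuous_pi fun i => continuous_const.add ?_
  split_ifs
  · fun_prop
  · exact continuous_const

theorem cellCoord_cellParam (z : c.Direction → ℝ) : cellCoord c p (cellParam c p z) = z := by
  funext i
  simp [cellCoord, cellParam, i.2]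

theorem UnitCell.snd_eq_fst_add_one (i : c.Direction) : c.1.snd i = c.1.fst i + 1 :=
  le_antisymm (c.2 i) i.2

theorem UnitCell.snd_eq_fst {i : κ} (hi : ¬ c.1.fst i < c.1.snd i) : c.1.snd i = c.1.fst i :=
  le_antisymm (not_lt.1 hi) (c.1.fst_le_snd i)

theorem UnitCell.apply_eq_fst {x : κ → ℝ} (hx : x ∈ closedCell c) {i : κ}
    (hi : ¬ c.1.fst i < c.1.snd i) : x i = c.1.fst i := by
  obtain ⟨h0, h1⟩ := mem_closedCell_iff.1 hx i
  rw [snd_eq_fst hi] at h1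
  exact h1.antisymm h0

theorem UnitCell.sub_fst_mem_Icc {x : κ → ℝ} (hx : x ∈ closedCell c) (i : c.Direction) :
    x i - c.1.fst i ∈ Set.Icc (0 : ℝ) 1 := by
  obtain ⟨h0, h1⟩ := mem_closedCell_iff.1 hx i
  rw [snd_eq_fst_add_one i] at h1
  push_cast at h1
  constructor <;> linarith

theorem cellParam_cellCoord {x : κ → ℝ} (hx : x ∈ closedCell c) :
    cellParam c p (cellCoord c p x) = x := by
  funext i
  rw [cellParam]
  split_ifs with hi
  · simp [cellCoord]
  · rw [add_zero, apply_eq_fst hx hi]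

theorem centralCount_eq_ncard_cellCoord {x : κ → ℝ} (hx : x ∈ closedCell c) :
    centralCount p x = {i | |cellCoord c p x i| ≤ 1 / 8}.ncard := by
  have himage : {i | IsCentral p (x i)} = Subtype.val '' {i | |cellCoord c p x i| ≤ 1 / 8} := by
    ext i
    by_cases hi : c.1.fst i < c.1.snd i
    · simp [hi, cellCoord, isCentral_iff_of_mem_Icc (sub_fst_mem_Icc hx ⟨i, hi⟩)]
    · simp [hi, apply_eq_fst hx hi, not_isCentral_intCast]
  rw [centralCount, himage, Set.ncard_image_of_injective _ Subtype.val_injective]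

theorem cellCoord_mem_closedBall [Fintype κ] {x : κ → ℝ} (hx : x ∈ closedCell c) :
    cellCoord c p x ∈ Metric.closedBall 0 1 :=
  mem_closedBall_zero_iff.2 ((pi_norm_le_iff_of_nonneg zero_le_one).2 fun i =>
    (abs_recentre_le_one_iff p).2 (sub_fst_mem_Icc hx i))

theorem cellParam_mem_closedCell [Fintype κ] {z : c.Direction → ℝ}
    (hz : z ∈ Metric.closedBall 0 1) :
    cellParam c p z ∈ closedCell c := by
  refine mem_closedCell_iff.2 fun i => ?_
  rw [cellParam]
  split_ifs with hi
  · have hzi : |z ⟨i, hi⟩| ≤ 1 := (norm_le_pi_norm z _).trans (mem_closedBall_zero_iff.1 hz)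
    rw [← (recentre p).apply_symm_apply (z ⟨i, hi⟩), abs_recentre_le_one_iff] at hzi
    rw [snd_eq_fst_add_one ⟨i, hi⟩]
    push_cast
    constructor <;> linarith [hzi.1, hzi.2]
  · simp [snd_eq_fst hi]

theorem carrier_eq_iff_norm_cellCoord_lt_one [Fintype κ] {x : κ → ℝ} (hx : x ∈ closedCell c) :
    carrier x = c ↔ ‖cellCoord c p x‖ < 1 := by
  simp only [carrier_eq_iff, pi_norm_lt_iff one_pos, Real.norm_eq_abs, cellCoord,
    abs_recentre_lt_one_iff, Int.floor_eq_iff, Int.ceil_eq_iff]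
  constructor
  · rintro h i
    obtain ⟨⟨-, hlt⟩, hgt, -⟩ := h i
    rw [snd_eq_fst_add_one i] at hgt
    push_cast at hgt
    constructor <;> linarith
  · intro h i
    by_cases hi : c.1.fst i < c.1.snd i
    · obtain ⟨h0, h1⟩ := h ⟨i, hi⟩
      rw [snd_eq_fst_add_one ⟨i, hi⟩]
      push_cast
      refine ⟨⟨?_, ?_⟩, ?_, ?_⟩ <;> linarith
    · simp [snd_eq_fst hi, apply_eq_fst hx hi]

theorem mem_cellBoundary_iff_cellCoord_mem_sphere [Fintype κ] {x : κ → ℝ}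
    (hx : x ∈ closedCell c) :
    x ∈ cellBoundary c ↔ cellCoord c p x ∈ Metric.sphere 0 1 := by
  have hle : ‖cellCoord c p x‖ ≤ 1 := mem_closedBall_zero_iff.1 (cellCoord_mem_closedBall hx)
  rw [mem_sphere_zero_iff_norm, ← hle.not_lt_iff_eq, ← carrier_eq_iff_norm_cellCoord_lt_one hx,
    mem_cellBoundary_iff, and_iff_right hx]

theorem Compressible.exists_extension_closedCell [Finite κ] {S C : Set X} {n : ℕ}
    (hSC : Compressible S C n) {f : (κ → ℝ) → X} {h : I × (κ → ℝ) → X}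
    (hfh : HomotopyExtensionData S (closedCell c) (cellBoundary c) f h)
    (hh : ∀ x ∈ cellBoundary c, h (1, x) ∉ C → n < centralCount p x) :
    ∃ H, IsHomotopyExtension S (closedCell c) (cellBoundary c) f h H ∧
      ∀ x ∈ closedCell c, H (1, x) ∉ C → n < centralCount p x := by
  have := Fintype.ofFinite κ
  have hball : Set.MapsTo (cellParam c p) (Metric.closedBall 0 1) (closedCell c) :=
    fun z => cellParam_mem_closedCell
  have hsphere : Set.MapsTo (cellParam c p) (Metric.sphere 0 1) (cellBoundary c) := fun z hz => by
    rw [mem_cellBoundary_iff_cellCoord_mem_sphere (p := p)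
      (hball (Metric.sphere_subset_closedBall hz)), cellCoord_cellParam]
    exact hz
  have hsphere' : Set.MapsTo (cellCoord c p) (cellBoundary c) (Metric.sphere 0 1) := fun x hx =>
    (mem_cellBoundary_iff_cellCoord_mem_sphere (cellBoundary_subset_closedCell hx)).1 hx
  have hcount {z} (hz : z ∈ Metric.closedBall 0 1) :
      centralCount p (cellParam c p z) = {i | |z i| ≤ 1 / 8}.ncard := by
    rw [centralCount_eq_ncard_cellCoord (hball hz), cellCoord_cellParam]
  obtain ⟨H, hH, hHC⟩ := hSC.exists_extension_ball (r := 1 / 8)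
    (hfh.comp continuous_cellParam hball hsphere) (by norm_num) (by norm_num)
    fun z hz hzC => hcount (Metric.sphere_subset_closedBall hz) ▸ hh _ (hsphere hz) hzC
  refine ⟨_, hH.comp (k := cellCoord c p) continuous_cellCoord (fun x => cellCoord_mem_closedBall)
    hsphere' (fun x => cellParam_cellCoord) cellBoundary_subset_closedCell, fun x hx hxC => ?_⟩
  rw [centralCount_eq_ncard_cellCoord hx]
  exact hHC _ (cellCoord_mem_closedBall hx) hxC

end CellChart

end UnitCell

section CellwiseExtension

theorem exists_continuousMap_of_cellwise {α κ : Type*} [TopologicalSpace α] [PartialOrder κ]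
    [WellFoundedLT κ] [Nonempty X] {car : α → κ} (hclosed : ∀ c, IsClosed {x | car x ≤ c})
    (hfinite : LocallyFinite fun c => {x | car x ≤ c}) {Q : α → X → Prop}
    (hext : ∀ (c : κ) (H : α → X), ContinuousOn H {x | car x < c} →
      (∀ x, car x < c → Q x (H x)) →
      ∃ H' : α → X, ContinuousOn H' {x | car x ≤ c} ∧ Set.EqOn H' H {x | car x < c} ∧
        ∀ x, car x = c → Q x (H' x)) :
    ∃ H : C(α, X), ∀ x, Q x (H x) := by
  classical
  have hext' (c : κ) (H : α → X) : ∃ H' : α → X, ContinuousOn H {x | car x < c} →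
      (∀ x, car x < c → Q x (H x)) →
      ContinuousOn H' {x | car x ≤ c} ∧ Set.EqOn H' H {x | car x < c} ∧
        ∀ x, car x = c → Q x (H' x) := by
    by_cases hH : ContinuousOn H {x | car x < c} ∧ ∀ x, car x < c → Q x (H x)
    · exact (hext c H hH.1 hH.2).imp fun _ hH' _ _ => hH'
    · exact ⟨H, fun h1 h2 => absurd ⟨h1, h2⟩ hH⟩
  choose extend hextend using hext'
  let onCell : κ → α → X := wellFounded_lt.fix fun c onCell =>
    extend c fun x => if h : car x < c then onCell (car x) h x else Classical.arbitrary X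
  let H (x : α) : X := onCell (car x) x
  have hH (c : κ) : onCell c = extend c fun x => if car x < c then H x else Classical.arbitrary X :=
    wellFounded_lt.fix_eq _ _
  have hmain (c : κ) : ContinuousOn H {x | car x ≤ c} ∧ ∀ x, car x = c → Q x (H x) := by
    induction c using WellFoundedLT.induction with | ind c ih
    have hunion : {x | car x < c} = ⋃ d : Set.Iio c, {x | car x ≤ d} := by
      ext x
      simp only [Set.mem_iUnion]
      exact ⟨fun hx => ⟨⟨car x, hx⟩, le_rfl⟩, fun ⟨d, hd⟩ => lt_of_le_of_lt hd d.2⟩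
    have hcont : ContinuousOn H {x | car x < c} := hunion ▸
      (hfinite.comp_injective Subtype.val_injective).continuousOn_iUnion (fun d => hclosed d)
        fun d => (ih d d.2).1
    have heq : Set.EqOn (fun x => if car x < c then H x else Classical.arbitrary X) H
        {x | car x < c} := fun x hx => if_pos hx
    obtain ⟨hcont', heq', hQ⟩ := hH c ▸ hextend c _ (hcont.congr heq)
      fun x hx => by simpa only [if_pos hx] using (ih (car x) hx).2 x rfl
    refine ⟨hcont'.congr fun x hx => ?_, fun x hx => ?_⟩
    · rcases eq_or_lt_of_le hx with rfl | hx
      · rfl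
      · rw [heq' hx, heq hx]
    · subst hx
      exact hQ x rfl
  have hcover : ⋃ c, {x | car x ≤ c} = Set.univ :=
    Set.eq_univ_of_forall fun x => Set.mem_iUnion.2 ⟨car x, le_rfl⟩
  exact ⟨⟨H, hfinite.continuous hcover hclosed fun c => (hmain c).1⟩,
    fun x => (hmain (car x)).2 x rfl⟩

end CellwiseExtension

section CellwiseDeformation

open UnitCell

variable {κ : Type} {β : Type*} {S : β → Set X} {C : Set X} {n : β → ℕ}
  {p : β → Set.Ioo (0 : ℝ) 1} {f : C(κ → ℝ, X)}

/-- The point `y` is an admissible value at time `t` and position `x`, where `q = (t, x)`, of a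
deformation of `f` that respects the members of the family `S` cell by cell, is stationary on the
cells in `C`, and ends outside `C` only at positions with many central coordinates. -/
structure CellwiseAdmissible (S : β → Set X) (C : Set X) (n : β → ℕ) (p : β → Set.Ioo (0 : ℝ) 1)
    (f : C(κ → ℝ, X)) (q : I × (κ → ℝ)) (y : X) : Prop where
  eq_of_time_eq_zero : q.1 = 0 → y = f q.2
  eq_of_mapsTo : Set.MapsTo f (closedCell (carrier q.2)) C → y = f q.2
  mem : ∀ b, Set.MapsTo f (closedCell (carrier q.2)) (S b) → y ∈ S b
  lt_centralCount : ∀ b, Set.MapsTo f (closedCell (carrier q.2)) (S b) → q.1 = 1 → y ∉ C →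
    n b < centralCount (p b) q.2

theorem UnitCell.mem_closedCell_carrier (x : κ → ℝ) : x ∈ closedCell (carrier x) :=
  le_refl (carrier x)

theorem UnitCell.closedCell_carrier_subset {c : UnitCell κ} {x : κ → ℝ} (hx : x ∈ closedCell c) :
    closedCell (carrier x) ⊆ closedCell c :=
  fun y hy => le_trans (a := carrier y) hy hx

theorem CellwiseAdmissible.of_mapsTo {q : I × (κ → ℝ)}
    (hq : Set.MapsTo f (closedCell (carrier q.2)) C) :
    CellwiseAdmissible S C n p f q (f q.2) where
  eq_of_time_eq_zero _ := rfl
  eq_of_mapsTo _ := rfl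
  mem _ hb := hb (mem_closedCell_carrier q.2)
  lt_centralCount _ _ _ hC := absurd (hq (mem_closedCell_carrier q.2)) hC

variable [Finite κ]

theorem exists_admissible_extension_closedCell (hS : ∀ b, Compressible (S b) C (n b))
    (hinter : Pairwise fun b b' => S b ∩ S b' ⊆ C) {c : UnitCell κ}
    (hc : ∃ b, Set.MapsTo f (closedCell c) (S b)) {H : I × (κ → ℝ) → X}
    (hH : ContinuousOn H (Set.univ ×ˢ cellBoundary c))
    (hadm : ∀ q : I × (κ → ℝ), q.2 ∈ cellBoundary c → CellwiseAdmissible S C n p f q (H q)) :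
    ∃ H' : I × (κ → ℝ) → X, ContinuousOn H' (Set.univ ×ˢ closedCell c) ∧
      Set.EqOn H' H (Set.univ ×ˢ cellBoundary c) ∧
      ∀ q : I × (κ → ℝ), carrier q.2 = c → CellwiseAdmissible S C n p f q (H' q) := by
  have hface {x} (hx : x ∈ cellBoundary c) : closedCell (carrier x) ⊆ closedCell c :=
    closedCell_carrier_subset (cellBoundary_subset_closedCell hx)
  by_cases hcC : Set.MapsTo f (closedCell c) C
  · refine ⟨fun q => f q.2, by fun_prop, fun q hq => ?_, ?_⟩
    · exact ((hadm q hq.2).eq_of_mapsTo (hcC.mono_left (hface hq.2))).symm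
    · rintro q rfl
      exact .of_mapsTo hcC
  obtain ⟨b, hb⟩ := hc
  have hunique {b'} (hb' : Set.MapsTo f (closedCell c) (S b')) : b' = b :=
    by_contra fun hne => hcC fun x hx => hinter hne ⟨hb' hx, hb hx⟩
  have hdata : HomotopyExtensionData (S b) (closedCell c) (cellBoundary c) f H :=
    ⟨by fun_prop, hb, hH, fun q hq => (hadm q hq.2).mem b (hb.mono_left (hface hq.2)),
      fun x hx => (hadm (0, x) hx).eq_of_time_eq_zero rfl⟩
  obtain ⟨H', hH', hcount⟩ := (hS b).exists_extension_closedCell (p := p b) hdata fun x hx =>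
    (hadm (1, x) hx).lt_centralCount b (hb.mono_left (hface hx)) rfl
  refine ⟨H', hH'.continuousOn, hH'.eqOn, ?_⟩
  rintro ⟨t, x⟩ rfl
  have hx := mem_closedCell_carrier x
  refine ⟨?_, fun h => absurd h hcC, fun b' hb' => ?_, fun b' hb' ht => ?_⟩
  · rintro rfl
    exact hH'.apply_zero x hx
  · exact hunique hb' ▸ hH'.mapsTo ⟨trivial, hx⟩
  · obtain rfl := hunique hb'
    obtain rfl : t = 1 := ht
    exact hcount x hx

theorem exists_cellwise_deformation (hS : ∀ b, Compressible (S b) C (n b))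
    (hinter : Pairwise fun b b' => S b ∩ S b' ⊆ C)
    (hf : ∀ c : UnitCell κ, ∃ b, Set.MapsTo f (closedCell c) (S b)) :
    ∃ H : C(I × (κ → ℝ), X), ∀ q, CellwiseAdmissible S C n p f q (H q) := by
  have : Nonempty X := ⟨f 0⟩
  have hprod (D : Set (κ → ℝ)) : (Prod.snd ⁻¹' D : Set (I × (κ → ℝ))) = Set.univ ×ˢ D :=
    Set.univ_prod.symm
  refine exists_continuousMap_of_cellwise (α := I × (κ → ℝ)) (car := fun q => carrier q.2)
    (fun c => (isClosed_closedCell c).preimage continuous_snd)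
    (locallyFinite_closedCell.preimage_continuous continuous_snd) fun c H hH hadm => ?_
  have hHc : ContinuousOn H (Set.univ ×ˢ cellBoundary c) := hprod (cellBoundary c) ▸ hH
  obtain ⟨H', hcont, heq, hadm'⟩ :=
    exists_admissible_extension_closedCell hS hinter (hf c) hHc hadm
  rw [← hprod] at hcont
  exact ⟨H', hcont, fun q hq => heq ⟨trivial, hq⟩, hadm'⟩

end CellwiseDeformation

section Subdivision

open UnitCell

variable {κ : Type}

/-- The map `x ↦ x / M` from Euclidean space to the cube, clamped in each coordinate. -/
noncomputable def shrink (M : ℕ) : C(κ → ℝ, κ → I) :=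
  ⟨fun x i => clamp (x i / M), by fun_prop⟩

/-- The inclusion `y ↦ M y` of the cube into Euclidean space. -/
def stretch (M : ℕ) : C(κ → I, κ → ℝ) :=
  ⟨fun y i => M * y i, by fun_prop⟩

theorem shrink_stretch {M : ℕ} (hM : M ≠ 0) (y : κ → I) : shrink M (stretch M y) = y := by
  funext i
  have hM' : (M : ℝ) ≠ 0 := Nat.cast_ne_zero.2 hM
  simp only [shrink, stretch, ContinuousMap.coe_mk]
  rw [mul_div_cancel_left₀ _ hM', clamp_coe]

theorem exists_subdivision [Finite κ] {β : Type*} {S : β → Set X}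
    (hcover : ⋃ b, interior (S b) = Set.univ) (Φ : C(κ → I, X)) :
    ∃ M : ℕ, M ≠ 0 ∧ ∀ c : UnitCell κ, ∃ b,
      Set.MapsTo (Φ.comp (shrink M)) (closedCell c) (S b) := by
  have := Fintype.ofFinite κ
  obtain ⟨δ, hδ, hball⟩ := lebesgue_number_lemma_of_metric
    (c := fun b => Φ ⁻¹' interior (S b)) isCompact_univ
    (fun b => isOpen_interior.preimage Φ.continuous)
    (by rw [← Set.preimage_iUnion, hcover, Set.preimage_univ])
  obtain ⟨M, hM⟩ := exists_nat_one_div_lt hδ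
  refine ⟨M + 1, M.succ_ne_zero, fun c => ?_⟩
  obtain ⟨b, hb⟩ := hball (shrink (M + 1) fun i => (c.1.fst i : ℝ)) trivial
  refine ⟨b, fun x hx => interior_subset (hb ?_)⟩
  rw [Metric.mem_ball, dist_pi_lt_iff hδ]
  intro i
  obtain ⟨h0, h1⟩ := mem_closedCell_iff.1 hx i
  have hsnd : (c.1.snd i : ℝ) ≤ c.1.fst i + 1 := mod_cast c.2 i
  calc |(clamp (x i / (M + 1 : ℕ)) : ℝ) - clamp (c.1.fst i / (M + 1 : ℕ))|
      ≤ |x i / (M + 1 : ℕ) - c.1.fst i / (M + 1 : ℕ)| := Set.abs_projIcc_sub_projIcc zero_le_one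
    _ = (x i - c.1.fst i) / (M + 1 : ℕ) := by
      rw [← sub_div, abs_of_nonneg (div_nonneg (sub_nonneg.2 h0) (Nat.cast_nonneg _))]
    _ ≤ 1 / (M + 1) := by
      push_cast
      gcongr
      linarith
    _ < δ := hM

/-- The face `y i = v` of the cube; it is part of the boundary for `v = 0` and `v = 1`. -/
def face (i : κ) (v : I) : Set (κ → I) := {y | y i = v}

theorem shrink_mapsTo_face {M : ℕ} (hM : M ≠ 0) {i : κ} {v : I} (hv : v = 0 ∨ v = 1)
    {y : κ → I} (hy : y ∈ face i v) :
    Set.MapsTo (shrink M) (closedCell (carrier (stretch M y))) (face i v) := by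
  obtain ⟨k, hk⟩ : ∃ k : ℤ, (M : ℝ) * v = k := by
    rcases hv with rfl | rfl
    · exact ⟨0, by simp⟩
    · exact ⟨M, by simp⟩
  intro x hx
  have hyi : stretch M y i = k := by rw [← hk, ← show y i = v from hy]; rfl
  have hxi : x i = M * v := by
    obtain ⟨h0, h1⟩ := mem_closedCell_iff.1 hx i
    have h0' : ((⌊stretch M y i⌋ : ℤ) : ℝ) ≤ x i := h0
    have h1' : x i ≤ ((⌈stretch M y i⌉ : ℤ) : ℝ) := h1
    rw [hyi, Int.floor_intCast] at h0'
    rw [hyi, Int.ceil_intCast] at h1'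
    rw [hk, le_antisymm h1' h0']
  change clamp (x i / M) = v
  rw [hxi, mul_div_cancel_left₀ _ (Nat.cast_ne_zero.2 hM), clamp_coe]

theorem exists_cube_deformation [Finite κ] {β : Type*} {S : β → Set X} {C : Set X} {n : β → ℕ}
    (p : β → Set.Ioo (0 : ℝ) 1) (hS : ∀ b, Compressible (S b) C (n b))
    (hinter : Pairwise fun b b' => S b ∩ S b' ⊆ C)
    (hcover : ⋃ b, interior (S b) = Set.univ) (Φ : C(κ → I, X)) :
    ∃ (K : C(I × (κ → I), X)) (M : ℕ), (∀ y, K (0, y) = Φ y) ∧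
      (∀ i v, v = 0 ∨ v = 1 → ∀ T, T ∈ Set.range S ∨ T ⊆ C → Set.MapsTo Φ (face i v) T →
        ∀ t, Set.MapsTo (fun y => K (t, y)) (face i v) T) ∧
      ∀ b y, K (1, y) ∈ S b → K (1, y) ∉ C → n b < centralCount (p b) (stretch M y) := by
  obtain ⟨M, hM, hcells⟩ := exists_subdivision hcover Φ
  obtain ⟨H, hH⟩ := exists_cellwise_deformation (p := p) hS hinter hcells
  have hΦ (y : κ → I) : Φ.comp (shrink M) (stretch M y) = Φ y := by
    rw [ContinuousMap.comp_apply, shrink_stretch hM]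
  refine ⟨H.comp (.prodMap (.id I) (stretch M)), M,
    fun y => ((hH (0, stretch M y)).eq_of_time_eq_zero rfl).trans (hΦ y), ?_, ?_⟩
  · intro i v hv T hT hΦT t y hy
    have hcell : Set.MapsTo (Φ.comp (shrink M)) (closedCell (carrier (stretch M y))) T :=
      hΦT.comp (shrink_mapsTo_face hM hv hy)
    rcases hT with ⟨b, rfl⟩ | hTC
    · exact (hH (t, stretch M y)).mem b hcell
    · have hconst := (hH (t, stretch M y)).eq_of_mapsTo (hcell.mono_right hTC)
      exact Set.mem_of_eq_of_mem (hconst.trans (hΦ y)) (hΦT hy)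
  · intro b y hyb hyC
    obtain ⟨b', hb'⟩ := hcells (carrier (stretch M y))
    have hb : b' = b := by_contra fun hne =>
      hyC (hinter hne ⟨(hH (1, stretch M y)).mem b' hb', hyb⟩)
    exact (hH (1, stretch M y)).lt_centralCount b (hb ▸ hb') rfl hyC

end Subdivision

section Separation

variable {κ : Type} [Fintype κ] {p : Set.Ioo (0 : ℝ) 1} {m n : ℕ}

theorem centralCount_le_sum {w : ℝ → ℝ} (hw0 : ∀ u, 0 ≤ w u) (hw1 : ∀ u, IsCentral p u → w u = 1)
    (x : κ → ℝ) : (centralCount p x : ℝ) ≤ ∑ i, w (x i) := by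
  classical
  calc (centralCount p x : ℝ) = ∑ i with IsCentral p (x i), w (x i) := by
        rw [centralCount, Set.ncard_eq_toFinset_card', Finset.sum_congr rfl (g := fun _ => 1)]
        · simp
        · exact fun i hi => hw1 _ (by simpa using hi)
    _ ≤ ∑ i, w (x i) :=
      Finset.sum_le_sum_of_subset_of_nonneg (Finset.filter_subset _ _) fun i _ _ => hw0 _

theorem centralCount_le_centralCount_tail_add_one {N : ℕ} (x : Fin (N + 1) → ℝ) :
    centralCount p x ≤ centralCount p (Fin.tail x) + 1 := by
  have hsubset : {i | IsCentral p (x i)} ⊆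
      insert 0 (Fin.succ '' {i | IsCentral p (Fin.tail x i)}) := by
    intro i hi
    cases i using Fin.cases with
    | zero => exact Set.mem_insert _ _
    | succ i => exact Or.inr ⟨i, hi, rfl⟩
  calc centralCount p x ≤ (insert 0 (Fin.succ '' {i | IsCentral p (Fin.tail x i)})).ncard :=
        Set.ncard_le_ncard hsubset
    _ ≤ (Fin.succ '' {i | IsCentral p (Fin.tail x i)}).ncard + 1 := Set.ncard_insert_le _ _
    _ = centralCount p (Fin.tail x) + 1 := by
      rw [Set.ncard_image_of_injective _ (Fin.succ_injective N), centralCount]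

/-- The two values of the parameter of `IsCentral` used for the two members of the triad: numbers
that are central for one are far from being central for the other. -/
noncomputable def quarterPoint (b : Bool) : Set.Ioo (0 : ℝ) 1 :=
  bif b then ⟨1 / 4, by norm_num⟩ else ⟨3 / 4, by norm_num⟩

/-- A `1`-periodic function on the real line that separates the numbers that are central for
`1 / 4` from those that are central for `3 / 4`. -/
noncomputable def centralWeight : C(ℝ, I) :=
  ⟨fun u => clamp (3 / 2 - 4 * ‖((u - 1 / 4 : ℝ) : UnitAddCircle)‖),
    clamp.continuous.comp (continuous_const.sub (continuous_const.mul
      ((AddCircle.continuous_mk' 1).comp (continuous_id.sub continuous_const)).norm))⟩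

theorem centralWeight_eq_one {u : ℝ} (hu : IsCentral (quarterPoint true) u) :
    centralWeight u = 1 := by
  have hu' : ‖((u - 1 / 4 : ℝ) : UnitAddCircle)‖ ≤ 1 / 8 := hu.norm_coe_sub_le
  exact clamp_of_one_le (by linarith)

theorem centralWeight_eq_zero {u : ℝ} (hu : IsCentral (quarterPoint false) u) :
    centralWeight u = 0 := by
  have hhalf : ‖((1 / 2 : ℝ) : UnitAddCircle)‖ = 1 / 2 := by
    simpa using AddCircle.norm_half_period_eq (1 : ℝ)
  have hsub : ((1 / 2 : ℝ) : UnitAddCircle) =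
      ((u - 1 / 4 : ℝ) : UnitAddCircle) - ((u - 3 / 4 : ℝ) : UnitAddCircle) := by
    rw [← AddCircle.coe_sub]
    ring_nf
  have htriangle := hsub ▸ norm_sub_le ((u - 1 / 4 : ℝ) : UnitAddCircle) ((u - 3 / 4 : ℝ))
  have hu' : ‖((u - 3 / 4 : ℝ) : UnitAddCircle)‖ ≤ 1 / 8 := hu.norm_coe_sub_le
  exact clamp_of_nonpos (by linarith)

theorem exists_separating_function (hmn : Fintype.card κ < m + n) :
    ∃ τ : C(κ → ℝ, I), (∀ x, n ≤ centralCount (quarterPoint true) x → τ x = 1) ∧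
      ∀ x, m ≤ centralCount (quarterPoint false) x → τ x = 0 := by
  refine ⟨⟨fun x => clamp (∑ i, (centralWeight (x i) : ℝ) - n + 1), by fun_prop⟩,
    fun x hx => clamp_of_one_le ?_, fun x hx => clamp_of_nonpos ?_⟩
  · have hsum := centralCount_le_sum (p := quarterPoint true) (w := fun u => centralWeight u)
      (fun u => (centralWeight u).2.1) (fun u hu => by simp [centralWeight_eq_one hu]) x
    have hx' : (n : ℝ) ≤ centralCount (quarterPoint true) x := mod_cast hx
    linarith
  · have hsum := centralCount_le_sum (p := quarterPoint false) (w := fun u => 1 - centralWeight u)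
      (fun u => sub_nonneg.2 (centralWeight u).2.2)
      (fun u hu => by simp [centralWeight_eq_zero hu]) x
    rw [Finset.sum_sub_distrib, Finset.sum_const, Finset.card_univ, nsmul_one] at hsum
    have hx' : (m : ℝ) ≤ centralCount (quarterPoint false) x := mod_cast hx
    have hmn' : (Fintype.card κ : ℝ) + 1 ≤ m + n := mod_cast hmn
    linarith

end Separation

section HomotopicWith

variable {f g : C(X, Y)} {P Q : C(X, Y) → Prop}

theorem homotopicWith_right (h : HomotopicWith f g P) : P g := by
  obtain ⟨F⟩ := h
  simpa only [F.toHomotopy.curry_one] using F.prop 1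

theorem homotopicWith_mono (h : HomotopicWith f g P) (hPQ : ∀ k, P k → Q k) :
    HomotopicWith f g Q := by
  obtain ⟨F⟩ := h
  exact ⟨⟨F.toHomotopy, fun t => hPQ _ (F.prop t)⟩⟩

theorem homotopicWith_comp_right {Z : Type*} [TopologicalSpace Z] {Q : C(Z, Y) → Prop}
    (h : HomotopicWith f g P) {ψ : C(Z, X)} (hPQ : ∀ k, P k → Q (k.comp ψ)) :
    HomotopicWith (f.comp ψ) (g.comp ψ) Q := by
  obtain ⟨F⟩ := h
  exact ⟨⟨⟨F.toContinuousMap.comp (.prodMap (.id I) ψ), fun z => F.apply_zero _,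
    fun z => F.apply_one _⟩, fun t => hPQ _ (F.prop t)⟩⟩

end HomotopicWith

section Pushing

variable {A B : Set X} {N : ℕ}

/-- The map of cubes `g` respects the position of `Φ` relative to the triad `(X; A, B)`: it sends
the top face to `B` if `Φ` does, and it sends any other face to `T` if `Φ` does, where `T` is either
`A` or a subset of `A ∩ B`. -/
structure FaceCompatible (A B : Set X) (Φ g : C(I^ Fin (N + 1), X)) : Prop where
  top : Set.MapsTo Φ (face 0 1) B → Set.MapsTo g (face 0 1) B
  side : ∀ i v, v = 0 ∨ v = 1 → i ≠ 0 ∨ v = 0 → ∀ T, T = A ∨ T ⊆ A ∩ B →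
    Set.MapsTo Φ (face i v) T → Set.MapsTo g (face i v) T

theorem FaceCompatible.trans {f g h : C(I^ Fin (N + 1), X)} (hfg : FaceCompatible A B f g)
    (hgh : FaceCompatible A B g h) : FaceCompatible A B f h where
  top hf := hgh.top (hfg.top hf)
  side i v hv hiv T hT hf := hgh.side i v hv hiv T hT (hfg.side i v hv hiv T hT hf)

/-- The two sets of points that `g` sends outside `B` and outside `A` remain disjoint, and are
separated by the function `τ`, after projecting along the first coordinate. -/
structure TailSeparated (A B : Set X) (τ : C(I^ Fin N, I)) (g : C(I^ Fin (N + 1), X)) : Prop where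
  eq_one : ∀ y, g y ∉ B → τ (Fin.tail y) = 1
  eq_zero : ∀ y, g y ∉ A → τ (Fin.tail y) = 0

theorem exists_tailSeparated {m n : ℕ} (hA : Compressible A (A ∩ B) n)
    (hB : Compressible B (A ∩ B) m) (hcover : interior A ∪ interior B = Set.univ) (hN : N < m + n)
    (Φ : C(I^ Fin (N + 1), X)) :
    ∃ g, HomotopicWith Φ g (FaceCompatible A B Φ) ∧ ∃ τ, TailSeparated A B τ g := by
  obtain ⟨τ, hτ1, hτ0⟩ := exists_separating_function (κ := Fin N) (by simpa using hN)
  obtain ⟨K, M, hK0, hKface, hK1⟩ := exists_cube_deformation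
    (S := fun b => bif b then A else B) (C := A ∩ B) (n := fun b => bif b then n else m)
    quarterPoint (Bool.forall_bool.2 ⟨hB, hA⟩)
    (by
      rintro (_ | _) (_ | _) hne
      exacts [absurd rfl hne, (Set.inter_comm B A).subset, subset_rfl, absurd rfl hne])
    (by rw [Set.union_eq_iUnion] at hcover; convert hcover using 3 with b; cases b <;> rfl) Φ
  have hmem (y : I^ Fin (N + 1)) : K (1, y) ∈ A ∪ B :=
    Set.union_subset_union interior_subset interior_subset (hcover ▸ Set.mem_univ _)
  refine ⟨K.curry 1, ⟨⟨⟨K, hK0, fun y => rfl⟩, fun t => ⟨fun hΦ => ?_, ?_⟩⟩⟩,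
    τ.comp (stretch M), fun y hy => hτ1 _ ?_, fun y hy => hτ0 _ ?_⟩
  · exact hKface 0 1 (.inr rfl) B (.inl ⟨false, rfl⟩) hΦ t
  · intro i v hv _ T hT hΦ
    exact hKface i v hv T (hT.imp (fun h => ⟨true, h.symm⟩) id) hΦ t
  · exact Nat.le_of_lt_succ <| (hK1 true y ((hmem y).resolve_right hy) fun h => hy h.2).trans_le
      (centralCount_le_centralCount_tail_add_one _)
  · exact Nat.le_of_lt_succ <| (hK1 false y ((hmem y).resolve_left hy) fun h => hy h.1).trans_le
      (centralCount_le_centralCount_tail_add_one _)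

/-- The map of the cube that multiplies the first coordinate `y 0` by `1 - t + t * τ (y 1, …)`. -/
def lowerHeight (τ : C(I^ Fin N, I)) : C(I × (I^ Fin (N + 1)), I^ Fin (N + 1)) :=
  ⟨fun z => Fin.cons (z.2 0 * unitInterval.symm (z.1 * unitInterval.symm (τ (Fin.tail z.2))))
      (Fin.tail z.2), by
    unfold Fin.tail
    fun_prop⟩

theorem tail_lowerHeight (τ : C(I^ Fin N, I)) (t : I) (y : I^ Fin (N + 1)) :
    Fin.tail (lowerHeight τ (t, y)) = Fin.tail y :=
  Fin.tail_cons _ _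

theorem lowerHeight_zero (τ : C(I^ Fin N, I)) (y : I^ Fin (N + 1)) : lowerHeight τ (0, y) = y := by
  simp [lowerHeight]

theorem lowerHeight_of_eq_one {τ : C(I^ Fin N, I)} (t : I) {y : I^ Fin (N + 1)}
    (hτ : τ (Fin.tail y) = 1) : lowerHeight τ (t, y) = y := by
  simp [lowerHeight, hτ]

theorem lowerHeight_mem_face {τ : C(I^ Fin N, I)} (t : I) {y : I^ Fin (N + 1)} {i : Fin (N + 1)}
    {v : I} (hiv : i ≠ 0 ∨ v = 0) (hy : y ∈ face i v) : lowerHeight τ (t, y) ∈ face i v := by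
  change y i = v at hy
  cases i using Fin.cases with
  | zero =>
    obtain rfl : v = 0 := hiv.resolve_left (not_not_intro rfl)
    simp [lowerHeight, face, hy]
  | succ i => exact hy

theorem lowerHeight_one_mem_face {τ : C(I^ Fin N, I)} {y : I^ Fin (N + 1)}
    (hτ : τ (Fin.tail y) = 0) : lowerHeight τ (1, y) ∈ face 0 0 := by
  simp [lowerHeight, face, hτ]

theorem TailSeparated.exists_homotopicWith {τ : C(I^ Fin N, I)} {f : C(I^ Fin (N + 1), X)}
    (hf : TailSeparated A B τ f) (hf0 : Set.MapsTo f (face 0 0) A)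
    (hf1 : Set.MapsTo f (face 0 1) B) :
    ∃ g, HomotopicWith f g (FaceCompatible A B f) ∧ ∀ y, g y ∈ A := by
  let F := f.comp (lowerHeight τ)
  have hF0 (y : I^ Fin (N + 1)) : F (0, y) = f y := congrArg f (lowerHeight_zero τ y)
  refine ⟨F.curry 1, ⟨⟨⟨F, hF0, fun y => rfl⟩, fun t => ⟨fun _ y hy => ?_, ?_⟩⟩⟩, fun y => ?_⟩
  · by_contra hB
    have hτ := hf.eq_one _ hB
    rw [tail_lowerHeight] at hτ
    refine hB (hf1 ?_)
    rwa [lowerHeight_of_eq_one t hτ]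
  · exact fun i v _ hiv T _ hfT y hy => hfT (lowerHeight_mem_face t hiv hy)
  · by_contra hA
    have hτ := hf.eq_zero _ hA
    rw [tail_lowerHeight] at hτ
    exact hA (hf0 (lowerHeight_one_mem_face hτ))

theorem exists_homotopicWith_forall_mem {m n : ℕ} (hA : Compressible A (A ∩ B) n)
    (hB : Compressible B (A ∩ B) m) (hcover : interior A ∪ interior B = Set.univ) (hN : N < m + n)
    {f : C(I^ Fin (N + 1), X)} (hf0 : Set.MapsTo f (face 0 0) A)
    (hf1 : Set.MapsTo f (face 0 1) B) :
    ∃ g, HomotopicWith f g (FaceCompatible A B f) ∧ ∀ y, g y ∈ A := by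
  obtain ⟨g, hfg, τ, hg⟩ := exists_tailSeparated hA hB hcover hN f
  have hcompat : FaceCompatible A B f g := homotopicWith_right hfg
  obtain ⟨h, hgh, hhA⟩ := hg.exists_homotopicWith
    (hcompat.side 0 0 (.inl rfl) (.inr rfl) A (.inl rfl) hf0) (hcompat.top hf1)
  exact ⟨h, hfg.trans (homotopicWith_mono hgh fun _ => hcompat.trans), hhA⟩

end Pushing

section Crush

variable {N : ℕ}

/-- Expansion of the real line about `v` by the factor `1 + s`. -/
def expand (v s u : ℝ) : ℝ := v + (1 + s) * (u - v)

/-- The distance of a real number from the unit interval. -/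
noncomputable def overshoot (u : ℝ) : ℝ := |u - clamp u|

theorem overshoot_nonneg (u : ℝ) : 0 ≤ overshoot u := abs_nonneg _

theorem overshoot_of_nonpos {u : ℝ} (hu : u ≤ 0) : overshoot u = -u := by
  rw [overshoot, clamp_of_nonpos hu, Set.Icc.coe_zero, sub_zero, abs_of_nonpos hu]

theorem overshoot_of_one_le {u : ℝ} (hu : 1 ≤ u) : overshoot u = u - 1 := by
  rw [overshoot, clamp_of_one_le hu, Set.Icc.coe_one, abs_of_nonneg (sub_nonneg.2 hu)]

theorem clamp_eq_zero_or_one_or_overshoot_eq_zero (u : ℝ) :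
    (clamp u = 0 ∨ clamp u = 1) ∨ overshoot u = 0 := by
  rcases le_total u 0 with h0 | h0
  · exact .inl (.inl (clamp_of_nonpos h0))
  rcases le_total 1 u with h1 | h1
  · exact .inl (.inr (clamp_of_one_le h1))
  · exact .inr (by rw [overshoot, coe_clamp_of_mem ⟨h0, h1⟩, sub_self, abs_zero])

theorem overshoot_coe (u : I) : overshoot u = 0 := by
  rw [overshoot, clamp_coe, sub_self, abs_zero]

/-- The homotopy of the cube that expands the last `N` coordinates about `1 / 2`, clamps them, and
lowers the first coordinate by twice the amount that was cut off. At time `1` it has moved `J` into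
the face `y 0 = 0`. -/
noncomputable def crushSides : C(I × (I^ Fin (N + 1)), I^ Fin (N + 1)) :=
  ⟨fun z => Fin.cons (clamp (z.2 0 - 2 * ∑ i, overshoot (expand (1 / 2) z.1 (z.2 (Fin.succ i)))))
      fun i => clamp (expand (1 / 2) z.1 (z.2 (Fin.succ i))), by
    unfold overshoot expand
    fun_prop⟩

/-- The homotopy of the cube that expands the first coordinate about `1`, clamps it, and lowers the
other coordinates by the amount that was cut off. At time `1` it has moved the face `y 0 = 0` to the
origin. -/
noncomputable def crushBottom : C(I × (I^ Fin (N + 1)), I^ Fin (N + 1)) :=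
  ⟨fun z => Fin.cons (clamp (expand 1 z.1 (z.2 0)))
      fun i => clamp (z.2 (Fin.succ i) - overshoot (expand 1 z.1 (z.2 0))), by
    unfold overshoot expand
    fun_prop⟩

theorem crushSides_zero (y : I^ Fin (N + 1)) : crushSides (0, y) = y := by
  refine funext (Fin.cases ?_ fun i => ?_) <;> simp [crushSides, expand, overshoot_coe, clamp_coe]

theorem crushBottom_zero (y : I^ Fin (N + 1)) : crushBottom (0, y) = y := by
  refine funext (Fin.cases ?_ fun i => ?_) <;> simp [crushBottom, expand, overshoot_coe, clamp_coe]

theorem mem_boundary_succ_iff {y : I^ Fin (N + 1)} :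
    y ∈ Cube.boundary (Fin (N + 1)) ↔
      (y 0 = 0 ∨ y 0 = 1) ∨ ∃ i : Fin N, y i.succ = 0 ∨ y i.succ = 1 :=
  Fin.exists_fin_succ

theorem clamp_expand_half_zero (s : I) : clamp (expand (1 / 2) s 0) = 0 :=
  clamp_of_nonpos (by unfold expand; linarith [s.2.1])

theorem clamp_expand_half_one (s : I) : clamp (expand (1 / 2) s 1) = 1 :=
  clamp_of_one_le (by unfold expand; linarith [s.2.1])

theorem crushSides_mem_boundary (s : I) {y : I^ Fin (N + 1)}
    (hy : y ∈ Cube.boundary (Fin (N + 1))) :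
    crushSides (s, y) ∈ Cube.boundary (Fin (N + 1)) := by
  rw [mem_boundary_succ_iff] at hy ⊢
  rcases hy with (h0 | h1) | ⟨i, h0 | h1⟩
  · refine .inl (.inl (clamp_of_nonpos ?_))
    simpa [h0] using Finset.sum_nonneg fun i _ => overshoot_nonneg _
  · by_cases hside : ∃ i : Fin N, crushSides (s, y) i.succ = 0 ∨ crushSides (s, y) i.succ = 1
    · exact .inr hside
    · refine .inl (.inr (clamp_of_one_le ?_))
      have hzero (i : Fin N) : overshoot (expand (1 / 2) s (y i.succ)) = 0 :=
        (clamp_eq_zero_or_one_or_overshoot_eq_zero _).resolve_left fun h => hside ⟨i, h⟩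
      dsimp only
      simp only [h1, hzero, Finset.sum_const_zero, mul_zero, sub_zero, Set.Icc.coe_one, le_refl]
  · exact .inr ⟨i, .inl (by simpa [crushSides, h0] using clamp_expand_half_zero s)⟩
  · exact .inr ⟨i, .inr (by simpa [crushSides, h1] using clamp_expand_half_one s)⟩

theorem crushBottom_mem_boundary (s : I) {y : I^ Fin (N + 1)}
    (hy : y ∈ Cube.boundary (Fin (N + 1))) :
    crushBottom (s, y) ∈ Cube.boundary (Fin (N + 1)) := by
  rw [mem_boundary_succ_iff] at hy ⊢
  rcases hy with (h0 | h1) | ⟨i, h0 | h1⟩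
  · exact .inl (.inl (clamp_of_nonpos (by simp [h0, expand, s.2.1])))
  · exact .inl (.inr (clamp_of_one_le (by simp [h1, expand])))
  · exact .inr ⟨i, .inl (clamp_of_nonpos (by simp [h0, overshoot_nonneg]))⟩
  · rcases clamp_eq_zero_or_one_or_overshoot_eq_zero (expand 1 s (y 0)) with h | h
    · exact .inl h
    · exact .inr ⟨i, .inr (by simp [crushBottom, h1, h, clamp_of_one_le])⟩

theorem crushSides_one_mem_face {y : I^ Fin (N + 1)} (hy : y ∈ JSet N) :
    crushSides (1, y) ∈ face 0 0 := by
  refine clamp_of_nonpos (sub_nonpos.2 ?_)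
  have hnonneg (i : Fin N) : 0 ≤ overshoot (expand (1 / 2) (1 : I) (y i.succ)) :=
    overshoot_nonneg _
  rcases hy with h0 | ⟨i, hi, h⟩
  · have hsum := Finset.sum_nonneg fun i (_ : i ∈ Finset.univ) => hnonneg i
    dsimp only
    rw [h0]
    simpa using hsum
  · obtain ⟨i, rfl⟩ := Fin.exists_succ_eq.2 hi
    have hcut : 1 / 2 = overshoot (expand (1 / 2) (1 : I) (y i.succ)) := by
      rcases h with h | h <;> rw [h]
      · rw [overshoot_of_nonpos] <;> norm_num [expand]
      · rw [overshoot_of_one_le] <;> norm_num [expand]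
    have hle := hcut.trans_le (Finset.single_le_sum (fun i _ => hnonneg i) (Finset.mem_univ i))
    linarith [(y 0).2.2]

theorem crushBottom_one_eq_zero {y : I^ Fin (N + 1)} (hy : y ∈ face 0 0) :
    crushBottom (1, y) = 0 := by
  have hy0 : y 0 = 0 := hy
  refine funext (Fin.cases (clamp_of_nonpos ?_) fun i => clamp_of_nonpos ?_)
  · simp [hy0, expand]
  · dsimp only
    rw [hy0, overshoot_of_nonpos] <;> norm_num [expand, (y i.succ).2.2]

theorem exists_crush (q : ℕ) : ∃ r : C(I × (I^ Fin (q + 1)), I^ Fin (q + 1)),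
    (∀ y, r (0, y) = y) ∧
      (∀ s, Set.MapsTo (fun y => r (s, y)) (Cube.boundary _) (Cube.boundary _)) ∧
      ∀ y ∈ JSet q, r (1, y) = 0 := by
  refine ⟨crushBottom.comp (.prodMk .fst crushSides), fun y => ?_, fun s y hy => ?_,
    fun y hy => ?_⟩
  · exact (congrArg (fun z => crushBottom (0, z)) (crushSides_zero y)).trans (crushBottom_zero y)
  · exact crushBottom_mem_boundary s (crushSides_mem_boundary s hy)
  · exact crushBottom_one_eq_zero (crushSides_one_mem_face hy)

end Crush

section RelativeHomotopyClasses

theorem relHomotopic_iff {q : ℕ} {A : Set X} {a : X} {f g : RelGenLoop q X A a} :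
    RelHomotopic f g ↔ HomotopicWith f.1 g.1 (· ∈ RelGenLoop q X A a) := by
  constructor
  · rintro ⟨H, h0, h1, hboundary, hJ⟩
    exact ⟨⟨⟨H, h0, h1⟩, fun t => ⟨hboundary t, hJ t⟩⟩⟩
  · rintro ⟨H⟩
    exact ⟨H.toContinuousMap, H.apply_zero, H.apply_one, fun t => (H.prop t).1,
      fun t => (H.prop t).2⟩

theorem equivalence_relHomotopic (q : ℕ) (A : Set X) (a : X) :
    Equivalence (@RelHomotopic X _ q A a) where
  refl f := relHomotopic_iff.2 (.refl f.1 f.2)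
  symm hfg := relHomotopic_iff.2 (relHomotopic_iff.1 hfg).symm
  trans hfg hgh := relHomotopic_iff.2 ((relHomotopic_iff.1 hfg).trans (relHomotopic_iff.1 hgh))

theorem relPi_mk_eq_mk_iff {q : ℕ} {A : Set X} {a : X} {f g : RelGenLoop q X A a} :
    (Quot.mk _ f : RelPi q X A a) = Quot.mk _ g ↔
      HomotopicWith f.1 g.1 (· ∈ RelGenLoop q X A a) :=
  (equivalence_relHomotopic q A a).quot_mk_eq_iff f g |>.trans relHomotopic_iff

end RelativeHomotopyClasses

section Compression

variable {A : Set X} {n : ℕ}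

theorem PairConnected.exists_homotopicWith_const_fin (h : PairConnected X A n) {q : ℕ}
    (hq : q + 1 ≤ n) {f : C(I^ Fin (q + 1), X)} (hf : Set.MapsTo f (Cube.boundary _) A) :
    ∃ a ∈ A, HomotopicWith f (.const _ a) fun g => Set.MapsTo g (Cube.boundary _) A := by
  obtain ⟨r, hr0, hr, hr1⟩ := exists_crush q
  let F : C(I × (I^ Fin (q + 1)), X) := f.comp r
  have hF0 (y : I^ Fin (q + 1)) : F (0, y) = f y := congrArg f (hr0 y)
  have hF (t : I) : Set.MapsTo (F.curry t) (Cube.boundary _) A := hf.comp (hr t)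
  have ha : f 0 ∈ A := hf ⟨0, .inl rfl⟩
  let loop : RelGenLoop q X A (f 0) := ⟨F.curry 1, hF 1, fun y hy => congrArg f (hr1 y hy)⟩
  let constLoop : RelGenLoop q X A (f 0) := ⟨.const _ (f 0), fun _ _ => ha, fun _ _ => rfl⟩
  have hloop : HomotopicWith loop.1 constLoop.1 (· ∈ RelGenLoop q X A (f 0)) :=
    relPi_mk_eq_mk_iff.1 ((h.2 q (f 0) ha hq).elim _ _)
  have hcrush : HomotopicWith f loop.1 fun g => Set.MapsTo g (Cube.boundary _) A :=
    ⟨⟨⟨F, hF0, fun _ => rfl⟩, hF⟩⟩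
  exact ⟨f 0, ha, hcrush.trans (homotopicWith_mono hloop fun _ hg => hg.1)⟩

theorem PairConnected.exists_homotopicWith_const (h : PairConnected X A n) {ι : Type} [Fintype ι]
    (hι : Fintype.card ι ≤ n) {f : C(I^ ι, X)} (hf : Set.MapsTo f (Cube.boundary ι) A) :
    ∃ a ∈ A, HomotopicWith f (.const _ a) fun g => Set.MapsTo g (Cube.boundary ι) A := by
  rcases hq : Fintype.card ι with _ | q
  · have := Fintype.card_eq_zero_iff.1 hq
    obtain ⟨a, ha, ⟨γ⟩⟩ := h.1 (f 0)
    refine ⟨a, ha, ⟨⟨⟨γ.toContinuousMap.comp .fst, fun y => ?_, fun _ => γ.target⟩,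
      fun t y hy => ?_⟩⟩⟩
    · exact γ.source.trans (congrArg f (Subsingleton.elim _ _))
    · exact isEmptyElim hy.choose
  · let e := Fintype.equivFinOfCardEq hq
    let reindex : C(I^ Fin (q + 1), I^ ι) := ⟨fun y => y ∘ e, by fun_prop⟩
    let reindexSymm : C(I^ ι, I^ Fin (q + 1)) := ⟨fun y => y ∘ e.symm, by fun_prop⟩
    have hreindex : Set.MapsTo reindex (Cube.boundary _) (Cube.boundary ι) :=
      fun y ⟨i, hi⟩ => ⟨e.symm i, by simpa [reindex] using hi⟩
    have hreindexSymm : Set.MapsTo reindexSymm (Cube.boundary ι) (Cube.boundary _) :=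
      fun y ⟨i, hi⟩ => ⟨e i, by simpa [reindexSymm] using hi⟩
    obtain ⟨a, ha, H⟩ :=
      h.exists_homotopicWith_const_fin (hq ▸ hι) (f := f.comp reindex) (hf.comp hreindex)
    have hf' : (f.comp reindex).comp reindexSymm = f := by
      ext y
      exact congrArg f (funext fun i => congrArg y (e.symm_apply_apply i))
    exact ⟨a, ha, hf' ▸ homotopicWith_comp_right H fun g hg => hg.comp hreindexSymm⟩

/-- The homeomorphism from the cube to the unit ball of the supremum norm, as a map into Euclidean
space. -/
def ballOfCube {ι : Type*} : C(I^ ι, ι → ℝ) :=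
  ⟨fun y i => 2 * y i - 1, by fun_prop⟩

/-- The left inverse of `ballOfCube` that clamps every coordinate. -/
noncomputable def cubeOfBall {ι : Type*} : C(ι → ℝ, I^ ι) :=
  ⟨fun z i => clamp ((z i + 1) / 2), by fun_prop⟩

variable {ι : Type*} [Fintype ι]

theorem norm_ballOfCube_le_one (y : I^ ι) : ‖ballOfCube y‖ ≤ 1 := by
  refine (pi_norm_le_iff_of_nonneg zero_le_one).2 fun i => abs_le.2 ⟨?_, ?_⟩ <;>
    simp only [ballOfCube, ContinuousMap.coe_mk] <;> linarith [(y i).2.1, (y i).2.2]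

theorem norm_ballOfCube_of_mem_boundary {y : I^ ι} (hy : y ∈ Cube.boundary ι) :
    ‖ballOfCube y‖ = 1 := by
  obtain ⟨i, hi⟩ := hy
  have habs : ‖ballOfCube y i‖ = 1 := by
    rcases hi with hi | hi <;> norm_num [ballOfCube, hi]
  exact le_antisymm (norm_ballOfCube_le_one y) (habs ▸ norm_le_pi_norm _ i)

theorem cubeOfBall_mem_boundary {z : ι → ℝ} (hz : ‖z‖ = 1) : cubeOfBall z ∈ Cube.boundary ι := by
  obtain ⟨i, hi⟩ : ∃ i, 1 ≤ |z i| := by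
    by_contra! hlt
    exact hz.not_lt ((pi_norm_lt_iff one_pos).2 hlt)
  rcases le_abs.1 hi with hi | hi
  · exact ⟨i, .inr (clamp_of_one_le (by linarith))⟩
  · exact ⟨i, .inl (clamp_of_nonpos (by linarith))⟩

theorem ballOfCube_cubeOfBall {z : ι → ℝ} (hz : ‖z‖ ≤ 1) : ballOfCube (cubeOfBall z) = z := by
  funext i
  obtain ⟨h0, h1⟩ := abs_le.1 ((norm_le_pi_norm z i).trans hz)
  simp only [ballOfCube, cubeOfBall, ContinuousMap.coe_mk]
  rw [coe_clamp_of_mem ⟨by linarith, by linarith⟩]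
  ring

theorem PairConnected.compressible {S C : Set X}
    (h : PairConnected (↥S) (Subtype.val ⁻¹' C) n) : Compressible S C n := by
  intro ι _ hι f hf hfS hfC
  have hball (y : I^ ι) : ballOfCube y ∈ Metric.closedBall (0 : ι → ℝ) 1 :=
    mem_closedBall_zero_iff.2 (norm_ballOfCube_le_one y)
  let f' : C(I^ ι, ↥S) := ⟨fun y => ⟨f (ballOfCube y), hfS (hball y)⟩,
    (hf.comp_continuous ballOfCube.continuous hball).subtype_mk _⟩
  obtain ⟨a, ha, ⟨H⟩⟩ := h.exists_homotopicWith_const hι (f := f') fun y hy =>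
    hfC (mem_sphere_zero_iff_norm.2 (norm_ballOfCube_of_mem_boundary hy))
  refine ⟨fun z => H (z.1, cubeOfBall z.2), by fun_prop, fun z _ => Subtype.property _, ?_, ?_, ?_⟩
  · exact fun z hz => H.prop z.1 (cubeOfBall_mem_boundary (mem_sphere_zero_iff_norm.1 hz.2))
  · intro z hz
    exact (congrArg Subtype.val (H.apply_zero _)).trans <|
      congrArg f (ballOfCube_cubeOfBall (mem_closedBall_zero_iff.1 hz))
  · exact fun z _ => Set.mem_of_eq_of_mem (congrArg Subtype.val (H.apply_one _)) ha

end Compression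

section LastSlice

variable {N : ℕ}

/-- The homeomorphism `(v, y) ↦ (y 0, …, y (N - 1), v)`. -/
def snocHomeomorph (N : ℕ) : (I × (I^ Fin N)) ≃ₜ I^ Fin (N + 1) where
  toEquiv := Fin.snocEquiv fun _ => I
  continuous_toFun := continuous_snd.finSnoc (A := fun _ => I) continuous_fst
  continuous_invFun := (continuous_apply _).prodMk (by unfold Fin.init; fun_prop)

/-- The restriction of `g` to the slice of the cube whose last coordinate is `v`. -/
def lastSlice (g : C(I^ Fin (N + 1), X)) (v : I) : C(I^ Fin N, X) :=
  g.comp (.curry (snocHomeomorph N : C(I × (I^ Fin N), I^ Fin (N + 1))) v)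

theorem lastSlice_init (g : C(I^ Fin (N + 1), X)) (w : I^ Fin (N + 1)) :
    lastSlice g (w (Fin.last N)) (Fin.init w) = g w :=
  congrArg g (Fin.snoc_init_self w)

theorem mapsTo_face_last_iff {g : C(I^ Fin (N + 1), X)} {v : I} {T : Set X} :
    Set.MapsTo g (face (Fin.last N) v) T ↔ ∀ y, lastSlice g v y ∈ T := by
  refine ⟨fun h y => h (Fin.snoc_last (α := fun _ => I) v y), fun h w hw => ?_⟩
  obtain rfl : w (Fin.last N) = v := hw
  exact lastSlice_init g w ▸ h (Fin.init w)

theorem mapsTo_face_castSucc_iff {g : C(I^ Fin (N + 1), X)} {i : Fin N} {u : I} {T : Set X} :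
    Set.MapsTo g (face i.castSucc u) T ↔ ∀ v, Set.MapsTo (lastSlice g v) (face i u) T :=
  ⟨fun h v y hy => h ((Fin.snoc_castSucc (α := fun _ => I) v y i).trans hy),
    fun h w hw => lastSlice_init g w ▸ h (w (Fin.last N)) (x := Fin.init w) hw⟩

theorem homotopicWith_lastSlice {f g : C(I^ Fin (N + 1), X)} {P : C(I^ Fin (N + 1), X) → Prop}
    {Q : C(I^ Fin N, X) → Prop} (h : HomotopicWith f g P) {v : I}
    (hPQ : ∀ k, P k → Q (lastSlice k v)) : HomotopicWith (lastSlice f v) (lastSlice g v) Q :=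
  homotopicWith_comp_right h hPQ

theorem homotopicWith_lastSlice_zero_one {g : C(I^ Fin (N + 1), X)} {Q : C(I^ Fin N, X) → Prop}
    (hQ : ∀ v, Q (lastSlice g v)) : HomotopicWith (lastSlice g 0) (lastSlice g 1) Q :=
  ⟨⟨⟨g.comp (snocHomeomorph N), fun _ => rfl, fun _ => rfl⟩, hQ⟩⟩

end LastSlice

section RelativeLoops

variable {A B : Set X} {a : X} {q : ℕ}

theorem mem_relGenLoop_iff (ha : a ∈ B) {f : C(I^ Fin (q + 1), X)} :
    f ∈ RelGenLoop q X B a ↔ Set.MapsTo f (face 0 1) B ∧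
      ∀ i v, v = 0 ∨ v = 1 → i ≠ 0 ∨ v = 0 → Set.MapsTo f (face i v) {a} := by
  constructor
  · refine fun hf => ⟨fun y hy => hf.1 y ⟨0, .inr hy⟩, fun i v hv hiv y hy => hf.2 y ?_⟩
    obtain rfl : y i = v := hy
    by_cases hi : i = 0
    · subst hi
      exact .inl (hiv.resolve_left (not_not_intro rfl))
    · exact .inr ⟨i, hi, hv⟩
  · rintro ⟨htop, hside⟩
    refine ⟨fun y ⟨i, hi⟩ => ?_, fun y hy => ?_⟩
    · by_cases hiv : i ≠ 0 ∨ y i = 0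
      · exact Set.mem_of_eq_of_mem (hside i (y i) hi hiv rfl) ha
      · obtain ⟨rfl, hy0⟩ : i = 0 ∧ y i ≠ 0 := by simpa using hiv
        exact htop (hi.resolve_left hy0)
    · rcases hy with h0 | ⟨i, hi, hy⟩
      · exact hside 0 0 (.inl rfl) (.inr rfl) h0
      · exact hside i (y i) hy (.inl hi) rfl

theorem FaceCompatible.mem_relGenLoop {f g : C(I^ Fin (q + 1), X)} (hfg : FaceCompatible A B f g)
    (ha : a ∈ A ∩ B) (hf : f ∈ RelGenLoop q X B a) : g ∈ RelGenLoop q X B a := by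
  rw [mem_relGenLoop_iff ha.2] at hf ⊢
  exact ⟨hfg.top hf.1, fun i v hv hiv =>
    hfg.side i v hv hiv {a} (.inr (Set.singleton_subset_iff.2 ha)) (hf.2 i v hv hiv)⟩

theorem FaceCompatible.lastSlice_mem_relGenLoop {f g : C(I^ Fin (q + 1 + 1), X)}
    (hfg : FaceCompatible A B f g) (ha : a ∈ A ∩ B)
    (hf : ∀ v, lastSlice f v ∈ RelGenLoop q X B a) (v : I) :
    lastSlice g v ∈ RelGenLoop q X B a := by
  simp only [mem_relGenLoop_iff ha.2] at hf ⊢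
  refine ⟨mapsTo_face_castSucc_iff.1 (hfg.top ?_) v, fun i u hu hiu =>
    mapsTo_face_castSucc_iff.1 (hfg.side i.castSucc u hu ?_ {a} ?_ ?_) v⟩
  · exact mapsTo_face_castSucc_iff.2 fun v => (hf v).1
  · exact hiu.imp_left (Fin.castSucc_ne_zero_iff.2 ·)
  · exact .inr (Set.singleton_subset_iff.2 ha)
  · exact mapsTo_face_castSucc_iff.2 fun v => (hf v).2 i u hu hiu

end RelativeLoops

section Excision

variable {A B : Set X} {a : X} {q m n : ℕ}

/-- A relative loop of `(X, B)` with image in `A`, as a relative loop of `(A, A ∩ B)`. -/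
def corestrictLoop (haA : a ∈ A) (f : RelGenLoop q X B a) (hf : ∀ y, f.1 y ∈ A) :
    RelGenLoop q A (Subtype.val ⁻¹' (A ∩ B)) ⟨a, haA⟩ :=
  ⟨⟨fun y => ⟨f.1 y, hf y⟩, f.1.continuous.subtype_mk hf⟩, fun y hy => ⟨hf y, f.2.1 y hy⟩,
    fun y hy => Subtype.ext (f.2.2 y hy)⟩

/-- The map of relative loops induced by the inclusion of pairs `(A, A ∩ B) → (X, B)`. -/
def includeLoop (haA : a ∈ A) :
    RelGenLoop q A (Subtype.val ⁻¹' (A ∩ B)) ⟨a, haA⟩ → RelGenLoop q X B a :=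
  RelGenLoop.push ⟨Subtype.val, continuous_subtype_val⟩ (fun _ hz => hz.2) rfl

/-- The map of relative homotopy groups induced by the inclusion of pairs
`(A, A ∩ B) → (X, B)`. -/
def excisionMap (haA : a ∈ A) :
    RelPi q A (Subtype.val ⁻¹' (A ∩ B)) ⟨a, haA⟩ → RelPi q X B a :=
  relPiMap ⟨Subtype.val, continuous_subtype_val⟩ (fun _ hz => hz.2) rfl

theorem homotopicWith_of_homotopicWith_includeLoop (haA : a ∈ A)
    {f g : RelGenLoop q A (Subtype.val ⁻¹' (A ∩ B)) ⟨a, haA⟩}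
    (h : HomotopicWith (includeLoop haA f).1 (includeLoop haA g).1
      fun k => k ∈ RelGenLoop q X B a ∧ ∀ y, k y ∈ A) :
    HomotopicWith f.1 g.1 (· ∈ RelGenLoop q A (Subtype.val ⁻¹' (A ∩ B)) ⟨a, haA⟩) := by
  obtain ⟨H⟩ := h
  have hHA (z : I × (I^ Fin (q + 1))) : H z ∈ A := (H.prop z.1).2 z.2
  exact ⟨⟨⟨⟨fun z => ⟨H z, hHA z⟩, H.continuous.subtype_mk hHA⟩,
    fun y => Subtype.ext (H.apply_zero y), fun y => Subtype.ext (H.apply_one y)⟩,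
    fun t => (corestrictLoop haA ⟨_, (H.prop t).1⟩ (H.prop t).2).2⟩⟩

theorem surjective_excisionMap (hA : Compressible A (A ∩ B) n) (hB : Compressible B (A ∩ B) m)
    (hcover : interior A ∪ interior B = Set.univ) (haA : a ∈ A) (haB : a ∈ B)
    (hq : q + 1 ≤ m + n) : Surjective (excisionMap (B := B) (q := q) haA) := by
  rintro ⟨f⟩
  obtain ⟨htop, hside⟩ := (mem_relGenLoop_iff haB).1 f.2
  obtain ⟨g, hfg, hgA⟩ := exists_homotopicWith_forall_mem hA hB hcover hq
    ((hside 0 0 (.inl rfl) (.inr rfl)).mono_right (Set.singleton_subset_iff.2 haA)) htop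
  have hloop (k : C(I^ Fin (q + 1), X)) (hk : FaceCompatible A B f.1 k) :
      k ∈ RelGenLoop q X B a :=
    hk.mem_relGenLoop ⟨haA, haB⟩ f.2
  refine ⟨Quot.mk _ (corestrictLoop haA ⟨g, hloop g (homotopicWith_right hfg)⟩ hgA), ?_⟩
  exact relPi_mk_eq_mk_iff.2 (homotopicWith_mono hfg hloop).symm

theorem homotopicWith_forall_mem_of_homotopicWith (hA : Compressible A (A ∩ B) n)
    (hB : Compressible B (A ∩ B) m) (hcover : interior A ∪ interior B = Set.univ)
    (ha : a ∈ A ∩ B) (hq : q + 1 < m + n) {f g : C(I^ Fin (q + 1), X)} (hfA : ∀ y, f y ∈ A)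
    (hgA : ∀ y, g y ∈ A) (hfg : HomotopicWith f g (· ∈ RelGenLoop q X B a)) :
    HomotopicWith f g fun k => k ∈ RelGenLoop q X B a ∧ ∀ y, k y ∈ A := by
  obtain ⟨H⟩ := hfg
  let Φ : C(I^ Fin (q + 1 + 1), X) := H.toContinuousMap.comp (snocHomeomorph (q + 1)).symm
  have hslice (v : I) : lastSlice Φ v = H.toHomotopy.curry v :=
    ContinuousMap.ext fun y => congrArg H ((snocHomeomorph (q + 1)).symm_apply_apply (v, y))
  have hΦ (v : I) : lastSlice Φ v ∈ RelGenLoop q X B a := hslice v ▸ H.prop v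
  have hΦ0 : lastSlice Φ 0 = f := (hslice 0).trans H.toHomotopy.curry_zero
  have hΦ1 : lastSlice Φ 1 = g := (hslice 1).trans H.toHomotopy.curry_one
  obtain ⟨Ψ, hΦΨ, hΨA⟩ := exists_homotopicWith_forall_mem hA hB hcover hq (f := Φ)
    (mapsTo_face_castSucc_iff.2 fun v y hy => Set.mem_of_eq_of_mem ((hΦ v).2 y (.inl hy)) ha.1)
    (mapsTo_face_castSucc_iff.2 fun v y hy => (hΦ v).1 y ⟨0, .inr hy⟩)
  have hend {v : I} (hv : v = 0 ∨ v = 1) (hvA : ∀ y, lastSlice Φ v y ∈ A) :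
      HomotopicWith (lastSlice Φ v) (lastSlice Ψ v)
        fun k => k ∈ RelGenLoop q X B a ∧ ∀ y, k y ∈ A :=
    homotopicWith_lastSlice hΦΨ fun k hk =>
      ⟨hk.lastSlice_mem_relGenLoop ha hΦ v, mapsTo_face_last_iff.1
        (hk.side _ v hv (.inl (Fin.last_pos.ne')) A (.inl rfl) (mapsTo_face_last_iff.2 hvA))⟩
  have hmiddle : HomotopicWith (lastSlice Ψ 0) (lastSlice Ψ 1)
      fun k => k ∈ RelGenLoop q X B a ∧ ∀ y, k y ∈ A :=
    homotopicWith_lastSlice_zero_one fun v =>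
      ⟨(homotopicWith_right hΦΨ).lastSlice_mem_relGenLoop ha hΦ v, fun y => hΨA _⟩
  rw [← hΦ0] at hfA ⊢
  rw [← hΦ1] at hgA ⊢
  exact ((hend (.inl rfl) hfA).trans hmiddle).trans (hend (.inr rfl) hgA).symm

theorem injective_excisionMap (hA : Compressible A (A ∩ B) n) (hB : Compressible B (A ∩ B) m)
    (hcover : interior A ∪ interior B = Set.univ) (haA : a ∈ A) (haB : a ∈ B)
    (hq : q + 1 < m + n) : Injective (excisionMap (B := B) (q := q) haA) := by
  rintro ⟨f⟩ ⟨g⟩ hfg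
  exact relPi_mk_eq_mk_iff.2 <| homotopicWith_of_homotopicWith_includeLoop haA <|
    homotopicWith_forall_mem_of_homotopicWith hA hB hcover ⟨haA, haB⟩ hq (fun y => (f.1 y).2)
      (fun y => (g.1 y).2) (relPi_mk_eq_mk_iff.1 hfg)

end Excision

/-- **Homotopy excision / Blakers–Massey.**  If `(X; A, B)` is an excisive triad with
`C = A ∩ B` nonempty, `(A, C)` is `n`-connected and `(B, C)` is `m`-connected, then the
inclusion `(A, C) → (X, B)` induces isomorphisms on relative homotopy groups in degrees
`< m + n` and a surjection in degree `m + n`. -/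
theorem homotopy_excision (A B : Set X) (m n : ℕ)
    (hcover : interior A ∪ interior B = Set.univ)
    (hne : (A ∩ B).Nonempty)
    (hAC : PairConnected (↥A) (Subtype.val ⁻¹' (A ∩ B)) n)
    (hBC : PairConnected (↥B) (Subtype.val ⁻¹' (A ∩ B)) m) :
    ∀ (a : X) (haA : a ∈ A), a ∈ B → ∀ q : ℕ,
      (q + 1 < m + n →
        Function.Bijective
          (relPiMap (q := q) (A := Subtype.val ⁻¹' (A ∩ B)) (B := B)
            (a := (⟨a, haA⟩ : ↥A)) (b := a)
            ⟨Subtype.val, continuous_subtype_val⟩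
            (fun z hz => hz.2) rfl)) ∧
      (q + 1 = m + n →
        Function.Surjective
          (relPiMap (q := q) (A := Subtype.val ⁻¹' (A ∩ B)) (B := B)
            (a := (⟨a, haA⟩ : ↥A)) (b := a)
            ⟨Subtype.val, continuous_subtype_val⟩
            (fun z hz => hz.2) rfl)) := by
  have hA := hAC.compressible
  have hB := hBC.compressible
  intro a haA haB q
  have hsurj (hq : q + 1 ≤ m + n) := surjective_excisionMap hA hB hcover haA haB hq
  exact ⟨fun hq => ⟨injective_excisionMap hA hB hcover haA haB hq, hsurj hq.le⟩,
    fun hq => hsurj hq.le⟩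

end Paper
end

section
/- For every n ≥ 1, the map SP^n(S²) → ℂP^n which sends the unordered n-tuple [a₁, …, a_n] of points of the Riemann sphere S² = ℂ ∪ {∞} to the projective class of the polynomial (x + a₁)(x + a₂)⋯(x + a_n) (with factors corresponding to a_i = ∞ omitted, lowering the degree) is a homeomorphism from the n-th symmetric product of S² onto complex projective n-space. -/
/-!
# Statement 12: `SP^n(S²) ≅ ℂP^n`

The Riemann sphere is the one-point compactification `OnePoint ℂ`, the symmetric product
`SP^n(X) = X^n/S_n` is a quotient by the permutation action, and `ℂP^n` is the space of
nonzero coefficient vectors `(c_0, …, c_n)` (polynomials of degree ≤ n) up to a nonzero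
scalar.  The map sends `[a₁, …, a_n]` to the class of `∏_{a_i ≠ ∞} (x + a_i)`.
-/

open scoped Topology
open Polynomial

noncomputable section

namespace Paper

/-- The `n`-th symmetric product `SP^n(X) = X^n / S_n`. -/
def SymmetricProduct (n : ℕ) (X : Type*) [TopologicalSpace X] : Type _ :=
  Quot (fun u v : Fin n → X => ∃ e : Equiv.Perm (Fin n), u = v ∘ e)

instance (n : ℕ) (X : Type*) [TopologicalSpace X] :
    TopologicalSpace (SymmetricProduct n X) :=
  inferInstanceAs (TopologicalSpace (Quot _))

/-- `ℂP^n` as the space of nonzero polynomials of degree at most `n` (coefficient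
vectors) up to multiplication by a nonzero scalar. -/
def CP (n : ℕ) : Type :=
  Quot (fun u v : {w : Fin (n + 1) → ℂ // w ≠ 0} => ∃ c : ℂ, c ≠ 0 ∧ u.1 = c • v.1)

instance (n : ℕ) : TopologicalSpace (CP n) :=
  inferInstanceAs (TopologicalSpace (Quot _))

/-- The polynomial `∏ (x + a_i)`, factors with `a_i = ∞` omitted. -/
def polyOf {n : ℕ} (a : Fin n → OnePoint ℂ) : Polynomial ℂ :=
  ∏ i : Fin n, Option.elim (a i) 1 fun c => Polynomial.X + Polynomial.C c

theorem polyOf_monic {n : ℕ} (a : Fin n → OnePoint ℂ) : (polyOf a).Monic := by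
  refine Polynomial.monic_prod_of_monic _ _ fun i _ => ?_
  cases h : a i with
  | infty => exact monic_one
  | coe c => exact monic_X_add_C c

theorem polyOf_natDegree_le {n : ℕ} (a : Fin n → OnePoint ℂ) :
    (polyOf a).natDegree ≤ n := by
  have h1 := Polynomial.natDegree_prod_le (Finset.univ : Finset (Fin n))
    (fun i => Option.elim (a i) 1 fun c => Polynomial.X + Polynomial.C c)
  have h2 : ∑ i : Fin n,
      (Option.elim (a i) 1 fun c => Polynomial.X + Polynomial.C c).natDegree
      ≤ ∑ _i : Fin n, 1 := by
    refine Finset.sum_le_sum fun i _ => ?_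
    cases h : a i with
    | infty =>
        show (1 : Polynomial ℂ).natDegree ≤ 1
        simp
    | coe c =>
        show (Polynomial.X + Polynomial.C c).natDegree ≤ 1
        simp [Polynomial.natDegree_X_add_C]
  have := le_trans h1 h2
  simpa [polyOf] using this

/-- The coefficient vector of `∏ (x + a_i)`. -/
def coeffVec {n : ℕ} (a : Fin n → OnePoint ℂ) : {w : Fin (n + 1) → ℂ // w ≠ 0} :=
  ⟨fun k => (polyOf a).coeff k, by
    intro h0
    have h1 : (polyOf a).coeff (polyOf a).natDegree = 1 := polyOf_monic a
    have h2 : (polyOf a).coeff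
        ((⟨(polyOf a).natDegree, Nat.lt_succ_of_le (polyOf_natDegree_le a)⟩ : Fin (n+1)) : ℕ)
          = 0 := congrFun h0 _
    rw [show ((⟨(polyOf a).natDegree, Nat.lt_succ_of_le (polyOf_natDegree_le a)⟩ :
        Fin (n+1)) : ℕ) = (polyOf a).natDegree from rfl] at h2
    rw [h1] at h2
    exact one_ne_zero h2⟩

/-!
The map is a continuous bijection from a compact space to a Hausdorff one.  It is bijective because
over `ℂ` a nonzero polynomial of degree at most `n` is determined up to a scalar by its `n` roots,
where `∞` counts as a root of multiplicity `n - deg`.  It is continuous because near any point of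
the sphere the linear factor `x + c` becomes continuous after multiplication by a nonzero scalar:
near `∞` the scalar `c⁻¹` gives `c⁻¹ x + 1`, which tends to the factor `1` attached to `∞`.
-/

section Tuples

variable {ι X : Type*}

theorem exists_perm_eq_comp_of_map_univ_eq [Fintype ι] {a b : ι → X}
    (h : Finset.univ.val.map a = Finset.univ.val.map b) : ∃ e : Equiv.Perm ι, a = b ∘ e := by
  classical
  have fibers_equiv (x : X) : Nonempty ({i // a i = x} ≃ {i // b i = x}) := by
    refine ⟨Fintype.equivOfCardEq ?_⟩
    have hcount := congrArg (Multiset.count x) h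
    simp only [Multiset.count_map, eq_comm (a := x)] at hcount
    rwa [Fintype.card_subtype, Fintype.card_subtype]
  let e (x : X) := (fibers_equiv x).some
  exact ⟨Equiv.ofFiberEquiv e, funext fun i => (Equiv.ofFiberEquiv_map e i).symm⟩

theorem exists_map_univ_eq_of_card_eq {n : ℕ} {M : Multiset X} (h : M.card = n) :
    ∃ a : Fin n → X, Finset.univ.val.map a = M := by
  obtain ⟨l, rfl⟩ := Quot.exists_rep M
  subst h
  exact ⟨l.get, (Fin.univ_val_map l.get).trans (congrArg _ (List.ofFn_get l))⟩

end Tuples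

section LinearFactor

variable {R : Type*}

/-- The monic linear polynomial `X + c` attached to a point `c` of the projective line over `R`,
read as `1` for `c = ∞`; `polyOf a` is the product of the `linearFactor (a i)`. -/
def linearFactor [Semiring R] (z : OnePoint R) : R[X] :=
  z.elim 1 fun c => X + C c

@[simp]
theorem linearFactor_infty [Semiring R] : linearFactor (OnePoint.infty : OnePoint R) = 1 := rfl

@[simp]
theorem linearFactor_coe [Semiring R] (c : R) : linearFactor (c : OnePoint R) = X + C c := rfl

theorem monic_linearFactor [Semiring R] (z : OnePoint R) : (linearFactor z).Monic := by
  cases z with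
  | infty => exact monic_one
  | coe c => exact monic_X_add_C c

theorem polyOf_eq_multiset_prod {n : ℕ} (a : Fin n → OnePoint ℂ) :
    polyOf a = ((Finset.univ.val.map a).map linearFactor).prod := by
  rw [Multiset.map_map]
  rfl

variable [CommRing R] [IsDomain R]

/-- The multiset of all `-r`, for `r` a root of `p` viewed as a form of degree `n`: the roots in `R`
are completed by copies of `∞` to a multiset with `n` elements (`p` is meant to have degree at most
`n`).  Up to a scalar, it inverts `M ↦ (M.map linearFactor).prod` on multisets with `n` elements. -/
def projectiveNegRoots (n : ℕ) (p : R[X]) : Multiset (OnePoint R) :=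
  p.roots.map (fun r => ((-r : R) : OnePoint R)) +
    Multiset.replicate (n - p.roots.card) OnePoint.infty

theorem card_projectiveNegRoots {n : ℕ} {p : R[X]} (h : p.natDegree ≤ n) :
    (projectiveNegRoots n p).card = n := by
  have := (card_roots' p).trans h
  simp [projectiveNegRoots, this]

theorem projectiveNegRoots_prod_linearFactor (M : Multiset (OnePoint R)) :
    projectiveNegRoots M.card (M.map linearFactor).prod = M := by
  induction M using Multiset.induction_on with
  | empty => simp [projectiveNegRoots]
  | cons z M ih =>
    have hmonic : (M.map linearFactor).prod.Monic :=
      monic_multiset_prod_of_monic _ _ fun z _ => monic_linearFactor z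
    have hcard : (M.map linearFactor).prod.roots.card ≤ M.card := by
      rw [← Multiset.card_map, ← congrArg Multiset.card ih]
      exact Multiset.card_le_card (Multiset.le_add_right _ _)
    simp only [projectiveNegRoots, Multiset.map_cons, Multiset.prod_cons, Multiset.card_cons]
    cases z with
    | infty =>
      rw [linearFactor_infty, one_mul, Nat.succ_sub hcard, Multiset.replicate_succ,
        Multiset.add_cons]
      exact congrArg _ ih
    | coe c =>
      rw [linearFactor_coe, roots_mul ((monic_X_add_C c).mul hmonic).ne_zero, roots_X_add_C,
        Multiset.map_add, Multiset.map_singleton, neg_neg, Multiset.card_add,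
        Multiset.card_singleton, Nat.add_comm 1, Nat.add_sub_add_right, add_assoc,
        Multiset.singleton_add]
      exact congrArg _ ih

theorem eq_of_prod_linearFactor_eq {M N : Multiset (OnePoint R)} (hcard : M.card = N.card)
    (hprod : (M.map linearFactor).prod = (N.map linearFactor).prod) : M = N := by
  rw [← projectiveNegRoots_prod_linearFactor M, hcard, hprod, projectiveNegRoots_prod_linearFactor]

theorem leadingCoeff_smul_prod_linearFactor_projectiveNegRoots (n : ℕ) {p : R[X]}
    (h : p.roots.card = p.natDegree) :
    p.leadingCoeff • ((projectiveNegRoots n p).map linearFactor).prod = p := by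
  conv_rhs => rw [← C_leadingCoeff_mul_prod_multiset_X_sub_C h]
  simp [projectiveNegRoots, smul_eq_C_mul, sub_eq_add_neg, Function.comp_def]

end LinearFactor

section CoefficientVectors

variable {n : ℕ}

theorem coe_coeffVec (a : Fin n → OnePoint ℂ) : (coeffVec a).1 = toFn (n + 1) (polyOf a) := rfl

theorem ofFn_coeffVec (a : Fin n → OnePoint ℂ) : ofFn (n + 1) (coeffVec a).1 = polyOf a :=
  ofFn_comp_toFn_eq_id_of_natDegree_lt (Nat.lt_succ_of_le (polyOf_natDegree_le a))

theorem coeffVec_comp_perm (a : Fin n → OnePoint ℂ) (e : Equiv.Perm (Fin n)) :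
    coeffVec (a ∘ e) = coeffVec a := by
  have hpoly : polyOf (a ∘ e) = polyOf a := Equiv.prod_comp e fun i => linearFactor (a i)
  exact Subtype.ext (by rw [coe_coeffVec, hpoly, coe_coeffVec])

theorem polyOf_eq_of_coeffVec_eq_smul {a b : Fin n → OnePoint ℂ} {c : ℂ}
    (h : (coeffVec a).1 = c • (coeffVec b).1) : polyOf a = polyOf b := by
  have hsmul : polyOf a = C c * polyOf b := by
    rw [← ofFn_coeffVec a, h, map_smul, ofFn_coeffVec, smul_eq_C_mul]
  have hc : 1 = c := by
    simpa [(polyOf_monic a).leadingCoeff, (polyOf_monic b).leadingCoeff] using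
      congrArg leadingCoeff hsmul
  rw [hsmul, ← hc, C_1, one_mul]

theorem exists_perm_of_coeffVec_eq_smul {a b : Fin n → OnePoint ℂ} {c : ℂ}
    (h : (coeffVec a).1 = c • (coeffVec b).1) : ∃ e : Equiv.Perm (Fin n), a = b ∘ e := by
  have hpoly := polyOf_eq_of_coeffVec_eq_smul h
  rw [polyOf_eq_multiset_prod, polyOf_eq_multiset_prod] at hpoly
  exact exists_perm_eq_comp_of_map_univ_eq (eq_of_prod_linearFactor_eq (by simp) hpoly)

theorem exists_eq_smul_coeffVec {w : Fin (n + 1) → ℂ} (hw : w ≠ 0) :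
    ∃ a : Fin n → OnePoint ℂ, ∃ c : ℂ, c ≠ 0 ∧ w = c • (coeffVec a).1 := by
  set p : ℂ[X] := ofFn (n + 1) w with hp
  have hp0 : p ≠ 0 := (map_ne_zero_iff _ (injective_ofFn (n + 1))).2 hw
  have hdeg : p.natDegree ≤ n := Nat.le_of_lt_succ (ofFn_natDegree_lt n.succ_pos w)
  have hroots : p.roots.card = p.natDegree := splits_iff_card_roots.1 (IsAlgClosed.splits p)
  obtain ⟨a, ha⟩ := exists_map_univ_eq_of_card_eq (card_projectiveNegRoots hdeg)
  refine ⟨a, p.leadingCoeff, leadingCoeff_ne_zero.2 hp0, ?_⟩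
  rw [coe_coeffVec, ← map_smul, polyOf_eq_multiset_prod, ha,
    leadingCoeff_smul_prod_linearFactor_projectiveNegRoots n hroots, hp, toFn_comp_ofFn_eq_id]

end CoefficientVectors

section Proportionality

theorem equivalence_exists_eq_smul (G V : Type*) [GroupWithZero G] [MulAction G V] :
    Equivalence fun u v : V => ∃ c : G, c ≠ 0 ∧ u = c • v where
  refl u := ⟨1, one_ne_zero, (one_smul G u).symm⟩
  symm := by
    rintro u v ⟨c, hc, rfl⟩
    exact ⟨c⁻¹, inv_ne_zero hc, (inv_smul_smul₀ hc v).symm⟩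
  trans := by
    rintro u v w ⟨c, hc, rfl⟩ ⟨d, hd, rfl⟩
    exact ⟨c * d, mul_ne_zero hc hd, (mul_smul c d w).symm⟩

theorem exists_eq_smul_iff_forall_mul_eq_mul {ι K : Type*} [Field K] {u v : ι → K}
    (hu : u ≠ 0) (hv : v ≠ 0) :
    (∃ c : K, c ≠ 0 ∧ u = c • v) ↔ ∀ i j, u i * v j = u j * v i := by
  constructor
  · rintro ⟨c, -, rfl⟩ i j
    simp only [Pi.smul_apply, smul_eq_mul]
    ring
  · intro h
    obtain ⟨j, hj⟩ := Function.ne_iff.1 hv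
    have hsmul : u = (u j / v j) • v := by
      funext i
      rw [Pi.smul_apply, smul_eq_mul, div_mul_eq_mul_div, eq_div_iff hj, h i j]
    refine ⟨u j / v j, fun hzero => hu ?_, hsmul⟩
    rw [hsmul, hzero, zero_smul]

end Proportionality

/-- The nonzero vectors of `ℂ^(n+1)`, that is, the systems of homogeneous coordinates on `ℂP^n`. -/
abbrev HomogeneousCoordinates (n : ℕ) : Type :=
  {w : Fin (n + 1) → ℂ // w ≠ 0}

namespace CP

variable {n : ℕ}

/-- The point of `ℂP^n` with homogeneous coordinates `w`. -/
def mk (w : HomogeneousCoordinates n) : CP n :=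
  Quot.mk _ w

theorem mk_eq_mk_iff {u v : HomogeneousCoordinates n} :
    mk u = mk v ↔ ∃ c : ℂ, c ≠ 0 ∧ u.1 = c • v.1 :=
  ((equivalence_exists_eq_smul ℂ (Fin (n + 1) → ℂ)).comap Subtype.val).quot_mk_eq_iff u v

theorem continuous_mk : Continuous (mk : _ → CP n) :=
  continuous_quot_mk

theorem isOpenMap_mk : IsOpenMap (mk : _ → CP n) := by
  intro U hU
  let scale (c : ℂˣ) (w : HomogeneousCoordinates n) : HomogeneousCoordinates n :=
    ⟨c • w.1, (smul_ne_zero_iff_ne c).2 w.2⟩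
  have hscale (c : ℂˣ) : Continuous (scale c) :=
    (continuous_subtype_val.const_smul c).subtype_mk _
  have hpreimage : mk ⁻¹' (mk '' U) = ⋃ c : ℂˣ, scale c ⁻¹' U := by
    ext w
    simp only [Set.mem_preimage, Set.mem_image, Set.mem_iUnion]
    constructor
    · rintro ⟨u, hu, huw⟩
      obtain ⟨c, hc, h⟩ := mk_eq_mk_iff.1 huw
      refine ⟨Units.mk0 c hc, ?_⟩
      rwa [show scale (Units.mk0 c hc) w = u from Subtype.ext h.symm]
    · rintro ⟨c, hc⟩
      exact ⟨scale c w, hc, mk_eq_mk_iff.2 ⟨c, c.ne_zero, rfl⟩⟩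
  change IsOpen (mk ⁻¹' (mk '' U))
  rw [hpreimage]
  exact isOpen_iUnion fun c => hU.preimage (hscale c)

theorem isOpenQuotientMap_mk : IsOpenQuotientMap (mk : _ → CP n) :=
  ⟨Quot.mk_surjective, continuous_mk, isOpenMap_mk⟩

instance t2Space : T2Space (CP n) := by
  have hcoord (i : Fin (n + 1)) : Continuous fun w : HomogeneousCoordinates n => w.1 i :=
    (continuous_apply i).comp continuous_subtype_val
  have hset : {q : HomogeneousCoordinates n × HomogeneousCoordinates n | mk q.1 = mk q.2} =
      ⋂ i, ⋂ j, {q | q.1.1 i * q.2.1 j = q.1.1 j * q.2.1 i} := by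
    ext q
    simp only [Set.mem_iInter, Set.mem_ofPred_eq, mk_eq_mk_iff,
      exists_eq_smul_iff_forall_mul_eq_mul q.1.2 q.2.2]
  rw [t2Space_iff_of_isOpenQuotientMap isOpenQuotientMap_mk, hset]
  exact isClosed_iInter fun i => isClosed_iInter fun j =>
    isClosed_eq ((hcoord i).fst'.mul (hcoord j).snd') ((hcoord j).fst'.mul (hcoord i).snd')

theorem continuousAt_mk_of_smul {T : Type*} [TopologicalSpace T] {t₀ : T}
    {f : T → HomogeneousCoordinates n} {s : T → ℂ} (hs : ∀ t, s t ≠ 0)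
    (h : ContinuousAt (fun t => s t • (f t).1) t₀) : ContinuousAt (fun t => mk (f t)) t₀ := by
  let g (t : T) : HomogeneousCoordinates n := ⟨s t • (f t).1, smul_ne_zero (hs t) (f t).2⟩
  have hg : ContinuousAt g t₀ := Topology.IsInducing.subtypeVal.continuousAt_iff.2 h
  have hfg : (fun t => mk (f t)) = fun t => mk (g t) :=
    funext fun t => (mk_eq_mk_iff.2 ⟨s t, hs t, rfl⟩).symm
  rw [hfg]
  exact continuous_mk.continuousAt.comp hg

end CP

section Continuity

theorem continuousAt_coeff_prod {R T ι : Type*} [CommSemiring R] [TopologicalSpace R]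
    [IsTopologicalSemiring R] [TopologicalSpace T] {s : Finset ι} {F : ι → T → R[X]} {t : T}
    (h : ∀ i ∈ s, ∀ k, ContinuousAt (fun x => (F i x).coeff k) t) (k : ℕ) :
    ContinuousAt (fun x => (∏ i ∈ s, F i x).coeff k) t := by
  classical
  induction s using Finset.induction_on generalizing k with
  | empty => simpa using continuousAt_const
  | insert i s hi ih =>
    rw [Finset.forall_mem_insert] at h
    simp only [Finset.prod_insert hi, coeff_mul]
    exact tendsto_finsetSum _ fun p _ => (h.1 p.1).mul (ih h.2 p.2)

theorem continuousAt_coeff_linearFactor_coe {R : Type*} [Semiring R] [TopologicalSpace R]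
    (c : R) (k : ℕ) :
    ContinuousAt (fun z : OnePoint R => (linearFactor z).coeff k) (c : OnePoint R) := by
  rw [OnePoint.continuousAt_coe]
  cases k with
  | zero => simpa [Function.comp_def] using continuousAt_id' c
  | succ k => simpa [Function.comp_def] using continuousAt_const

variable {K : Type*} [NormedDivisionRing K]

theorem tendsto_coeff_inv_smul_linearFactor (k : ℕ) :
    Filter.Tendsto (fun c : K => (c⁻¹ • linearFactor (c : OnePoint K)).coeff k)
      (Bornology.cobounded K) (𝓝 ((linearFactor (OnePoint.infty : OnePoint K)).coeff k)) := by
  have hlim : Filter.Tendsto (fun c : K => c⁻¹ * (X : K[X]).coeff k + (1 : K[X]).coeff k)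
      (Bornology.cobounded K) (𝓝 ((1 : K[X]).coeff k)) := by
    simpa using (Filter.tendsto_inv₀_cobounded.mul_const ((X : K[X]).coeff k)).add_const
      ((1 : K[X]).coeff k)
  refine hlim.congr' ?_
  filter_upwards [Bornology.eventually_ne_cobounded 0] with c hc
  rw [linearFactor_coe, smul_add, smul_C, smul_eq_mul, inv_mul_cancel₀ hc, C_1, coeff_add,
    coeff_smul, smul_eq_mul]

theorem exists_smul_linearFactor_continuousAt [ProperSpace K] (z : OnePoint K) :
    ∃ s : OnePoint K → K, (∀ y, s y ≠ 0) ∧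
      ∀ k, ContinuousAt (fun y => (s y • linearFactor y).coeff k) z := by
  classical
  cases z with
  | coe c =>
    exact ⟨fun _ => 1, fun _ => one_ne_zero, by
      simpa only [one_smul] using continuousAt_coeff_linearFactor_coe c⟩
  | infty =>
    let s (y : OnePoint K) : K := y.elim 1 fun c => if c = 0 then 1 else c⁻¹
    have hs_coe {c : K} (hc : c ≠ 0) : s c = c⁻¹ := if_neg hc
    refine ⟨s, fun y => ?_, fun k => ?_⟩
    · cases y with
      | infty => exact one_ne_zero
      | coe c =>
        by_cases hc : c = 0
        · simp [s, hc]
        · exact hs_coe hc ▸ inv_ne_zero hc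
    · rw [OnePoint.continuousAt_infty', Filter.coclosedCompact_eq_cocompact,
        ← Metric.cobounded_eq_cocompact, show s OnePoint.infty = 1 from rfl, one_smul]
      refine (tendsto_coeff_inv_smul_linearFactor k).congr' ?_
      filter_upwards [Bornology.eventually_ne_cobounded 0] with c hc
      rw [Function.comp_apply, hs_coe hc]

theorem continuous_mk_coeffVec (n : ℕ) :
    Continuous fun a : Fin n → OnePoint ℂ => CP.mk (coeffVec a) := by
  refine continuous_iff_continuousAt.2 fun a₀ => ?_
  choose s hs hcont using fun i => exists_smul_linearFactor_continuousAt (a₀ i)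
  refine CP.continuousAt_mk_of_smul (s := fun a => ∏ i, s i (a i))
    (fun a => Finset.prod_ne_zero_iff.2 fun i _ => hs i (a i)) (continuousAt_pi.2 fun k => ?_)
  have hcoeff (a : Fin n → OnePoint ℂ) :
      ((∏ i, s i (a i)) • (coeffVec a).1) k =
        (∏ i, s i (a i) • linearFactor (a i)).coeff k := by
    rw [Finset.prod_smul, coeff_smul]
    rfl
  simp only [hcoeff]
  exact continuousAt_coeff_prod
    (fun i _ j => (hcont i j).comp (f := fun a : Fin n → OnePoint ℂ => a i)
      (continuousAt_apply i a₀)) k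

end Continuity

namespace SymmetricProduct

instance compactSpace (n : ℕ) (X : Type*) [TopologicalSpace X] [CompactSpace X] :
    CompactSpace (SymmetricProduct n X) :=
  inferInstanceAs (CompactSpace (Quot _))

/-- The map `SP^n(S²) → ℂP^n`, `[a₁, …, a_n] ↦ [(x + a₁)⋯(x + a_n)]`. -/
def toCP (n : ℕ) : SymmetricProduct n (OnePoint ℂ) → CP n :=
  Quot.lift (fun a => CP.mk (coeffVec a)) (by
    rintro _ a ⟨e, rfl⟩
    exact congrArg CP.mk (coeffVec_comp_perm a e))

theorem continuous_toCP (n : ℕ) : Continuous (toCP n) :=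
  continuous_quot_lift _ (continuous_mk_coeffVec n)

theorem toCP_injective (n : ℕ) : Function.Injective (toCP n) := by
  rintro ⟨a⟩ ⟨b⟩ h
  obtain ⟨c, -, hc⟩ := CP.mk_eq_mk_iff.1 h
  exact Quot.sound (exists_perm_of_coeffVec_eq_smul hc)

theorem toCP_surjective (n : ℕ) : Function.Surjective (toCP n) := by
  rintro ⟨w⟩
  obtain ⟨a, c, hc, hw⟩ := exists_eq_smul_coeffVec w.2
  exact ⟨Quot.mk _ a, (CP.mk_eq_mk_iff.2 ⟨c, hc, hw⟩).symm⟩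

end SymmetricProduct

/-- **Statement 12.**  For every `n ≥ 1`, the map
`SP^n(S²) → ℂP^n`, `[a₁, …, a_n] ↦ [(x + a₁)⋯(x + a_n)]` (with `∞`-factors omitted),
is a homeomorphism. -/
theorem symmetricProduct_riemannSphere_homeo (n : ℕ) (hn : 1 ≤ n) :
    ∃ h : SymmetricProduct n (OnePoint ℂ) ≃ₜ CP n,
      ∀ a : Fin n → OnePoint ℂ, h (Quot.mk _ a) = Quot.mk _ (coeffVec a) := by
  let toEquiv := Equiv.ofBijective (SymmetricProduct.toCP n)
    ⟨SymmetricProduct.toCP_injective n, SymmetricProduct.toCP_surjective n⟩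
  have hcont : Continuous toEquiv := SymmetricProduct.continuous_toCP n
  exact ⟨hcont.homeoOfEquivCompactToT2, fun _ => rfl⟩

end Paper
end
end

section
/- (Product Neighborhood Theorem) Let N be a compact framed submanifold of codimension p of a boundaryless smooth manifold M, with framing ν. Then some neighborhood of N in M is diffeomorphic to N × ℝ^p; moreover the diffeomorphism can be chosen so that each x ∈ N corresponds to (x, 0) ∈ N × ℝ^p and so that the normal frame ν(x) corresponds to the standard basis of ℝ^p. -/
/-!
# Statement 15: The product neighborhood theorem

Manifolds are formalized as smooth submanifolds (local regular level sets) of an ambient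
real inner-product space, with the Riemannian metric induced from the ambient space;
a framing of `N ⊆ M` of codimension `p` is a smooth field of bases of the orthogonal
complement of `T_xN` inside `T_xM`.
-/

open scoped RealInnerProductSpace Topology Topology.Homotopy unitInterval
open Function Set Metric

noncomputable section

namespace Paper


variable {E : Type*} [NormedAddCommGroup E] [InnerProductSpace ℝ E]

/-- The tangent space of a subset `M ⊆ E` at `x`: the span of all velocity vectors at
`x` of curves lying in `M`. -/
def SubTangent {E' : Type*} [NormedAddCommGroup E'] [NormedSpace ℝ E']
    (M : Set E') (x : E') : Submodule ℝ E' :=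
  Submodule.span ℝ {v | ∃ γ : ℝ → E', (∀ t, γ t ∈ M) ∧ γ 0 = x ∧ HasDerivAt γ v 0}

/-- Smoothness of a map on a subset: local extendability to smooth maps on open sets. -/
def SmoothOnSet {E' G : Type*} [NormedAddCommGroup E'] [NormedSpace ℝ E']
    [NormedAddCommGroup G] [NormedSpace ℝ G] (f : E' → G) (N : Set E') : Prop :=
  ∀ x ∈ N, ∃ (U : Set E') (g : E' → G), IsOpen U ∧ x ∈ U ∧
    ContDiffOn ℝ (⊤ : ℕ∞) g U ∧ Set.EqOn f g (N ∩ U)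

/-- `M` is a smooth `m`-dimensional submanifold (without boundary) of `E'`:
locally a regular level set of a smooth submersion. -/
def IsSubmanifold {E' : Type*} [NormedAddCommGroup E'] [NormedSpace ℝ E']
    (M : Set E') (m : ℕ) : Prop :=
  ∀ x ∈ M, ∃ (U : Set E')
      (Φ : E' → EuclideanSpace ℝ (Fin (Module.finrank ℝ E' - m))),
    IsOpen U ∧ x ∈ U ∧ ContDiffOn ℝ (⊤ : ℕ∞) Φ U ∧
    (∀ y ∈ U, Function.Surjective (fderiv ℝ Φ y)) ∧
    U ∩ M = U ∩ Φ ⁻¹' {0}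

/-- `L` is a derivative of `f` at `x ∈ M` along `M` (the derivative of a local smooth
extension of `f|_M`). -/
def HasDerivOn {E' G : Type*} [NormedAddCommGroup E'] [NormedSpace ℝ E']
    [NormedAddCommGroup G] [NormedSpace ℝ G]
    (f : E' → G) (M : Set E') (x : E') (L : E' →L[ℝ] G) : Prop :=
  ∃ g : E' → G, (∀ᶠ y in nhds x, y ∈ M → f y = g y) ∧ f x = g x ∧ HasFDerivAt g L x

/-- A framing of a submanifold `N ⊆ M` of codimension `p`: a smooth field of
bases of the orthogonal complement of `T_xN` inside `T_xM`. -/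
structure IsFraming (M : Set E) (N : Set E) (p : ℕ) (ν : Fin p → E → E) : Prop where
  smooth : ∀ i, SmoothOnSet (ν i) N
  mem_tangent : ∀ i, ∀ x ∈ N, ν i x ∈ SubTangent M x
  orth : ∀ i, ∀ x ∈ N, ∀ v ∈ SubTangent N x, ⟪ν i x, v⟫ = 0
  indep : ∀ x ∈ N, LinearIndependent ℝ fun i => ν i x
  spans : ∀ x ∈ N,
    SubTangent N x ⊔ Submodule.span ℝ (Set.range fun i => ν i x) = SubTangent M x

/-- `(N, ν)` is a compact framed submanifold of `M` of codimension `p`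
(`m` denotes the dimension of `M`). -/
structure IsFramedSubmanifold (M : Set E) (m : ℕ) (N : Set E) (p : ℕ)
    (ν : Fin p → E → E) : Prop where
  subset : N ⊆ M
  compact : IsCompact N
  submanifold : IsSubmanifold N (m - p)
  framing : IsFraming M N p ν

/-- The unit `p`-sphere in `ℝ^{p+1}`. -/
def sphereSet (p : ℕ) : Set (EuclideanSpace ℝ (Fin (p + 1))) :=
  Metric.sphere 0 1

/-- `w` is a positively oriented basis of the tangent space `T_y S^p`. -/
def PosOrientedTangentBasis (p : ℕ) (y : EuclideanSpace ℝ (Fin (p + 1)))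
    (w : Fin p → EuclideanSpace ℝ (Fin (p + 1))) : Prop :=
  (∀ i, ⟪y, w i⟫ = 0) ∧
  0 < Matrix.det (Matrix.of fun i j => (Fin.cons y w : Fin (p+1) → _) i j)

/-- `y` is a regular value of `f|_M`. -/
def IsRegularValue (p : ℕ) (f : E → EuclideanSpace ℝ (Fin (p + 1))) (M : Set E)
    (y : EuclideanSpace ℝ (Fin (p + 1))) : Prop :=
  ∀ x ∈ M, f x = y → ∃ L, HasDerivOn f M x L ∧
    SubTangent (sphereSet p) y ≤ Submodule.map (L : E →ₗ[ℝ] _) (SubTangent M x)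

/-- `(N, ν)` is the Pontryagin manifold `(f⁻¹(y), f^*w)` of `f`. -/
structure IsPontryaginManifold (m p : ℕ) (f : E → EuclideanSpace ℝ (Fin (p + 1)))
    (M : Set E) (y : EuclideanSpace ℝ (Fin (p + 1)))
    (w : Fin p → EuclideanSpace ℝ (Fin (p + 1)))
    (N : Set E) (ν : Fin p → E → E) : Prop where
  framed : IsFramedSubmanifold M m N p ν
  mem_sphere : y ∈ sphereSet p
  basis : PosOrientedTangentBasis p y w
  regular : IsRegularValue p f M y
  preimage : N = {x ∈ M | f x = y}
  pullback : ∀ x ∈ N, ∃ L, HasDerivOn f M x L ∧ ∀ i, L (ν i x) = w i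

/-- Smooth homotopy of maps on `M` with values in `target`. -/
def SmoothHomotopicOn {G : Type*} [NormedAddCommGroup G] [NormedSpace ℝ G]
    (M : Set E) (f g : E → G) (target : Set G) : Prop :=
  ∃ H : E × ℝ → G, SmoothOnSet H (M ×ˢ (univ : Set ℝ)) ∧
    (∀ x ∈ M, ∀ t : ℝ, H (x, t) ∈ target) ∧
    (∀ x ∈ M, H (x, 0) = f x) ∧ (∀ x ∈ M, H (x, 1) = g x)

/-- The product inner product on `E × ℝ`. -/
def prodInner (u v : E × ℝ) : ℝ := ⟪u.1, v.1⟫ + u.2 * v.2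

/-- Framed cobordism of framed submanifolds `(N, ν)`, `(N', ν')` of `M` within
`M × [0,1]`, following Milnor/Pontryagin. -/
def FramedCobordant (M : Set E) (m p : ℕ) (N : Set E) (ν : Fin p → E → E)
    (N' : Set E) (ν' : Fin p → E → E) : Prop :=
  ∃ (Xc : Set (E × ℝ)) (u : Fin p → (E × ℝ) → (E × ℝ)) (ε : ℝ),
    0 < ε ∧ ε < 1 / 2 ∧
    IsCompact Xc ∧ Xc ⊆ M ×ˢ Icc (0 : ℝ) 1 ∧
    Xc ∩ (univ ×ˢ Iio ε) = N ×ˢ Ico (0 : ℝ) ε ∧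
    Xc ∩ (univ ×ˢ Ioi (1 - ε)) = N' ×ˢ Ioc (1 - ε) 1 ∧
    IsSubmanifold (Xc ∩ (univ ×ˢ Ioo (0 : ℝ) 1)) (m - p + 1) ∧
    (∀ i, SmoothOnSet (u i) Xc) ∧
    (∀ z ∈ Xc ∩ (univ ×ˢ Ioo (0 : ℝ) 1),
      (∀ i, u i z ∈ SubTangent (M ×ˢ (univ : Set ℝ)) z) ∧
      (∀ i, ∀ v ∈ SubTangent (Xc ∩ (univ ×ˢ Ioo (0 : ℝ) 1)) z, prodInner (u i z) v = 0) ∧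
      LinearIndependent ℝ (fun i => u i z) ∧
      SubTangent (Xc ∩ (univ ×ˢ Ioo (0 : ℝ) 1)) z ⊔
          Submodule.span ℝ (Set.range fun i => u i z)
        = SubTangent (M ×ˢ (univ : Set ℝ)) z) ∧
    (∀ x t, (x, t) ∈ Xc → t < ε → ∀ i, u i (x, t) = (ν i x, 0)) ∧
    (∀ x t, (x, t) ∈ Xc → 1 - ε < t → ∀ i, u i (x, t) = (ν' i x, 0))

/-!
Let `r y` be a point of `N` nearest to `y`. If `N` is the regular level set `Φ = 0` in `ℝ^k` near
`x ∈ N`, then near `x` the map `r` is the first component of the local inverse of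
`N × ℝ^k → E, (z, l) ↦ z + DΦ(z)† l`; so `r` is smooth there, with derivative at `x` the orthogonal
projection onto `T_x N`. The map `f : y ↦ (r y, coordinates of y - r y in the frame ν (r y))` takes
`M` to `N × ℝ^p`; on `N` it is `x ↦ (x, 0)`, with derivative a bijection `T_x M → T_x N × ℝ^p`
carrying `ν i x` to `(0, eᵢ)`. So `f` is a local diffeomorphism at the points of `N` and injective
on `N`, hence, `N` being compact, a diffeomorphism from a neighbourhood of `N` in `M` onto a
neighbourhood of `N × {0}`. Shrinking `ℝ^p` into a small ball by a map with derivative `1` at the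
origin and then inverting `f` gives the product neighbourhood.
-/

open scoped ContDiff

section Smoothness

variable {X Y Z : Type*} [NormedAddCommGroup X] [NormedSpace ℝ X]
  [NormedAddCommGroup Y] [NormedSpace ℝ Y] [NormedAddCommGroup Z] [NormedSpace ℝ Z]

/-- `f` is smooth on a neighbourhood of `x`. This is stronger than `ContDiffAt ℝ ∞ f x`, which
provides, for each finite `n`, a neighbourhood of `x` depending on `n` on which `f` is `C^n`. -/
def SmoothNear (f : X → Y) (x : X) : Prop := ∀ᶠ y in 𝓝 x, ContDiffAt ℝ ∞ f y

theorem SmoothNear.contDiffAt {f : X → Y} {x : X} (hf : SmoothNear f x) : ContDiffAt ℝ ∞ f x :=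
  hf.self_of_nhds

theorem SmoothNear.differentiableAt {f : X → Y} {x : X} (hf : SmoothNear f x) :
    DifferentiableAt ℝ f x :=
  hf.contDiffAt.differentiableAt (by simp)

theorem SmoothNear.of_contDiffOn {f : X → Y} {U : Set X} (hf : ContDiffOn ℝ ∞ f U) (hU : IsOpen U)
    {x : X} (hx : x ∈ U) : SmoothNear f x := by
  filter_upwards [hU.mem_nhds hx] with y hy using hf.contDiffAt (hU.mem_nhds hy)

theorem SmoothNear.congr_of_eventuallyEq {f g : X → Y} {x : X} (hf : SmoothNear f x)
    (hfg : g =ᶠ[𝓝 x] f) : SmoothNear g x := by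
  filter_upwards [hf, hfg.eventuallyEq_nhds] with y hfy hfgy using hfy.congr_of_eventuallyEq hfgy

theorem SmoothNear.comp {g : Y → Z} {f : X → Y} {x : X} (hg : SmoothNear g (f x))
    (hf : SmoothNear f x) : SmoothNear (g ∘ f) x := by
  filter_upwards [hf.contDiffAt.continuousAt.eventually hg, hf] with y hgy hfy using hgy.comp y hfy

theorem SmoothNear.prodMk {f : X → Y} {g : X → Z} {x : X} (hf : SmoothNear f x)
    (hg : SmoothNear g x) : SmoothNear (fun y ↦ (f y, g y)) x := by
  filter_upwards [hf, hg] with y hfy hgy using hfy.prodMk hgy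

theorem smoothOnSet_iff {f : X → Y} {S : Set X} :
    SmoothOnSet f S ↔ ∀ x ∈ S, ∃ g, SmoothNear g x ∧ f =ᶠ[𝓝[S] x] g := by
  refine forall₂_congr fun x _ ↦ ⟨?_, ?_⟩
  · rintro ⟨U, g, hU, hxU, hg, hfg⟩
    exact ⟨g, .of_contDiffOn hg hU hxU,
      hfg.eventuallyEq_of_mem (inter_mem_nhdsWithin S (hU.mem_nhds hxU))⟩
  · rintro ⟨g, hg, hfg⟩
    obtain ⟨U, hUsub, hU, hxU⟩ :=
      _root_.eventually_nhds_iff.1 (hg.and (eventually_nhdsWithin_iff.1 hfg))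
    exact ⟨U, g, hU, hxU, fun y hy ↦ (hUsub y hy).1.contDiffWithinAt,
      fun y hy ↦ (hUsub y hy.2).2 hy.1⟩

theorem SmoothOnSet.of_smoothNear {f : X → Y} {S : Set X} (hf : ∀ x ∈ S, SmoothNear f x) :
    SmoothOnSet f S :=
  smoothOnSet_iff.2 fun x hx ↦ ⟨f, hf x hx, .rfl⟩

theorem SmoothOnSet.mono {f : X → Y} {S T : Set X} (hf : SmoothOnSet f T) (hST : S ⊆ T) :
    SmoothOnSet f S := fun x hx ↦
  let ⟨U, g, hU, hxU, hg, hfg⟩ := hf x (hST hx)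
  ⟨U, g, hU, hxU, hg, hfg.mono (inter_subset_inter_left U hST)⟩

theorem SmoothOnSet.congr {f g : X → Y} {S : Set X} (hf : SmoothOnSet f S) (hfg : EqOn g f S) :
    SmoothOnSet g S := fun x hx ↦
  let ⟨U, k, hU, hxU, hk, hfk⟩ := hf x hx
  ⟨U, k, hU, hxU, hk, fun _ hy ↦ (hfg hy.1).trans (hfk hy)⟩

theorem SmoothOnSet.of_locally {f : X → Y} {S : Set X}
    (hf : ∀ x ∈ S, ∃ U, IsOpen U ∧ x ∈ U ∧ SmoothOnSet f (S ∩ U)) : SmoothOnSet f S := by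
  intro x hx
  obtain ⟨U, hU, hxU, hfU⟩ := hf x hx
  obtain ⟨V, g, hV, hxV, hg, hfg⟩ := hfU x ⟨hx, hxU⟩
  exact ⟨U ∩ V, g, hU.inter hV, ⟨hxU, hxV⟩, hg.mono inter_subset_right,
    fun y hy ↦ hfg ⟨⟨hy.1, hy.2.1⟩, hy.2.2⟩⟩

theorem SmoothOnSet.continuousOn {f : X → Y} {S : Set X} (hf : SmoothOnSet f S) :
    ContinuousOn f S := by
  intro x hx
  obtain ⟨g, hg, hfg⟩ := smoothOnSet_iff.1 hf x hx
  exact hg.contDiffAt.continuousAt.continuousWithinAt.congr_of_eventuallyEq hfg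
    (hfg.self_of_nhdsWithin hx)

theorem SmoothOnSet.comp {g : Y → Z} {f : X → Y} {S : Set X} {T : Set Y} (hg : SmoothOnSet g T)
    (hf : SmoothOnSet f S) (hST : MapsTo f S T) : SmoothOnSet (g ∘ f) S := by
  refine smoothOnSet_iff.2 fun x hx ↦ ?_
  obtain ⟨k, hk, hgk⟩ := smoothOnSet_iff.1 hg (f x) (hST hx)
  obtain ⟨l, hl, hfl⟩ := smoothOnSet_iff.1 hf x hx
  have hlx : f x = l x := hfl.self_of_nhdsWithin hx
  refine ⟨k ∘ l, (hlx ▸ hk).comp hl, ?_⟩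
  have hfT : Filter.Tendsto f (𝓝[S] x) (𝓝[T] f x) :=
    (hf.continuousOn x hx).tendsto_nhdsWithin hST
  filter_upwards [hfT.eventually hgk, hfl] with y hgky hfly
  rw [comp_apply, comp_apply, hgky, hfly]

theorem SmoothOnSet.prodMk {f : X → Y} {g : X → Z} {S : Set X} (hf : SmoothOnSet f S)
    (hg : SmoothOnSet g S) : SmoothOnSet (fun x ↦ (f x, g x)) S := by
  refine smoothOnSet_iff.2 fun x hx ↦ ?_
  obtain ⟨k, hk, hfk⟩ := smoothOnSet_iff.1 hf x hx
  obtain ⟨l, hl, hgl⟩ := smoothOnSet_iff.1 hg x hx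
  exact ⟨fun y ↦ (k y, l y), hk.prodMk hl, hfk.prodMk hgl⟩

theorem SmoothOnSet.of_contDiff {f : X → Y} (hf : ContDiff ℝ ∞ f) (S : Set X) : SmoothOnSet f S :=
  .of_smoothNear fun _ _ ↦ .of_forall fun _ ↦ hf.contDiffAt

theorem SmoothOnSet.prodMap {W : Type*} [NormedAddCommGroup W] [NormedSpace ℝ W] {f : X → Y}
    {g : Z → W} {S : Set X} {T : Set Z} (hf : SmoothOnSet f S) (hg : SmoothOnSet g T) :
    SmoothOnSet (Prod.map f g) (S ×ˢ T) :=
  (hf.comp (.of_contDiff contDiff_fst _) fun _ hq ↦ hq.1).prodMk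
    (hg.comp (.of_contDiff contDiff_snd _) fun _ hq ↦ hq.2)

end Smoothness

section Diffeomorphisms

variable {X Y Z W : Type*} [NormedAddCommGroup X] [NormedSpace ℝ X]
  [NormedAddCommGroup Y] [NormedSpace ℝ Y] [NormedAddCommGroup Z] [NormedSpace ℝ Z]
  [NormedAddCommGroup W] [NormedSpace ℝ W]

/-- `f` restricts to a diffeomorphism from the subset `S` onto the subset `T`, with inverse `g`. -/
structure IsDiffeoOn (f : X → Y) (g : Y → X) (S : Set X) (T : Set Y) : Prop where
  smoothOnSet : SmoothOnSet f S
  smoothOnSet_symm : SmoothOnSet g T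
  mapsTo : MapsTo f S T
  mapsTo_symm : MapsTo g T S
  invOn : InvOn g f S T

namespace IsDiffeoOn

variable {f : X → Y} {g : Y → X} {S : Set X} {T : Set Y}

theorem symm (h : IsDiffeoOn f g S T) : IsDiffeoOn g f T S :=
  ⟨h.smoothOnSet_symm, h.smoothOnSet, h.mapsTo_symm, h.mapsTo, h.invOn.symm⟩

theorem refl (S : Set X) : IsDiffeoOn id id S S :=
  ⟨.of_contDiff contDiff_id S, .of_contDiff contDiff_id S, mapsTo_id S, mapsTo_id S,
    fun _ _ ↦ rfl, fun _ _ ↦ rfl⟩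

theorem trans {f' : Y → Z} {g' : Z → Y} {R : Set Z} (h : IsDiffeoOn f g S T)
    (h' : IsDiffeoOn f' g' T R) : IsDiffeoOn (f' ∘ f) (g ∘ g') S R :=
  ⟨h'.smoothOnSet.comp h.smoothOnSet h.mapsTo,
    h.smoothOnSet_symm.comp h'.smoothOnSet_symm h'.mapsTo_symm, h'.mapsTo.comp h.mapsTo,
    h.mapsTo_symm.comp h'.mapsTo_symm, h.invOn.comp h'.invOn h.mapsTo h'.mapsTo_symm⟩

theorem prodMap {f' : Z → W} {g' : W → Z} {S' : Set Z} {T' : Set W} (h : IsDiffeoOn f g S T)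
    (h' : IsDiffeoOn f' g' S' T') :
    IsDiffeoOn (Prod.map f f') (Prod.map g g') (S ×ˢ S') (T ×ˢ T') where
  smoothOnSet := h.smoothOnSet.prodMap h'.smoothOnSet
  smoothOnSet_symm := h.smoothOnSet_symm.prodMap h'.smoothOnSet_symm
  mapsTo := h.mapsTo.prodMap h'.mapsTo
  mapsTo_symm := h.mapsTo_symm.prodMap h'.mapsTo_symm
  invOn := ⟨fun _ hq ↦ Prod.ext (h.invOn.1 hq.1) (h'.invOn.1 hq.2),
    fun _ hq ↦ Prod.ext (h.invOn.2 hq.1) (h'.invOn.2 hq.2)⟩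

theorem restrict (h : IsDiffeoOn f g S T) {S' : Set X} {T' : Set Y} (hS : S' ⊆ S) (hT : T' ⊆ T)
    (hiff : ∀ x ∈ S, x ∈ S' ↔ f x ∈ T') : IsDiffeoOn f g S' T' where
  smoothOnSet := h.smoothOnSet.mono hS
  smoothOnSet_symm := h.smoothOnSet_symm.mono hT
  mapsTo x hx := (hiff x (hS hx)).1 hx
  mapsTo_symm _ hy :=
    (hiff _ (h.mapsTo_symm (hT hy))).2 ((h.invOn.2 (hT hy)).symm ▸ hy)
  invOn := h.invOn.mono hS hT

theorem exists_restrict (h : IsDiffeoOn f g S T) {U : Set X} (hU : IsOpen U) :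
    ∃ V, IsOpen V ∧ IsDiffeoOn f g (S ∩ U) (T ∩ V) := by
  obtain ⟨V, hV, hgV⟩ := continuousOn_iff'.1 h.smoothOnSet_symm.continuousOn U hU
  refine ⟨V, hV, h.restrict inter_subset_left inter_subset_left fun x hx ↦ ?_⟩
  have := Set.ext_iff.1 hgV (f x)
  simpa [h.mapsTo hx, h.invOn.1 hx, hx] using this

theorem prodMk_zero (S : Set X) : IsDiffeoOn (fun x ↦ (x, (0 : Z))) Prod.fst S (S ×ˢ {0}) where
  smoothOnSet := .of_contDiff (contDiff_id.prodMk contDiff_const) S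
  smoothOnSet_symm := .of_contDiff contDiff_fst _
  mapsTo _ hx := ⟨hx, rfl⟩
  mapsTo_symm _ hq := hq.1
  invOn := ⟨fun _ _ ↦ rfl, fun _ hq ↦ Prod.ext rfl hq.2.symm⟩

end IsDiffeoOn

/-- Near `x`, the map `f` restricts to a diffeomorphism from a relatively open subset of `S` onto a
relatively open subset of `T`. -/
def IsLocalDiffeoWithinAt (f : X → Y) (S : Set X) (T : Set Y) (x : X) : Prop :=
  ∃ U V g, IsOpen U ∧ IsOpen V ∧ x ∈ U ∧ IsDiffeoOn f g (S ∩ U) (T ∩ V)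

theorem IsLocalDiffeoWithinAt.inter_isOpen {f : X → Y} {S : Set X} {T : Set Y} {x : X}
    (h : IsLocalDiffeoWithinAt f S T x) {U : Set X} (hU : IsOpen U) :
    IsLocalDiffeoWithinAt f (S ∩ U) T x := by
  obtain ⟨U', V, g, hU', hV, hxU', hfg⟩ := h
  obtain ⟨V', hV', hfg'⟩ := hfg.exists_restrict hU
  rw [inter_right_comm, inter_assoc T] at hfg'
  exact ⟨U', V ∩ V', g, hU', hV.inter hV', hxU', hfg'⟩

theorem IsDiffeoOn.isLocalDiffeoWithinAt_of_prod_zero {F : X × Z → Y × W} {g : Y × W → X × Z}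
    {U : Set (X × Z)} {V : Set (Y × W)} (h : IsDiffeoOn F g U V) (hU : IsOpen U) (hV : IsOpen V)
    {S : Set X} {T : Set Y} {x : X} (hxU : (x, 0) ∈ U) (hxS : x ∈ S)
    (hST : ∀ᶠ q in 𝓝 (x, 0), q ∈ S ×ˢ {0} ↔ F q ∈ T ×ˢ {0}) :
    IsLocalDiffeoWithinAt (fun y ↦ (F (y, 0)).1) S T x := by
  obtain ⟨O, hOST, hO, hxO⟩ := _root_.eventually_nhds_iff.1 hST
  obtain ⟨V', hV', hF⟩ := h.exists_restrict hO
  have hF : IsDiffeoOn F g (S ×ˢ {0} ∩ (U ∩ O)) (T ×ˢ {0} ∩ (V ∩ V')) :=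
    hF.restrict inter_subset_right inter_subset_right fun q hq ↦
      and_congr (hOST q hq.2) (iff_of_true hq (hF.mapsTo hq))
  obtain ⟨U₁, hU₁, hfst⟩ := (prodMk_zero S (Z := Z)).symm.exists_restrict (hU.inter hO)
  obtain ⟨V₁, hV₁, hfst'⟩ := (prodMk_zero T (Z := W)).symm.exists_restrict (hV.inter hV')
  exact ⟨U₁, V₁, _, hU₁, hV₁, (hfst.mapsTo (x := (x, 0)) ⟨⟨hxS, rfl⟩, hxU, hxO⟩).2,
    (hfst.symm.trans hF).trans hfst'⟩

theorem exists_isDiffeoOn_of_injOn {f : X → Y} {S : Set X} {T : Set Y} (hinj : InjOn f S)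
    (hf : ∀ x ∈ S, IsLocalDiffeoWithinAt f S T x) :
    ∃ V g, IsOpen V ∧ IsDiffeoOn f g S (T ∩ V) := by
  choose! U V g hU hV hxU hfg using hf
  have g_eq : ∀ x ∈ S, EqOn (invFunOn f S) (g x) (T ∩ V x) := by
    intro x hx y hy
    have hgy := (hfg x hx).mapsTo_symm hy
    conv_lhs => rw [← (hfg x hx).invOn.2 hy]
    exact hinj.leftInvOn_invFunOn hgy.1
  refine ⟨⋃ x ∈ S, V x, invFunOn f S, isOpen_biUnion hV, ?_, ?_, ?_, ?_, ?_, ?_⟩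
  · exact .of_locally fun x hx ↦ ⟨U x, hU x hx, hxU x hx, (hfg x hx).smoothOnSet⟩
  · refine .of_locally fun y hy ↦ ?_
    obtain ⟨x, hx, hyx⟩ := mem_iUnion₂.1 hy.2
    exact ⟨V x, hV x hx, hyx, ((hfg x hx).smoothOnSet_symm.congr (g_eq x hx)).mono
      (inter_subset_inter_left _ inter_subset_left)⟩
  · intro x hx
    have hfx := (hfg x hx).mapsTo ⟨hx, hxU x hx⟩
    exact ⟨hfx.1, mem_iUnion₂.2 ⟨x, hx, hfx.2⟩⟩
  · intro y hy
    obtain ⟨x, hx, hyx⟩ := mem_iUnion₂.1 hy.2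
    rw [g_eq x hx ⟨hy.1, hyx⟩]
    exact ((hfg x hx).mapsTo_symm ⟨hy.1, hyx⟩).1
  · exact hinj.leftInvOn_invFunOn
  · intro y hy
    obtain ⟨x, hx, hyx⟩ := mem_iUnion₂.1 hy.2
    rw [g_eq x hx ⟨hy.1, hyx⟩]
    exact (hfg x hx).invOn.2 ⟨hy.1, hyx⟩

theorem exists_isOpen_injOn_inter {X Y : Type*} [TopologicalSpace X] [TopologicalSpace Y]
    [T2Space Y] {f : X → Y} {K S : Set X} (hK : IsCompact K) (hKS : K ⊆ S) (hinj : InjOn f K)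
    (hcont : ∀ x ∈ K, ContinuousWithinAt f S x) (hloc : ∀ x ∈ K, ∃ U ∈ 𝓝[S] x, InjOn f U) :
    ∃ U, IsOpen U ∧ K ⊆ U ∧ InjOn f (S ∩ U) := by
  have hK' : IsCompact ((↑) ⁻¹' K : Set S) :=
    Topology.IsInducing.subtypeVal.isCompact_preimage' hK (by simpa using hKS)
  have hinj' : InjOn (S.domRestrict f) ((↑) ⁻¹' K) := fun x hx y hy h ↦ Subtype.ext (hinj hx hy h)
  obtain ⟨O, hO, hKO, hfO⟩ := hinj'.exists_isOpen_superset hK'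
    (fun x hx ↦ (continuousWithinAt_iff_continuousAt_domRestrict f x.2).1 (hcont x hx))
    fun x hx ↦ by
      obtain ⟨U, hU, hfU⟩ := hloc x hx
      exact ⟨Subtype.val ⁻¹' U, preimage_coe_mem_nhds_subtype.2 hU,
        fun y hy z hz h ↦ Subtype.ext (hfU hy hz h)⟩
  obtain ⟨U, hU, rfl⟩ := isOpen_induced_iff.1 hO
  exact ⟨U, hU, fun x hx ↦ hKO (show (⟨x, hKS hx⟩ : S) ∈ _ from hx), fun x hx y hy h ↦
    congrArg Subtype.val (@hfO ⟨x, hx.1⟩ hx.2 ⟨y, hy.1⟩ hy.2 h)⟩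

theorem exists_isDiffeoOn_inter_of_isCompact {f : X → Y} {K S : Set X} {T : Set Y}
    (hK : IsCompact K) (hKS : K ⊆ S) (hinj : InjOn f K)
    (hf : ∀ x ∈ K, IsLocalDiffeoWithinAt f S T x) :
    ∃ U V g, IsOpen U ∧ IsOpen V ∧ K ⊆ U ∧ IsDiffeoOn f g (S ∩ U) (T ∩ V) := by
  choose! U V g hU hV hxU hfg using hf
  have inter_mem : ∀ x ∈ K, S ∩ U x ∈ 𝓝[S] x := fun x hx ↦
    inter_mem_nhdsWithin S ((hU x hx).mem_nhds (hxU x hx))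
  obtain ⟨O, hO, hKO, hfO⟩ := exists_isOpen_injOn_inter hK hKS hinj
    (fun x hx ↦ ((hfg x hx).smoothOnSet.continuousOn x ⟨hKS hx, hxU x hx⟩).mono_of_mem_nhdsWithin
      (inter_mem x hx))
    fun x hx ↦ ⟨S ∩ U x, inter_mem x hx, (hfg x hx).invOn.1.injOn⟩
  have hO' : IsOpen (O ∩ ⋃ x ∈ K, U x) := hO.inter (isOpen_biUnion hU)
  obtain ⟨V', g', hV', hfg'⟩ := exists_isDiffeoOn_of_injOn (T := T)
    (hfO.mono (inter_subset_inter_right S (inter_subset_left (t := ⋃ x ∈ K, U x)))) fun y hy ↦ by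
      obtain ⟨x, hx, hyx⟩ := mem_iUnion₂.1 hy.2.2
      exact IsLocalDiffeoWithinAt.inter_isOpen
        ⟨U x, V x, g x, hU x hx, hV x hx, hyx, hfg x hx⟩ hO'
  exact ⟨_, V', g', hO', hV', fun x hx ↦ ⟨hKO hx, mem_iUnion₂.2 ⟨x, hx, hxU x hx⟩⟩, hfg'⟩

end Diffeomorphisms

section InverseFunctionTheorem

variable {X Y : Type*} [NormedAddCommGroup X] [NormedSpace ℝ X] [CompleteSpace X]
  [NormedAddCommGroup Y] [NormedSpace ℝ Y] [CompleteSpace Y]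

theorem SmoothNear.exists_isDiffeoOn {f : X → Y} {f' : X →L[ℝ] Y} {x : X} (hf : SmoothNear f x)
    (hf' : HasFDerivAt f f' x) (hbij : Bijective f') :
    ∃ U V g, IsOpen U ∧ IsOpen V ∧ x ∈ U ∧ IsDiffeoOn f g U V := by
  obtain ⟨O, hfO, hO, hxO⟩ := _root_.eventually_nhds_iff.1 hf
  let e : X ≃L[ℝ] Y := .ofBijective f' (LinearMap.ker_eq_bot.2 hbij.1)
    (LinearMap.range_eq_top.2 hbij.2)
  have hfe : HasFDerivAt f (e : X →L[ℝ] Y) x := by rwa [ContinuousLinearEquiv.coe_ofBijective]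
  let D := O ∩ fderiv ℝ f ⁻¹' range ((↑) : (X ≃L[ℝ] Y) → X →L[ℝ] Y)
  have hD : IsOpen D :=
    (ContDiffOn.continuousOn_fderiv_of_isOpen (n := ∞)
      (fun y hy ↦ (hfO y hy).contDiffWithinAt) hO (by simp)).isOpen_inter_preimage hO
      ContinuousLinearEquiv.isOpen
  let Θ := (hf.contDiffAt.toOpenPartialHomeomorph f hfe (by simp)).restrOpen D hD
  have hΘ : ⇑Θ = f := rfl
  have source_subset : Θ.source ⊆ D := inter_subset_right
  refine ⟨Θ.source, Θ.target, Θ.symm, Θ.open_source, Θ.open_target,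
    ⟨hf.contDiffAt.mem_toOpenPartialHomeomorph_source hfe (by simp), hxO, e, hfe.fderiv.symm⟩,
    .of_smoothNear fun y hy ↦ ?_, .of_smoothNear fun z hz ↦ ?_, Θ.mapsTo, Θ.mapsTo_symm, Θ.invOn⟩
  · filter_upwards [Θ.open_source.mem_nhds hy] with y hy using hfO y (source_subset hy).1
  · filter_upwards [Θ.open_target.mem_nhds hz] with z hz
    obtain ⟨hzO, e', he'⟩ := source_subset (Θ.map_target hz)
    refine Θ.contDiffAt_symm (f₀' := e') hz ?_ (hfO _ hzO)
    rw [he', hΘ]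
    exact ((hfO _ hzO).differentiableAt (by simp)).hasFDerivAt

end InverseFunctionTheorem

section RegularLevelSets

variable {X Y G H : Type*} [NormedAddCommGroup X] [NormedSpace ℝ X]
  [NormedAddCommGroup Y] [NormedSpace ℝ Y] [NormedAddCommGroup G] [NormedSpace ℝ G]
  [NormedAddCommGroup H] [NormedSpace ℝ H]

/-- On the open set `U`, the set `S` is the zero locus of the smooth submersion `Φ`. -/
structure IsRegularLevelSet (Φ : X → G) (U S : Set X) : Prop where
  isOpen : IsOpen U
  contDiffOn : ContDiffOn ℝ ∞ Φ U
  surjective_fderiv : ∀ x ∈ U, Surjective (fderiv ℝ Φ x)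
  mem_iff : ∀ x ∈ U, (x ∈ S ↔ Φ x = 0)

theorem IsSubmanifold.exists_isRegularLevelSet {S : Set X} {m : ℕ} (hS : IsSubmanifold S m) {x : X}
    (hx : x ∈ S) : ∃ (U : Set X) (Φ : X → EuclideanSpace ℝ (Fin (Module.finrank ℝ X - m))),
      x ∈ U ∧ IsRegularLevelSet Φ U S := by
  obtain ⟨U, Φ, hU, hxU, hΦ, hsurj, heq⟩ := hS x hx
  exact ⟨U, Φ, hxU, hU, hΦ, hsurj, fun y hy ↦ by simpa [hy] using Set.ext_iff.1 heq y⟩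

theorem isRegularLevelSet_univ : IsRegularLevelSet (fun _ : X ↦ ()) univ univ :=
  ⟨isOpen_univ, contDiffOn_const, fun _ _ _ ↦ ⟨0, Subsingleton.elim _ _⟩, fun _ _ ↦ by simp⟩

theorem mem_subTangent_of_eventually_mem {M : Set X} {γ : ℝ → X} {v : X} (hγ : HasDerivAt γ v 0)
    (hM : ∀ᶠ t in 𝓝 0, γ t ∈ M) : v ∈ SubTangent M (γ 0) := by
  classical
  have h0 : γ 0 ∈ M := hM.self_of_nhds
  refine Submodule.subset_span ⟨fun t ↦ if γ t ∈ M then γ t else γ 0, fun t ↦ ?_, by simp, ?_⟩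
  · dsimp only
    split_ifs with h
    exacts [h, h0]
  · exact hγ.congr_of_eventuallyEq (hM.mono fun t ht ↦ if_pos ht)

namespace IsRegularLevelSet

variable {Φ : X → G} {U S : Set X} {x : X}

theorem smoothNear (hS : IsRegularLevelSet Φ U S) (hx : x ∈ U) : SmoothNear Φ x :=
  .of_contDiffOn hS.contDiffOn hS.isOpen hx

theorem hasStrictFDerivAt (hS : IsRegularLevelSet Φ U S) (hx : x ∈ U) :
    HasStrictFDerivAt Φ (fderiv ℝ Φ x) x :=
  (hS.smoothNear hx).contDiffAt.hasStrictFDerivAt (by simp)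

theorem hasFDerivAt_comp_fst (hS : IsRegularLevelSet Φ U S) {q : X × Y} (hq : q.1 ∈ U) :
    HasFDerivAt (Φ ∘ Prod.fst) (fderiv ℝ Φ q.1 ∘L .fst ℝ X Y) q :=
  (hS.hasStrictFDerivAt hq).hasFDerivAt.comp q hasFDerivAt_fst

theorem prod_univ (hS : IsRegularLevelSet Φ U S) :
    IsRegularLevelSet (Φ ∘ Prod.fst) (U ×ˢ univ) (S ×ˢ (univ : Set Y)) where
  isOpen := hS.isOpen.prod isOpen_univ
  contDiffOn := hS.contDiffOn.comp contDiffOn_fst fun _ hq ↦ hq.1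
  surjective_fderiv q hq := by
    rw [(hS.hasFDerivAt_comp_fst hq.1).fderiv]
    exact (hS.surjective_fderiv _ hq.1).comp Prod.fst_surjective
  mem_iff q hq := by simpa using hS.mem_iff q.1 hq.1

theorem fderiv_eq_zero_of_mem_subTangent (hS : IsRegularLevelSet Φ U S) (hx : x ∈ U) {v : X}
    (hv : v ∈ SubTangent S x) : fderiv ℝ Φ x v = 0 := by
  suffices SubTangent S x ≤ LinearMap.ker (fderiv ℝ Φ x : X →ₗ[ℝ] G) from this hv
  refine Submodule.span_le.2 ?_
  rintro v ⟨γ, hγS, rfl, hγ⟩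
  have hΦγ : Φ ∘ γ =ᶠ[𝓝 0] fun _ ↦ 0 := by
    filter_upwards [hγ.continuousAt.eventually_mem (hS.isOpen.mem_nhds hx)] with t ht
    exact (hS.mem_iff _ ht).1 (hγS t)
  exact ((hS.hasStrictFDerivAt hx).hasFDerivAt.comp_hasDerivAt (0 : ℝ) hγ).unique
    ((hasDerivAt_const (0 : ℝ) (0 : G)).congr_of_eventuallyEq hΦγ)

theorem mem_subTangent_of_fderiv_eq_zero [CompleteSpace X] [FiniteDimensional ℝ G]
    (hS : IsRegularLevelSet Φ U S) (hxU : x ∈ U) (hxS : x ∈ S) {v : X}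
    (hv : fderiv ℝ Φ x v = 0) : v ∈ SubTangent S x := by
  have hΦ := hS.hasStrictFDerivAt hxU
  have hrange := LinearMap.range_eq_top.2 (hS.surjective_fderiv x hxU)
  let w : (fderiv ℝ Φ x : X →ₗ[ℝ] G).ker := ⟨v, hv⟩
  let γ : ℝ → X := fun t ↦ hΦ.implicitFunction Φ _ hrange (Φ x) (t • w)
  have line : HasDerivAt (fun t : ℝ ↦ t • w) w 0 := by
    simpa using (hasDerivAt_id (0 : ℝ)).smul_const w
  have γ_zero : γ 0 = x := by simp [γ]
  have hγ : HasDerivAt γ v 0 := by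
    have := (hΦ.to_implicitFunction hrange).hasFDerivAt
    rw [← zero_smul ℝ w] at this
    exact this.comp_hasDerivAt (0 : ℝ) line
  have Φ_γ : ∀ᶠ t in 𝓝 (0 : ℝ), Φ (γ t) = Φ x := by
    have := continuousAt_const (y := Φ x).prodMk line.continuousAt
    rw [ContinuousAt, zero_smul] at this
    exact this.eventually (hΦ.map_implicitFunction_eq hrange)
  have γ_mem : ∀ᶠ t in 𝓝 (0 : ℝ), γ t ∈ S := by
    filter_upwards [Φ_γ, hγ.continuousAt.eventually_mem
      (hS.isOpen.mem_nhds (γ_zero.symm ▸ hxU))] with t ht htU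
    exact (hS.mem_iff _ htU).2 (ht.trans ((hS.mem_iff x hxU).1 hxS))
  exact γ_zero ▸ mem_subTangent_of_eventually_mem hγ γ_mem

theorem mem_subTangent_iff [CompleteSpace X] [FiniteDimensional ℝ G]
    (hS : IsRegularLevelSet Φ U S) (hxU : x ∈ U) (hxS : x ∈ S) {v : X} :
    v ∈ SubTangent S x ↔ fderiv ℝ Φ x v = 0 :=
  ⟨hS.fderiv_eq_zero_of_mem_subTangent hxU, hS.mem_subTangent_of_fderiv_eq_zero hxU hxS⟩

theorem mem_subTangent_prod_univ_iff [CompleteSpace X] [CompleteSpace Y] [FiniteDimensional ℝ G]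
    (hS : IsRegularLevelSet Φ U S) (hxU : x ∈ U) (hxS : x ∈ S) {y : Y} {v : X × Y} :
    v ∈ SubTangent (S ×ˢ univ) (x, y) ↔ v.1 ∈ SubTangent S x := by
  rw [hS.prod_univ.mem_subTangent_iff ⟨hxU, trivial⟩ ⟨hxS, trivial⟩, hS.mem_subTangent_iff hxU hxS,
    (hS.hasFDerivAt_comp_fst (q := (x, y)) hxU).fderiv]
  rfl

theorem eventually_eq_zero_of_add_mem (hS : IsRegularLevelSet Φ U S) (hy : x ∈ U) {B : G →L[ℝ] X}
    (hB : RightInverse B (fderiv ℝ Φ x)) :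
    ∀ᶠ q in 𝓝 (x, (0 : G)), q.1 ∈ S → q.1 + B q.2 ∈ S → q.2 = 0 := by
  have add_tendsto : Filter.Tendsto (fun q : X × G ↦ (q.1 + B q.2, q.1)) (𝓝 (x, 0)) (𝓝 (x, x)) := by
    have : Continuous fun q : X × G ↦ (q.1 + B q.2, q.1) := by fun_prop
    simpa using this.tendsto (x, 0)
  have little_o : (fun q : X × G ↦ Φ (q.1 + B q.2) - Φ q.1 - q.2) =o[𝓝 (x, 0)] fun q ↦ q.2 := by
    have := (hS.hasStrictFDerivAt hy).isLittleO.comp_tendsto add_tendsto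
    simp only [comp_def, add_sub_cancel_left, hB _] at this
    exact this.trans_isBigO (B.isBigO_comp _ _)
  have mem_U : ∀ᶠ q in 𝓝 (x, (0 : G)), q.1 + B q.2 ∈ U ∧ q.1 ∈ U :=
    add_tendsto.eventually ((hS.isOpen.prod hS.isOpen).mem_nhds ⟨hy, hy⟩)
  filter_upwards [little_o.def one_half_pos, mem_U] with q hq hqU hqS hqS'
  rw [(hS.mem_iff _ hqU.1).1 hqS', (hS.mem_iff _ hqU.2).1 hqS, sub_zero, zero_sub, norm_neg] at hq
  exact norm_eq_zero.1 (by linarith [norm_nonneg q.2])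

end IsRegularLevelSet

theorem bijective_prod_of_bijOn_ker {L : X →L[ℝ] Y} {P : X →L[ℝ] H} {Q : Y →L[ℝ] G}
    {B : G →L[ℝ] Y} (hP : Surjective P) (hB : RightInverse B Q)
    (hL : BijOn L {v | P v = 0} {w | Q w = 0}) :
    Bijective ((L ∘L .fst ℝ X G + B ∘L .snd ℝ X G).prod (P ∘L .fst ℝ X G)) := by
  refine ⟨(injective_iff_map_eq_zero _).2 fun ⟨v, l⟩ hvl ↦ ?_, fun ⟨w, u⟩ ↦ ?_⟩
  · obtain ⟨hLB, hPv⟩ : L v + B l = 0 ∧ P v = 0 := by simpa using hvl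
    have hl : l = 0 := by
      simpa [hB l, show Q (L v) = 0 from hL.mapsTo hPv] using congrArg Q hLB
    have hLv : L v = L 0 := by simpa [hl] using hLB
    rw [hL.injOn hPv (map_zero P) hLv, hl, Prod.mk_zero_zero]
  · obtain ⟨v, rfl⟩ := hP u
    obtain ⟨v', hPv', hLv'⟩ := hL.surjOn (show Q (w - L v - B (Q (w - L v))) = 0 by simp [hB _])
    refine ⟨(v + v', Q (w - L v)), Prod.ext ?_ ?_⟩
    · change L (v + v') + B (Q (w - L v)) = w
      rw [map_add, hLv']
      abel
    · simp [show P v' = 0 from hPv']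

theorem exists_isDiffeoOn_prod_of_bijOn_ker [CompleteSpace X] [CompleteSpace Y] [CompleteSpace G]
    [CompleteSpace H] {f : X → Y} {f' : X →L[ℝ] Y} {Ψ : X → H} {x : X} {Q : Y →L[ℝ] G}
    {B : G →L[ℝ] Y} (hf : SmoothNear f x) (hf' : HasFDerivAt f f' x) (hΨ : SmoothNear Ψ x)
    (hsurj : Surjective (fderiv ℝ Ψ x)) (hB : RightInverse B Q)
    (hbij : BijOn f' {v | fderiv ℝ Ψ x v = 0} {w | Q w = 0}) :
    ∃ U V g, IsOpen U ∧ IsOpen V ∧ (x, 0) ∈ U ∧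
      IsDiffeoOn (fun q : X × G ↦ (f q.1 + B q.2, Ψ q.1)) g U V := by
  have smooth : SmoothNear (fun q : X × G ↦ (f q.1 + B q.2, Ψ q.1)) (x, 0) := by
    filter_upwards [continuousAt_fst.eventually hf, continuousAt_fst.eventually hΨ] with q hfq hΨq
    exact ((hfq.comp q contDiffAt_fst).add (B.contDiff.comp contDiff_snd).contDiffAt).prodMk
      (hΨq.comp q contDiffAt_fst)
  have deriv := ((HasFDerivAt.comp (x, (0 : G)) (g := f) hf' hasFDerivAt_fst).add
    (B.hasFDerivAt.comp _ hasFDerivAt_snd)).prodMk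
      (HasFDerivAt.comp (x, (0 : G)) (g := Ψ) hΨ.differentiableAt.hasFDerivAt hasFDerivAt_fst)
  exact smooth.exists_isDiffeoOn deriv (bijective_prod_of_bijOn_ker hsurj hB hbij)

/- The map `(x, l) ↦ (f x + B l, Ψ x)`, with `B` a right inverse of the derivative of `Φ`, is a
local diffeomorphism, and it carries `S × {0}` onto `T × {0}`. -/
theorem isLocalDiffeoWithinAt_of_bijOn_subTangent [CompleteSpace X] [CompleteSpace Y]
    [FiniteDimensional ℝ G] [FiniteDimensional ℝ H] {Ψ : X → H} {Φ : Y → G} {U S : Set X}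
    {V T : Set Y} (hS : IsRegularLevelSet Ψ U S) (hT : IsRegularLevelSet Φ V T) {f : X → Y}
    {f' : X →L[ℝ] Y} {x : X} (hxU : x ∈ U) (hxS : x ∈ S) (hxV : f x ∈ V) (hf : SmoothNear f x)
    (hf' : HasFDerivAt f f' x) (hmaps : ∀ᶠ y in 𝓝 x, y ∈ S → f y ∈ T)
    (hbij : BijOn f' (SubTangent S x) (SubTangent T (f x))) :
    IsLocalDiffeoWithinAt f S T x := by
  have hxT : f x ∈ T := hmaps.self_of_nhds hxS
  have hbij' : BijOn f' {v | fderiv ℝ Ψ x v = 0} {w | fderiv ℝ Φ (f x) w = 0} := by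
    convert hbij using 1
    exacts [Set.ext fun v ↦ (hS.mem_subTangent_iff hxU hxS).symm,
      Set.ext fun w ↦ (hT.mem_subTangent_iff hxV hxT).symm]
  obtain ⟨B, hB⟩ := (fderiv ℝ Φ (f x)).exists_rightInverse_of_surjective
    (LinearMap.range_eq_top.2 (hT.surjective_fderiv _ hxV))
  replace hB : RightInverse B (fderiv ℝ Φ (f x)) := DFunLike.congr_fun hB
  obtain ⟨U', V', g, hU', hV', hxU', hFg⟩ := exists_isDiffeoOn_prod_of_bijOn_ker hf hf'
    (hS.smoothNear hxU) (hS.surjective_fderiv x hxU) hB hbij'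
  have l_eq_zero : ∀ᶠ q in 𝓝 (x, (0 : G)), f q.1 ∈ T → f q.1 + B q.2 ∈ T → q.2 = 0 :=
    ((hf.contDiffAt.continuousAt.comp (x := (x, (0 : G))) continuousAt_fst).prodMk
      continuousAt_snd).eventually (hT.eventually_eq_zero_of_add_mem hxV hB)
  have mem_iff : ∀ᶠ q in 𝓝 (x, (0 : G)),
      q ∈ S ×ˢ {0} ↔ (f q.1 + B q.2, Ψ q.1) ∈ T ×ˢ {0} := by
    filter_upwards [l_eq_zero, continuousAt_fst.eventually hmaps,
      continuousAt_fst.eventually (hS.isOpen.mem_nhds hxU)] with ⟨y, l⟩ hl hy hyU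
    have hyS := hS.mem_iff y hyU
    refine ⟨?_, fun ⟨hyT, hΨy⟩ ↦ ⟨hyS.2 hΨy, hl (hy (hyS.2 hΨy)) hyT⟩⟩
    rintro ⟨hyS', rfl : l = 0⟩
    exact ⟨by simpa using hy hyS', hyS.1 hyS'⟩
  simpa using hFg.isLocalDiffeoWithinAt_of_prod_zero hU' hV' hxU' hxS mem_iff

end RegularLevelSets

section Pseudoinverse

variable {F : Type*} [NormedAddCommGroup F] [InnerProductSpace ℝ F]

open ContinuousLinearMap in
theorem contDiff_adjoint [CompleteSpace E] [CompleteSpace F] {n : WithTop ℕ∞} :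
    ContDiff ℝ n (adjoint : (E →L[ℝ] F) → F →L[ℝ] E) :=
  IsBoundedLinearMap.contDiff
    { map_add := map_add _
      map_smul := fun c A ↦ by simp
      bound := ⟨1, one_pos, fun A ↦ by simp⟩ }

variable [CompleteSpace E] [FiniteDimensional ℝ F]

/-- The Moore-Penrose left inverse `(L† L)⁻¹ L†` of an injective linear map `L`. Where `L` is not
injective, it takes the junk value `0`. -/
def pseudoinverse (L : F →L[ℝ] E) : E →L[ℝ] F :=
  (L.adjoint ∘L L).inverse ∘L L.adjoint

theorem isInvertible_adjoint_comp_self {L : F →L[ℝ] E} (hL : Injective L) :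
    (L.adjoint ∘L L).IsInvertible := by
  have hinj : Injective (L.adjoint ∘L L : F →ₗ[ℝ] F) := L.adjoint_comp_self_injective_iff.2 hL
  exact ⟨.ofBijective _ (LinearMap.ker_eq_bot.2 hinj)
    (LinearMap.range_eq_top.2 (LinearMap.injective_iff_surjective.1 hinj)),
    ContinuousLinearEquiv.coe_ofBijective ..⟩

theorem pseudoinverse_apply_apply {L : F →L[ℝ] E} (hL : Injective L) (v : F) :
    pseudoinverse L (L v) = v :=
  ((isInvertible_adjoint_comp_self hL).inverse_apply_eq).2 rfl

theorem pseudoinverse_apply_eq_zero {L : F →L[ℝ] E} {e : E} (he : ∀ v, ⟪L v, e⟫ = 0) :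
    pseudoinverse L e = 0 := by
  have : L.adjoint e = 0 := ext_inner_left ℝ fun v ↦ by
    rw [ContinuousLinearMap.adjoint_inner_right, he, inner_zero_right]
  rw [pseudoinverse, ContinuousLinearMap.comp_apply, this, map_zero]

theorem contDiffAt_pseudoinverse {L : F →L[ℝ] E} (hL : Injective L) :
    ContDiffAt ℝ ∞ (fun L' : F →L[ℝ] E ↦ pseudoinverse L') L := by
  have adj : ContDiffAt ℝ ∞ (fun L' : F →L[ℝ] E ↦ L'.adjoint) L := contDiff_adjoint.contDiffAt
  have gram : ContDiffAt ℝ ∞ (fun L' : F →L[ℝ] E ↦ L'.adjoint ∘L L') L :=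
    adj.clm_comp contDiffAt_id
  have inv : ContDiffAt ℝ ∞ (fun L' : F →L[ℝ] E ↦ (L'.adjoint ∘L L').inverse) L :=
    ContDiffAt.comp (f := fun L' : F →L[ℝ] E ↦ L'.adjoint ∘L L') L
      (isInvertible_adjoint_comp_self hL).contDiffAt_map_inverse gram
  exact inv.clm_comp adj

end Pseudoinverse

section NearestPoint

/-- `r` sends every point of the ambient space to a point of `N` nearest to it. -/
structure IsNearestPointMap {α : Type*} [PseudoMetricSpace α] (r : α → α) (N : Set α) : Prop where
  mem : ∀ y, r y ∈ N
  dist_le : ∀ y, ∀ z ∈ N, dist y (r y) ≤ dist y z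

theorem exists_isNearestPointMap {α : Type*} [PseudoMetricSpace α] {N : Set α} (hN : IsCompact N)
    (hne : N.Nonempty) : ∃ r, IsNearestPointMap r N := by
  choose r hrN hr using fun y ↦ hN.exists_infDist_eq_dist hne y
  exact ⟨r, hrN, fun y z hz ↦ hr y ▸ infDist_le_dist_of_mem hz⟩

namespace IsNearestPointMap

theorem apply_eq_self {α : Type*} [MetricSpace α] {r : α → α} {N : Set α}
    (hr : IsNearestPointMap r N) {x : α} (hx : x ∈ N) : r x = x := by
  simpa [eq_comm] using hr.dist_le x x hx

theorem continuousAt {α : Type*} [MetricSpace α] {r : α → α} {N : Set α}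
    (hr : IsNearestPointMap r N) {x : α} (hx : x ∈ N) : ContinuousAt r x := by
  refine Metric.continuousAt_iff.2 fun ε hε ↦ ⟨ε / 2, half_pos hε, fun y hy ↦ ?_⟩
  calc dist (r y) (r x) ≤ dist y (r y) + dist y x := by
        rw [hr.apply_eq_self hx]
        exact dist_triangle_left _ _ _
    _ ≤ dist y x + dist y x := by gcongr; exact hr.dist_le y x hx
    _ < ε := by linarith

theorem inner_sub_eq_zero {r : E → E} {N : Set E} (hr : IsNearestPointMap r N) (y : E) {v : E}
    (hv : v ∈ SubTangent N (r y)) : ⟪y - r y, v⟫ = 0 := by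
  suffices SubTangent N (r y) ≤ (ℝ ∙ (y - r y))ᗮ from
    Submodule.mem_orthogonal_singleton_iff_inner_right.1 (this hv)
  refine Submodule.span_le.2 ?_
  rintro v ⟨γ, hγN, hγ0, hγ⟩
  have hmin : IsLocalMin (fun t ↦ ‖y - γ t‖ ^ 2) 0 := .of_forall fun t ↦ by
    have := hr.dist_le y (γ t) (hγN t)
    rw [dist_eq_norm, dist_eq_norm, ← hγ0] at this
    exact pow_le_pow_left₀ (norm_nonneg _) this 2
  have := hmin.hasDerivAt_eq_zero (hγ.const_sub y).norm_sq
  simpa [hγ0, Submodule.mem_orthogonal_singleton_iff_inner_right] using this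

end IsNearestPointMap

section Adjoint

variable {G : Type*} [NormedAddCommGroup G] [InnerProductSpace ℝ G] [CompleteSpace E]

theorem injective_adjoint_of_surjective [CompleteSpace G] {A : E →L[ℝ] G} (hA : Surjective A) :
    Injective A.adjoint := by
  have : A.adjoint.ker = ⊥ := by
    rw [← A.orthogonal_range, LinearMap.range_eq_top.2 hA, Submodule.top_orthogonal_eq_bot]
  exact LinearMap.ker_eq_bot.1 this

theorem mem_orthogonal_ker_iff [FiniteDimensional ℝ G] {A : E →L[ℝ] G} {e : E} :
    e ∈ A.kerᗮ ↔ ∃ l, A.adjoint l = e := by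
  rw [A.orthogonal_ker,
    (Submodule.closed_of_finiteDimensional _).submodule_topologicalClosure_eq]
  rfl

end Adjoint

variable {G : Type*} [NormedAddCommGroup G] [InnerProductSpace ℝ G] [FiniteDimensional ℝ G]
  [CompleteSpace E] {Φ : E → G} {U N : Set E} {r : E → E} {x : E}

/-- The map `(x, l) ↦ x + ∑ lᵢ ∇Φᵢ(x)`, a parametrisation of the normal spaces of the level sets of
`Φ`. -/
def normalMap (Φ : E → G) (q : E × G) : E := q.1 + (fderiv ℝ Φ q.1).adjoint q.2

theorem SmoothNear.adjoint_fderiv (hΦ : SmoothNear Φ x) :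
    SmoothNear (fun y ↦ (fderiv ℝ Φ y).adjoint) x :=
  hΦ.mono fun _ h ↦ contDiff_adjoint.contDiffAt.comp _ (h.fderiv_right (by simp))

theorem SmoothNear.normalMap (hΦ : SmoothNear Φ x) (l : G) : SmoothNear (normalMap Φ) (x, l) := by
  filter_upwards [continuousAt_fst.eventually hΦ.adjoint_fderiv] with q hq
  exact contDiffAt_fst.add ((hq.comp q contDiffAt_fst).clm_apply contDiffAt_snd)

theorem hasFDerivAt_normalMap (hΦ : SmoothNear Φ x) :
    HasFDerivAt (normalMap Φ) (.fst ℝ E G + (fderiv ℝ Φ x).adjoint ∘L .snd ℝ E G) (x, 0) := by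
  have := (HasFDerivAt.comp (x, (0 : G)) (g := fun y ↦ (fderiv ℝ Φ y).adjoint)
    hΦ.adjoint_fderiv.differentiableAt.hasFDerivAt hasFDerivAt_fst).clm_apply hasFDerivAt_snd
  refine (hasFDerivAt_fst.add this).congr_fderiv ?_
  ext <;> simp

theorem bijOn_fst_add_adjoint {A : E →L[ℝ] G} (hA : Surjective A) :
    BijOn (ContinuousLinearMap.fst ℝ E G + A.adjoint ∘L .snd ℝ E G) {q | A q.1 = 0} univ := by
  have : CompleteSpace A.ker := A.isClosed_ker.completeSpace_coe
  refine ⟨mapsTo_univ _ _, fun q hq q' hq' hqq' ↦ ?_, fun e _ ↦ ?_⟩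
  · have heq : q.1 + A.adjoint q.2 = q'.1 + A.adjoint q'.2 := hqq'
    have hsub : q.1 - q'.1 = A.adjoint (q'.2 - q.2) := by
      rw [map_sub, sub_eq_sub_iff_add_eq_add, heq, add_comm]
    have hfst : q.1 = q'.1 := sub_eq_zero.1 <| A.ker.orthogonal_disjoint.le_bot
      ⟨A.ker.sub_mem hq hq', mem_orthogonal_ker_iff.2 ⟨_, hsub.symm⟩⟩
    rw [hfst, add_right_inj] at heq
    exact Prod.ext hfst (injective_adjoint_of_surjective hA heq)
  · obtain ⟨v, hv, w, hw, rfl⟩ := A.ker.exists_add_mem_mem_orthogonal e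
    obtain ⟨l, rfl⟩ := mem_orthogonal_ker_iff.1 hw
    exact ⟨(v, l), hv, rfl⟩

theorem IsRegularLevelSet.isLocalDiffeoWithinAt_normalMap (hN : IsRegularLevelSet Φ U N)
    (hxU : x ∈ U) (hxN : x ∈ N) :
    IsLocalDiffeoWithinAt (normalMap Φ) (N ×ˢ (univ : Set G)) univ (x, 0) := by
  refine isLocalDiffeoWithinAt_of_bijOn_subTangent hN.prod_univ isRegularLevelSet_univ
    ⟨hxU, trivial⟩ ⟨hxN, trivial⟩ trivial ((hN.smoothNear hxU).normalMap 0)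
    (hasFDerivAt_normalMap (hN.smoothNear hxU)) (by simp) ?_
  convert bijOn_fst_add_adjoint (hN.surjective_fderiv x hxU) using 1
  · ext q
    exact (hN.mem_subTangent_prod_univ_iff hxU hxN).trans (hN.mem_subTangent_iff hxU hxN)
  · exact eq_univ_of_forall fun v ↦
      (isRegularLevelSet_univ.mem_subTangent_iff trivial trivial).2 (Subsingleton.elim _ _)

/-- The normal component `y - r y` in the coordinates of `normalMap`, where `r y` is a nearest point
to `y` on the zero locus of `Φ`. -/
def conormal (Φ : E → G) (r : E → E) (y : E) : G :=
  pseudoinverse (fderiv ℝ Φ (r y)).adjoint (y - r y)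

namespace IsNearestPointMap

theorem normalMap_conormal (hr : IsNearestPointMap r N) (hN : IsRegularLevelSet Φ U N) {y : E}
    (hy : r y ∈ U) : normalMap Φ (r y, conormal Φ r y) = y := by
  obtain ⟨l, hl⟩ : ∃ l, (fderiv ℝ Φ (r y)).adjoint l = y - r y :=
    mem_orthogonal_ker_iff.1 <| (Submodule.mem_orthogonal' _ _).2 fun v hv ↦
      hr.inner_sub_eq_zero y (hN.mem_subTangent_of_fderiv_eq_zero hy (hr.mem y) hv)
  rw [conormal, ← hl, pseudoinverse_apply_apply
    (injective_adjoint_of_surjective (hN.surjective_fderiv _ hy)), normalMap, hl, add_sub_cancel]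

theorem prodMk_conormal_apply_self (hr : IsNearestPointMap r N) (hxN : x ∈ N) :
    (r x, conormal Φ r x) = (x, 0) := by
  rw [conormal, hr.apply_eq_self hxN, sub_self, map_zero]

theorem continuousAt_conormal (hr : IsNearestPointMap r N) (hN : IsRegularLevelSet Φ U N)
    (hxU : x ∈ U) (hxN : x ∈ N) : ContinuousAt (conormal Φ r) x := by
  have hrx := hr.apply_eq_self hxN
  have adj : ContinuousAt (fun y ↦ (fderiv ℝ Φ y).adjoint) (r x) :=
    hrx.symm ▸ (hN.smoothNear hxU).adjoint_fderiv.contDiffAt.continuousAt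
  have pinv : ContinuousAt (pseudoinverse (E := E) (F := G)) (fderiv ℝ Φ (r x)).adjoint :=
    (contDiffAt_pseudoinverse (injective_adjoint_of_surjective
      (hN.surjective_fderiv _ (hrx.symm ▸ hxU)))).continuousAt
  exact (pinv.comp (f := fun y ↦ (fderiv ℝ Φ (r y)).adjoint)
    (adj.comp (f := r) (hr.continuousAt hxN))).clm_apply (continuousAt_id.sub (hr.continuousAt hxN))

/- Near `x`, the map `y ↦ (r y, conormal Φ r y)` coincides with the smooth local inverse of
`normalMap Φ`, because by continuity at `x` it stays in a domain of injectivity. -/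
theorem smoothNear_prodMk_conormal (hr : IsNearestPointMap r N) (hN : IsRegularLevelSet Φ U N)
    (hxU : x ∈ U) (hxN : x ∈ N) : SmoothNear (fun y ↦ (r y, conormal Φ r y)) x := by
  obtain ⟨O, V, g, hO, hV, hxO, hg⟩ := hN.isLocalDiffeoWithinAt_normalMap hxU hxN
  have hrO : ∀ᶠ y in 𝓝 x, (r y, conormal Φ r y) ∈ O :=
    (hr.continuousAt hxN).prodMk (hr.continuousAt_conormal hN hxU hxN) <|
      hO.mem_nhds (by simpa only [hr.prodMk_conormal_apply_self hxN] using hxO)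
  have hrU : ∀ᶠ y in 𝓝 x, r y ∈ U :=
    (hr.continuousAt hxN) (hN.isOpen.mem_nhds ((hr.apply_eq_self hxN).symm ▸ hxU))
  have hxV : x ∈ univ ∩ V := by
    simpa [normalMap] using hg.mapsTo (x := (x, 0)) ⟨⟨hxN, trivial⟩, hxO⟩
  obtain ⟨k, hk, hgk⟩ := smoothOnSet_iff.1 hg.smoothOnSet_symm x hxV
  rw [nhdsWithin_eq_nhds.2 ((isOpen_univ.inter hV).mem_nhds hxV)] at hgk
  refine hk.congr_of_eventuallyEq ?_
  filter_upwards [hgk, hrU, hrO] with y hgky hyU hyO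
  have := hg.invOn.1 ⟨⟨hr.mem y, trivial⟩, hyO⟩
  rw [← hgky, ← this, hr.normalMap_conormal hN hyU]

theorem smoothNear (hr : IsNearestPointMap r N) (hN : IsRegularLevelSet Φ U N) (hxU : x ∈ U)
    (hxN : x ∈ N) : SmoothNear r x :=
  (hr.smoothNear_prodMk_conormal hN hxU hxN).mono fun _ hy ↦ hy.fst

theorem hasFDerivAt [(SubTangent N x).HasOrthogonalProjection] (hr : IsNearestPointMap r N)
    (hN : IsRegularLevelSet Φ U N) (hxU : x ∈ U) (hxN : x ∈ N) :
    HasFDerivAt r (SubTangent N x).starProjection x := by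
  have hrx := hr.apply_eq_self hxN
  have hrU : ∀ᶠ y in 𝓝 x, r y ∈ U :=
    (hr.continuousAt hxN) (hN.isOpen.mem_nhds (hrx.symm ▸ hxU))
  have hs := (hr.smoothNear_prodMk_conormal hN hxU hxN).differentiableAt
  have hr' : HasFDerivAt r (fderiv ℝ r x) x := hs.fst.hasFDerivAt
  have hc' : HasFDerivAt (conormal Φ r) (fderiv ℝ (conormal Φ r) x) x := hs.snd.hasFDerivAt
  refine hr'.congr_fderiv (ContinuousLinearMap.ext fun v ↦ ?_)
  have tangent : fderiv ℝ Φ x (fderiv ℝ r x v) = 0 := by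
    have hΦr : HasFDerivAt (Φ ∘ r) (fderiv ℝ Φ x ∘L fderiv ℝ r x) x :=
      HasFDerivAt.comp x (hrx.symm ▸ (hN.smoothNear hxU).differentiableAt.hasFDerivAt) hr'
    have : Φ ∘ r =ᶠ[𝓝 x] fun _ ↦ 0 := hrU.mono fun y hy ↦ (hN.mem_iff _ hy).1 (hr.mem y)
    exact DFunLike.congr_fun
      (hΦr.unique ((hasFDerivAt_const (0 : G) x).congr_of_eventuallyEq this)) v
  have normal : fderiv ℝ r x v + (fderiv ℝ Φ x).adjoint (fderiv ℝ (conormal Φ r) x v) = v := by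
    have hF := hasFDerivAt_normalMap (hN.smoothNear hxU)
    rw [← hr.prodMk_conormal_apply_self hxN (Φ := Φ)] at hF
    have : normalMap Φ ∘ (fun y ↦ (r y, conormal Φ r y)) =ᶠ[𝓝 x] id :=
      hrU.mono fun y hy ↦ hr.normalMap_conormal hN hy
    exact DFunLike.congr_fun
      ((hF.comp x (hr'.prodMk hc')).unique ((hasFDerivAt_id x).congr_of_eventuallyEq this)) v
  refine (Submodule.eq_starProjection_of_mem_orthogonal'
    ((hN.mem_subTangent_iff hxU hxN).2 tangent)
    ((Submodule.mem_orthogonal' _ _).2 fun w hw ↦ ?_) normal.symm).symm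
  rw [ContinuousLinearMap.adjoint_inner_left, (hN.mem_subTangent_iff hxU hxN).1 hw,
    inner_zero_right]

end IsNearestPointMap

end NearestPoint

section TubularCoordinates

variable {ι : Type*} [Fintype ι]

/-- The linear map `v ↦ ∑ vᵢ νᵢ` sending the standard basis to the vectors `ν`. -/
def frameMap (ν : ι → E) : EuclideanSpace ℝ ι →L[ℝ] E :=
  ∑ i, (EuclideanSpace.proj i : EuclideanSpace ℝ ι →L[ℝ] ℝ).smulRight (ν i)

theorem frameMap_apply (ν : ι → E) (v : EuclideanSpace ℝ ι) : frameMap ν v = ∑ i, v i • ν i := by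
  simp [frameMap]

theorem frameMap_single [DecidableEq ι] (ν : ι → E) (i : ι) :
    frameMap ν (EuclideanSpace.single i 1) = ν i := by
  simp [frameMap_apply, PiLp.single_apply, ite_smul]

theorem injective_frameMap {ν : ι → E} (hν : LinearIndependent ℝ ν) : Injective (frameMap ν) := by
  refine (injective_iff_map_eq_zero _).2 fun v hv ↦ PiLp.ext fun i ↦ ?_
  exact Fintype.linearIndependent_iff.1 hν v (by rwa [← frameMap_apply]) i

theorem range_frameMap (ν : ι → E) : (frameMap ν).range = Submodule.span ℝ (range ν) := by
  ext e
  simp only [LinearMap.mem_range, ContinuousLinearMap.coe_coe,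
    Submodule.mem_span_range_iff_exists_fun, frameMap_apply]
  exact (WithLp.equiv 2 (ι → ℝ)).exists_congr fun v ↦ Iff.rfl

theorem contDiff_frameMap {n : WithTop ℕ∞} : ContDiff ℝ n (frameMap : (ι → E) → _) := by
  unfold frameMap
  fun_prop

section OrthogonalDecomposition

variable [CompleteSpace E] {F : Type*} [NormedAddCommGroup F] [InnerProductSpace ℝ F]
  [FiniteDimensional ℝ F] {T : Submodule ℝ E} [T.HasOrthogonalProjection] {B : F →L[ℝ] E}

theorem starProjection_prod_pseudoinverse_apply_add (hB : Injective B) (hBT : ∀ v, B v ∈ Tᗮ) {w : E}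
    (hw : w ∈ T) (v : F) : T.starProjection.prod (pseudoinverse B) (w + B v) = (w, v) := by
  have hw' : pseudoinverse B w = 0 :=
    pseudoinverse_apply_eq_zero fun v ↦ T.inner_left_of_mem_orthogonal hw (hBT v)
  simp [hw', pseudoinverse_apply_apply hB, T.starProjection_eq_self_iff.2 hw,
    T.starProjection_apply_eq_zero_iff.2 (hBT v)]

theorem bijOn_starProjection_prod_pseudoinverse (hB : Injective B) (hBT : ∀ v, B v ∈ Tᗮ) :
    BijOn (T.starProjection.prod (pseudoinverse B)) (T ⊔ B.range : Submodule ℝ E)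
      {q | q.1 ∈ T} := by
  have apply_add {w : E} (hw : w ∈ T) (v : F) :=
    starProjection_prod_pseudoinverse_apply_add hB hBT hw v
  refine InvOn.bijOn (f' := fun q ↦ q.1 + B q.2) ⟨fun e he ↦ ?_, fun q hq ↦ apply_add hq q.2⟩
    (fun e he ↦ ?_) fun q hq ↦ Submodule.add_mem_sup hq ⟨q.2, rfl⟩
  all_goals obtain ⟨w, hw, _, ⟨v, rfl⟩, rfl⟩ := Submodule.mem_sup.1 he
  · exact congrArg (fun q ↦ q.1 + B q.2) (apply_add hw v)
  · exact mem_of_eq_of_mem (apply_add hw v) hw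

end OrthogonalDecomposition

variable {p : ℕ} {M N : Set E} {ν : Fin p → E → E} {r : E → E} {x : E}

theorem IsFraming.frameMap_mem_orthogonal (hν : IsFraming M N p ν) (hx : x ∈ N)
    (v : EuclideanSpace ℝ (Fin p)) : frameMap (fun i ↦ ν i x) v ∈ (SubTangent N x)ᗮ := by
  rw [frameMap_apply]
  exact Submodule.sum_smul_mem _ _ fun i _ ↦ (Submodule.mem_orthogonal' _ _).2 (hν.orth i x hx)

variable [CompleteSpace E]

/-- The nearest point to `y` on `N` and the coordinates of `y - r y` in the normal frame there. -/
def tubularCoordinates (ν : Fin p → E → E) (r : E → E) (y : E) : E × EuclideanSpace ℝ (Fin p) :=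
  (r y, pseudoinverse (frameMap fun i ↦ ν i (r y)) (y - r y))

theorem IsNearestPointMap.tubularCoordinates_apply_self (hr : IsNearestPointMap r N) (hx : x ∈ N) :
    tubularCoordinates ν r x = (x, 0) := by
  rw [tubularCoordinates, hr.apply_eq_self hx, sub_self, map_zero]

namespace IsFraming

theorem smoothNear_pseudoinverse_frameMap (hν : IsFraming M N p ν) (hr : IsNearestPointMap r N)
    (hrx : SmoothNear r x) :
    SmoothNear (fun y ↦ pseudoinverse (frameMap fun i ↦ ν i (r y))) x := by
  have hν_ext : ∀ i, ∃ k, SmoothNear k x ∧ (fun y ↦ ν i (r y)) =ᶠ[𝓝 x] k := fun i ↦ by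
    have := (hν.smooth i).comp (.of_smoothNear (S := {y | SmoothNear r y}) fun _ hy ↦ hy)
      fun y _ ↦ hr.mem y
    obtain ⟨k, hk, hνk⟩ := smoothOnSet_iff.1 this x hrx
    have hmem : {y | SmoothNear r y} ∈ 𝓝 x := hrx.eventually_nhds
    exact ⟨k, hk, by rwa [nhdsWithin_eq_nhds.2 hmem] at hνk⟩
  choose k hk hνk using hν_ext
  have hframe : SmoothNear (fun y ↦ frameMap fun i ↦ ν i (r y)) x := by
    filter_upwards [Filter.eventually_all.2 hk,
      Filter.eventually_all.2 fun i ↦ (hνk i).eventuallyEq_nhds] with y hky hνy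
    exact (contDiff_frameMap (ι := Fin p) (E := E)).contDiffAt.comp y
      (contDiffAt_pi.2 fun i ↦ (hky i).congr_of_eventuallyEq (hνy i))
  filter_upwards [hframe] with y hy
  exact (contDiffAt_pseudoinverse (injective_frameMap (hν.indep _ (hr.mem y)))).comp y hy

theorem smoothNear_tubularCoordinates (hν : IsFraming M N p ν) (hr : IsNearestPointMap r N)
    (hrx : SmoothNear r x) : SmoothNear (tubularCoordinates ν r) x := by
  filter_upwards [hrx, hν.smoothNear_pseudoinverse_frameMap hr hrx] with y hry hy
  exact hry.prodMk (hy.clm_apply (contDiffAt_id.sub hry))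

variable [(SubTangent N x).HasOrthogonalProjection]

theorem hasFDerivAt_tubularCoordinates (hν : IsFraming M N p ν) (hr : IsNearestPointMap r N)
    (hx : x ∈ N) (hrx : SmoothNear r x) (hr' : HasFDerivAt r (SubTangent N x).starProjection x) :
    HasFDerivAt (tubularCoordinates ν r)
      ((SubTangent N x).starProjection.prod (pseudoinverse (frameMap fun i ↦ ν i x))) x := by
  have hsnd := (hν.smoothNear_pseudoinverse_frameMap hr hrx).differentiableAt.hasFDerivAt.clm_apply
    ((hasFDerivAt_id x).sub hr')
  refine (hr'.prodMk hsnd).congr_fderiv (ContinuousLinearMap.ext fun v ↦ Prod.ext rfl ?_)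
  have : pseudoinverse (frameMap fun i ↦ ν i x) ((SubTangent N x).starProjection v) = 0 :=
    pseudoinverse_apply_eq_zero fun u ↦ (SubTangent N x).inner_left_of_mem_orthogonal
      (Submodule.starProjection_apply_mem _ v) (hν.frameMap_mem_orthogonal hx u)
  simp [hr.apply_eq_self hx, this]

theorem bijOn_starProjection_prod_pseudoinverse_frameMap (hν : IsFraming M N p ν) (hx : x ∈ N) :
    BijOn ((SubTangent N x).starProjection.prod (pseudoinverse (frameMap fun i ↦ ν i x)))
      (SubTangent M x) {q | q.1 ∈ SubTangent N x} := by
  rw [← hν.spans x hx, ← range_frameMap]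
  exact bijOn_starProjection_prod_pseudoinverse (injective_frameMap (hν.indep x hx))
    (hν.frameMap_mem_orthogonal hx)

theorem starProjection_prod_pseudoinverse_frameMap_apply (hν : IsFraming M N p ν) (hx : x ∈ N)
    (i : Fin p) :
    (SubTangent N x).starProjection.prod (pseudoinverse (frameMap fun i ↦ ν i x)) (ν i x) =
      (0, EuclideanSpace.single i 1) := by
  simpa [frameMap_single] using starProjection_prod_pseudoinverse_apply_add
    (injective_frameMap (hν.indep x hx)) (hν.frameMap_mem_orthogonal hx) (Submodule.zero_mem _)
    (EuclideanSpace.single i 1)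

end IsFraming

theorem IsFraming.isLocalDiffeoWithinAt_tubularCoordinates [FiniteDimensional ℝ E] {m n : ℕ}
    (hν : IsFraming M N p ν) (hM : IsSubmanifold M m) (hN : IsSubmanifold N n) (hNM : N ⊆ M)
    (hr : IsNearestPointMap r N) (hx : x ∈ N) :
    IsLocalDiffeoWithinAt (tubularCoordinates ν r) M
      (N ×ˢ (univ : Set (EuclideanSpace ℝ (Fin p)))) x := by
  obtain ⟨U, Ψ, hxU, hΨ⟩ := hM.exists_isRegularLevelSet (hNM hx)
  obtain ⟨V, Φ, hxV, hΦ⟩ := hN.exists_isRegularLevelSet hx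
  have hrx := hr.smoothNear hΦ hxV hx
  refine isLocalDiffeoWithinAt_of_bijOn_subTangent hΨ hΦ.prod_univ hxU (hNM hx)
    ⟨by rwa [hr.tubularCoordinates_apply_self hx], trivial⟩
    (hν.smoothNear_tubularCoordinates hr hrx)
    (hν.hasFDerivAt_tubularCoordinates hr hx hrx (hr.hasFDerivAt hΦ hxV hx))
    (.of_forall fun y _ ↦ ⟨hr.mem y, trivial⟩) ?_
  convert hν.bijOn_starProjection_prod_pseudoinverse_frameMap hx using 1
  rw [hr.tubularCoordinates_apply_self hx]
  ext q
  exact hΦ.mem_subTangent_prod_univ_iff hxV hx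

end TubularCoordinates

section Shrinking

variable {P : Type*} [NormedAddCommGroup P] [InnerProductSpace ℝ P]

open OpenPartialHomeomorph in
theorem isDiffeoOn_univBall (c : P) {ε : ℝ} (hε : 0 < ε) :
    IsDiffeoOn (univBall c ε) (univBall c ε).symm univ (ball c ε) where
  smoothOnSet := .of_contDiff contDiff_univBall univ
  smoothOnSet_symm := .of_smoothNear fun _ ↦ .of_contDiffOn contDiffOn_univBall_symm isOpen_ball
  mapsTo _ _ := univBall_target c hε ▸ (univBall c ε).map_source (by simp)
  mapsTo_symm := mapsTo_univ _ _
  invOn := ⟨fun _ _ ↦ (univBall c ε).left_inv (by simp),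
    fun _ hv ↦ (univBall c ε).right_inv (univBall_target c hε ▸ hv)⟩

open OpenPartialHomeomorph in
theorem hasFDerivAt_univUnitBall_zero : HasFDerivAt (univUnitBall : P → P) (.id ℝ P) 0 := by
  have hc : DifferentiableAt ℝ (fun v : P ↦ (√(1 + ‖v‖ ^ 2))⁻¹) 0 := by
    have : DifferentiableAt ℝ (fun v : P ↦ 1 + ‖v‖ ^ 2) 0 :=
      (contDiff_norm_sq ℝ (n := 1)).contDiffAt.differentiableAt one_ne_zero |>.const_add 1
    exact (this.sqrt (by simp)).inv (by simp)
  refine (hc.hasFDerivAt.smul (hasFDerivAt_id 0)).congr_fderiv ?_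
  ext v
  simp

open OpenPartialHomeomorph in
theorem hasFDerivAt_univBall_zero (c : P) {ε : ℝ} (hε : 0 < ε) :
    HasFDerivAt (univBall c ε) (ε • .id ℝ P) 0 := by
  rw [univBall, dif_pos hε]
  exact (hasFDerivAt_univUnitBall_zero.const_smul ε).add_const c

theorem isDiffeoOn_smul {c : ℝ} (hc : c ≠ 0) :
    IsDiffeoOn (fun v : P ↦ c • v) (fun v ↦ c⁻¹ • v) univ univ where
  smoothOnSet := .of_contDiff (contDiff_const_smul c) univ
  smoothOnSet_symm := .of_contDiff (contDiff_const_smul c⁻¹) univ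
  mapsTo := mapsTo_univ _ _
  mapsTo_symm := mapsTo_univ _ _
  invOn := ⟨fun v _ ↦ inv_smul_smul₀ hc v, fun v _ ↦ smul_inv_smul₀ hc v⟩

open OpenPartialHomeomorph in
theorem exists_isDiffeoOn_univ_ball {ε : ℝ} (hε : 0 < ε) : ∃ φ ψ : P → P,
    φ 0 = 0 ∧ HasFDerivAt φ (.id ℝ P) 0 ∧ IsDiffeoOn φ ψ univ (ball 0 ε) := by
  refine ⟨fun v ↦ univBall 0 ε (ε⁻¹ • v), _, by simp, ?_,
    (isDiffeoOn_smul (inv_ne_zero hε.ne')).trans (isDiffeoOn_univBall 0 hε)⟩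
  have hscale : HasFDerivAt (fun v : P ↦ ε⁻¹ • v) (ε⁻¹ • .id ℝ P) 0 :=
    (hasFDerivAt_id 0).const_smul ε⁻¹
  have hball : HasFDerivAt (univBall (0 : P) ε) (ε • .id ℝ P) (ε⁻¹ • 0) := by
    simpa using hasFDerivAt_univBall_zero 0 hε
  refine (hball.comp 0 hscale).congr_fderiv ?_
  ext v
  simp [hε.ne']

theorem IsDiffeoOn.exists_isDiffeoOn_prod_univ {X Y : Type*} [NormedAddCommGroup X]
    [NormedSpace ℝ X] [NormedAddCommGroup Y] [NormedSpace ℝ Y] {g : X × P → Y} {h : Y → X × P}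
    {K : Set X} {V : Set (X × P)} {T : Set Y} (hg : IsDiffeoOn g h (K ×ˢ univ ∩ V) T)
    (hK : IsCompact K) (hV : IsOpen V) (hKV : K ×ˢ {0} ⊆ V) :
    ∃ O φ ψ, IsOpen O ∧ φ 0 = 0 ∧ HasFDerivAt φ (.id ℝ P) 0 ∧
      MapsTo (Prod.map id φ) (K ×ˢ univ) (K ×ˢ univ ∩ V) ∧
      IsDiffeoOn (g ∘ Prod.map id φ) (Prod.map id ψ ∘ h) (K ×ˢ univ) (T ∩ O) := by
  obtain ⟨A, B, -, hB, hKA, hB0, hAB⟩ := generalized_tube_lemma hK isCompact_singleton hV hKV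
  obtain ⟨ε, hε, hεB⟩ := Metric.isOpen_iff.1 hB 0 (hB0 rfl)
  obtain ⟨φ, ψ, hφ0, hφ', hφ⟩ := exists_isDiffeoOn_univ_ball (P := P) hε
  obtain ⟨O, hO, hgO⟩ := hg.exists_restrict (isOpen_univ.prod (isOpen_ball (x := (0 : P)) (ε := ε)))
  have hset : K ×ˢ univ ∩ V ∩ univ ×ˢ ball 0 ε = K ×ˢ ball 0 ε := by
    ext q
    exact ⟨fun hq ↦ ⟨hq.1.1.1, hq.2.2⟩,
      fun hq ↦ ⟨⟨⟨hq.1, trivial⟩, hAB ⟨hKA hq.1, hεB hq.2⟩⟩, trivial, hq.2⟩⟩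
  have hKφ := (IsDiffeoOn.refl K).prodMap hφ
  exact ⟨O, φ, ψ, hO, hφ0, hφ', hKφ.mapsTo.mono_right (hset ▸ inter_subset_left),
    hKφ.trans (hset ▸ hgO)⟩

end Shrinking

section Frames

theorem SmoothOnSet.differentiableAt_comp {X Y Z : Type*} [NormedAddCommGroup X] [NormedSpace ℝ X]
    [NormedAddCommGroup Y] [NormedSpace ℝ Y] [NormedAddCommGroup Z] [NormedSpace ℝ Z] {f : Y → Z}
    {γ : X → Y} {S : Set Y} {t : X} (hf : SmoothOnSet f S) (hγ : DifferentiableAt ℝ γ t)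
    (hS : ∀ᶠ s in 𝓝 t, γ s ∈ S) : DifferentiableAt ℝ (f ∘ γ) t := by
  obtain ⟨k, hk, hfk⟩ := smoothOnSet_iff.1 hf (γ t) hS.self_of_nhds
  exact (hk.differentiableAt.comp t hγ).congr_of_eventuallyEq
    ((tendsto_nhdsWithin_iff.2 ⟨hγ.continuousAt, hS⟩).eventually hfk)

theorem hasDerivAt_of_hasDerivAt_comp {X Y : Type*} [NormedAddCommGroup X] [NormedSpace ℝ X]
    [NormedAddCommGroup Y] [NormedSpace ℝ Y] {f : X → Y} {f' : X →L[ℝ] Y} {M : Set X} {γ : ℝ → X}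
    {v : X} (hf : HasFDerivAt f f' (γ 0)) (hinj : InjOn f' (SubTangent M (γ 0)))
    (hγ : DifferentiableAt ℝ γ 0) (hγM : ∀ᶠ t in 𝓝 0, γ t ∈ M) (hv : v ∈ SubTangent M (γ 0))
    (hfγ : HasDerivAt (f ∘ γ) (f' v) 0) : HasDerivAt γ v 0 := by
  have hγ' := hγ.hasDerivAt
  have := hinj (mem_subTangent_of_eventually_mem hγ' hγM) hv
    ((hf.comp_hasDerivAt (0 : ℝ) hγ').unique hfγ)
  exact this ▸ hγ'

end Frames

theorem IsSubmanifold.finiteDimensional_of_isCompact {X : Type*} [NormedAddCommGroup X]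
    [NormedSpace ℝ X] {S : Set X} {n : ℕ} (hS : IsSubmanifold S n) (hc : IsCompact S)
    (hne : S.Nonempty) : FiniteDimensional ℝ X := by
  by_contra hX
  obtain ⟨x, hx⟩ := hne
  obtain ⟨U, Φ, hxU, hΦ⟩ := hS.exists_isRegularLevelSet hx
  have : IsEmpty (Fin (Module.finrank ℝ X - n)) := by
    rw [Module.finrank_of_not_finite hX, Nat.zero_sub]
    infer_instance
  have hUS : U ⊆ S := fun y hy ↦ (hΦ.mem_iff y hy).2 (Subsingleton.elim _ _)
  obtain ⟨ε, hε, hεU⟩ := nhds_basis_closedBall.mem_iff.1 (hΦ.isOpen.mem_nhds hxU)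
  exact hX (FiniteDimensional.of_isCompact_closedBall ℝ hε
    (hc.of_isClosed_subset isClosed_closedBall (hεU.trans hUS)))

namespace IsFraming

variable [FiniteDimensional ℝ E] {m n p : ℕ} {M N : Set E} {ν : Fin p → E → E} {r : E → E}

theorem exists_isDiffeoOn_forall_tubularCoordinates_eq (hν : IsFraming M N p ν)
    (hM : IsSubmanifold M m) (hN : IsSubmanifold N n) (hNc : IsCompact N) (hNM : N ⊆ M)
    (hr : IsNearestPointMap r N) :
    ∃ O g h φ, IsOpen O ∧ IsDiffeoOn g h (N ×ˢ univ) (M ∩ O) ∧ (∀ x ∈ N, g (x, 0) = x) ∧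
      HasFDerivAt φ (.id ℝ (EuclideanSpace ℝ (Fin p))) 0 ∧
      ∀ x ∈ N, ∀ v, tubularCoordinates ν r (g (x, v)) = (x, φ v) := by
  have zero_section : ∀ x ∈ N, tubularCoordinates ν r x = (x, 0) := fun x ↦
    hr.tubularCoordinates_apply_self
  obtain ⟨U, V, g, hU, hV, hNU, hg⟩ := exists_isDiffeoOn_inter_of_isCompact hNc hNM
    (fun x hx y hy hxy ↦ by simpa [zero_section, hx, hy] using hxy) fun x hx ↦
      hν.isLocalDiffeoWithinAt_tubularCoordinates hM hN hNM hr hx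
  have hNV : N ×ˢ {0} ⊆ V := by
    rintro ⟨x, _⟩ ⟨hx, rfl⟩
    exact zero_section x hx ▸ (hg.mapsTo ⟨hNM hx, hNU hx⟩).2
  obtain ⟨O, φ, ψ, hO, hφ0, hφ', hφV, hgφ⟩ := hg.symm.exists_isDiffeoOn_prod_univ hNc hV hNV
  rw [inter_assoc] at hgφ
  refine ⟨U ∩ O, _, _, φ, hU.inter hO, hgφ, fun x hx ↦ ?_, hφ', fun x hx v ↦ ?_⟩
  · change g (x, φ 0) = x
    rw [hφ0, ← zero_section x hx, hg.invOn.1 ⟨hNM hx, hNU hx⟩]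
  · exact hg.invOn.2 (hφV (x := (x, v)) ⟨hx, trivial⟩)

theorem hasDerivAt_of_hasDerivAt_tubularCoordinates_comp (hν : IsFraming M N p ν)
    (hN : IsSubmanifold N n) (hr : IsNearestPointMap r N) {γ : ℝ → E} (hγN : γ 0 ∈ N)
    (hγM : ∀ᶠ t in 𝓝 0, γ t ∈ M) (hγ : DifferentiableAt ℝ γ 0) {i : Fin p}
    (hγ' : HasDerivAt (tubularCoordinates ν r ∘ γ) (0, EuclideanSpace.single i 1) 0) :
    HasDerivAt γ (ν i (γ 0)) 0 := by
  obtain ⟨U, Φ, hU, hΦ⟩ := hN.exists_isRegularLevelSet hγN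
  have hf := hν.hasFDerivAt_tubularCoordinates hr hγN (hr.smoothNear hΦ hU hγN)
    (hr.hasFDerivAt hΦ hU hγN)
  have hbij := hν.bijOn_starProjection_prod_pseudoinverse_frameMap hγN
  refine hasDerivAt_of_hasDerivAt_comp hf hbij.injOn hγ hγM (hν.mem_tangent i _ hγN) ?_
  rwa [hν.starProjection_prod_pseudoinverse_frameMap_apply hγN]

theorem hasDerivAt_of_tubularCoordinates_eq (hν : IsFraming M N p ν) (hN : IsSubmanifold N n)
    (hr : IsNearestPointMap r N) {g : E × EuclideanSpace ℝ (Fin p) → E}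
    {φ : EuclideanSpace ℝ (Fin p) → EuclideanSpace ℝ (Fin p)} (hg : SmoothOnSet g (N ×ˢ univ))
    (hgM : MapsTo g (N ×ˢ univ) M) (hφ : HasFDerivAt φ (.id ℝ _) 0) {x : E} (hx : x ∈ N)
    (hgx : g (x, 0) = x) (hgφ : ∀ v, tubularCoordinates ν r (g (x, v)) = (x, φ v)) (i : Fin p) :
    HasDerivAt (fun s : ℝ ↦ g (x, s • EuclideanSpace.single i 1)) (ν i x) 0 := by
  set e : EuclideanSpace ℝ (Fin p) := EuclideanSpace.single i 1
  have hline : HasDerivAt (fun s : ℝ ↦ s • e) e 0 := by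
    simpa using (hasDerivAt_id (0 : ℝ)).smul_const e
  have hg0 : g (x, (0 : ℝ) • e) = x := by rw [zero_smul, hgx]
  have hmem (s : ℝ) : (x, s • e) ∈ N ×ˢ univ := ⟨hx, trivial⟩
  have hdiff : DifferentiableAt ℝ (g ∘ fun s : ℝ ↦ (x, s • e)) 0 :=
    hg.differentiableAt_comp ((hasDerivAt_const 0 x).prodMk hline).differentiableAt
      (.of_forall hmem)
  have := hν.hasDerivAt_of_hasDerivAt_tubularCoordinates_comp hN hr (γ := fun s ↦ g (x, s • e))
    (i := i) (by rwa [hg0]) (.of_forall fun s ↦ hgM (hmem s)) hdiff ?_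
  · rwa [hg0] at this
  · simp only [Function.comp_def, hgφ]
    rw [← zero_smul ℝ e] at hφ
    have hφe := hφ.comp_hasDerivAt (0 : ℝ) hline
    exact (hasDerivAt_const 0 x).prodMk hφe

end IsFraming

/-- **Product neighborhood theorem.**  A compact framed submanifold `(N, ν)` of
codimension `p` of a boundaryless smooth manifold `M` has a neighborhood in `M`
diffeomorphic to `N × ℝ^p`, by a diffeomorphism sending `x ↦ (x, 0)` and matching the
frame `ν(x)` with the standard basis of `ℝ^p`. -/
theorem product_neighborhood (m p : ℕ) (M : Set E) (hM : IsSubmanifold M m)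
    (N : Set E) (ν : Fin p → E → E) (hN : IsFramedSubmanifold M m N p ν) :
    ∃ O : Set E, IsOpen O ∧ N ⊆ M ∩ O ∧
      ∃ g : E × EuclideanSpace ℝ (Fin p) → E,
        SmoothOnSet g (N ×ˢ (univ : Set (EuclideanSpace ℝ (Fin p)))) ∧
        Set.InjOn g (N ×ˢ (univ : Set (EuclideanSpace ℝ (Fin p)))) ∧
        g '' (N ×ˢ (univ : Set (EuclideanSpace ℝ (Fin p)))) = M ∩ O ∧
        (∀ x ∈ N, g (x, 0) = x) ∧
        (∀ x ∈ N, ∀ i : Fin p,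
          HasDerivAt (fun s : ℝ => g (x, s • EuclideanSpace.single i 1)) (ν i x) 0) ∧
        ∃ h : E → E × EuclideanSpace ℝ (Fin p),
          SmoothOnSet h (M ∩ O) ∧
          (∀ q ∈ N ×ˢ (univ : Set (EuclideanSpace ℝ (Fin p))), h (g q) = q) ∧
          (∀ v ∈ M ∩ O, g (h v) = v) := by
  obtain rfl | hne := N.eq_empty_or_nonempty
  · exact ⟨∅, isOpen_empty, by simp, 0, by simp [SmoothOnSet]⟩
  have := hN.submanifold.finiteDimensional_of_isCompact hN.compact hne
  obtain ⟨r, hr⟩ := exists_isNearestPointMap hN.compact hne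
  obtain ⟨O, g, h, φ, hO, hgh, hg0, hφ, hgφ⟩ :=
    hN.framing.exists_isDiffeoOn_forall_tubularCoordinates_eq hM hN.submanifold hN.compact
      hN.subset hr
  have frame : ∀ x ∈ N, ∀ i,
      HasDerivAt (fun s : ℝ ↦ g (x, s • EuclideanSpace.single i 1)) (ν i x) 0 := fun x hx ↦
    hN.framing.hasDerivAt_of_tubularCoordinates_eq hN.submanifold hr hgh.smoothOnSet
      (hgh.mapsTo.mono_right inter_subset_left) hφ hx (hg0 x hx) (hgφ x hx)
  have hNO : N ⊆ M ∩ O := fun x hx ↦ hg0 x hx ▸ hgh.mapsTo (x := (x, 0)) ⟨hx, trivial⟩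
  have image := (hgh.invOn.bijOn hgh.mapsTo hgh.mapsTo_symm).image_eq
  exact ⟨O, hO, hNO, g, hgh.smoothOnSet, hgh.invOn.1.injOn, image, hg0, frame, h,
    hgh.smoothOnSet_symm, hgh.invOn⟩

end Paper
end
end
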